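/- arXiv:1204.4694 — 2 statements merged into one kernel-verified Lean document; each statement's English description precedes it below -/
import Mathlib

section
/- Fix a Hamiltonian H as in the context. For each n ≥ 1 let S_n ≤ 0 and τ_n ∈ [0,1) be real numbers and let z_n : [S_n,∞)×ℝ → D be a C^∞ map satisfying: z_n(s,t+n) = z_n(s,t); the Floer equation ∂_s z_n + i·(∂_t z_n − X_H(t+τ_n, z_n)) = 0; and |z_n(S_n,t)| = 1 for all t. Assume the Floer energies E_n := (1/2)·∫_{S_n}^∞ ∫_0^n |∂_s z_n|² + |∂_t z_n − X_H(t+τ_n, z_n)|² dt ds converge to 0 as n → ∞. Then there exist a subsequence n_j, a value S ∈ [−∞,0], a constant τ₀ ∈ [0,1], and a C^∞ curve γ : ℝ → D solving γ'(t) = X_H(t+τ₀, γ(t)) for all t ∈ ℝ, such that S_{n_j} → S, τ_{n_j} → τ₀, and the maps z_{n_j}, together with all their partial derivatives, converge uniformly on every compact subset of the interior of Σ to the map (s,t) ↦ γ(t) and its corresponding derivatives, where Σ = [S,∞)×ℝ if S is finite and Σ = ℝ² if S = −∞. -/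
open Complex Set MeasureTheory ENNReal Filter

def Disk : Set ℂ := Metric.closedBall 0 1

/-- The Hamiltonian vector field `X_H(t,z) = (−∂_y H, ∂_x H)`, written in complex
notation as `i · (∂_x H + i ∂_y H)`. -/
noncomputable def XH (H : ℝ → ℂ → ℝ) (t : ℝ) (w : ℂ) : ℂ :=
  Complex.I * ((fderiv ℝ (H t) w 1 : ℝ) + (fderiv ℝ (H t) w Complex.I : ℝ) * Complex.I)

/-- Admissible Hamiltonians: smooth, 1-periodic in time, constant on the boundary circle. -/
structure IsAdmissible (H : ℝ → ℂ → ℝ) : Prop where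
  smooth : ContDiff ℝ (⊤ : ℕ∞) (fun p : ℝ × ℂ => H p.1 p.2)
  periodic : ∀ (t : ℝ) (z : ℂ), H (t + 1) z = H t z
  bdry_const : ∀ (t : ℝ), ∀ z w : ℂ, ‖z‖ = 1 → ‖w‖ = 1 → H t z = H t w

/-- The half plane `[S,∞) × ℝ`. -/
def HalfPlaneFrom (S : ℝ) : Set (ℝ × ℝ) := Set.Ici S ×ˢ Set.univ

/-- Partial derivative in the `s`-direction, taken within a set `A`. -/
noncomputable def pds {E : Type*} [NormedAddCommGroup E] [NormedSpace ℝ E]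
    (A : Set (ℝ × ℝ)) (f : ℝ × ℝ → E) (p : ℝ × ℝ) : E :=
  fderivWithin ℝ f A p (1, 0)

/-- Partial derivative in the `t`-direction, taken within a set `A`. -/
noncomputable def pdt {E : Type*} [NormedAddCommGroup E] [NormedSpace ℝ E]
    (A : Set (ℝ × ℝ)) (f : ℝ × ℝ → E) (p : ℝ × ℝ) : E :=
  fderivWithin ℝ f A p (0, 1)

/-- The Floer energy of `z : [S,∞) × ℝ → D`, periodic of period `n`. -/
noncomputable def floerEnergyFrom (H : ℝ → ℂ → ℝ) (S : ℝ) (n : ℕ) (τ₀ : ℝ)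
    (z : ℝ × ℝ → ℂ) : ℝ≥0∞ :=
  (1/2 : ℝ≥0∞) *
    ∫⁻ p in Set.Ici S ×ˢ Set.Ioc (0:ℝ) (n:ℝ),
      ENNReal.ofReal (‖pds (HalfPlaneFrom S) z p‖ ^ 2 +
        ‖pdt (HalfPlaneFrom S) z p - XH H (p.2 + τ₀) (z p)‖ ^ 2)

/-- `C^∞_loc` convergence on a set `Sig`: each iterated derivative converges uniformly
on every compact subset of `Sig` to the corresponding derivative of the limit map. -/
def CinftyLocConv (Sig : Set (ℝ × ℝ)) (S : ℕ → ℝ) (ns : ℕ → ℕ)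
    (z : ℕ → ℝ × ℝ → ℂ) (γ : ℝ → ℂ) : Prop :=
  ∀ K : Set (ℝ × ℝ), IsCompact K → K ⊆ Sig → ∀ m : ℕ,
    TendstoUniformlyOn
      (fun j p => iteratedFDerivWithin ℝ m (z (ns j)) (HalfPlaneFrom (S (ns j))) p)
      (fun p => iteratedFDeriv ℝ m (fun q : ℝ × ℝ => γ q.2) p) atTop K


open scoped Topology


section circle
variable {V : Type*} [NormedAddCommGroup V] [NormedSpace ℝ V]

/-- `a - b J`. -/
noncomputable def rotL (J : V →L[ℝ] V) (a b : ℝ) (x : V) : V := a • x - b • J x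

lemma rotL_norm (J : V →L[ℝ] V) {a b : ℝ} (ha : |a| ≤ 1) (hb : |b| ≤ 1) (x : V) :
    ‖rotL J a b x‖ ≤ (1 + ‖J‖) * ‖x‖ := by
  unfold rotL
  calc ‖a • x - b • J x‖ ≤ ‖a • x‖ + ‖b • J x‖ := norm_sub_le _ _
    _ ≤ 1 * ‖x‖ + 1 * (‖J‖ * ‖x‖) := by
      rw [norm_smul, norm_smul, Real.norm_eq_abs, Real.norm_eq_abs]
      gcongr
      exact J.le_opNorm x
    _ = _ := by ring

lemma rotL_cont (J : V →L[ℝ] V) {a b : ℝ → ℝ} {g : ℝ → V} (ha : Continuous a) (hb : Continuous b)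
    (hg : Continuous g) : Continuous fun θ => rotL J (a θ) (b θ) (g θ) :=
  (ha.smul hg).sub (hb.smul (J.continuous.comp hg))

lemma circ_mem (p : ℝ × ℝ) {r R θ : ℝ} (h0 : 0 ≤ r) (h : r ≤ R) :
    p + r • (Real.cos θ, Real.sin θ) ∈ Metric.closedBall p R := by
  rw [mem_closedBall_iff_norm, add_sub_cancel_left, norm_smul, Real.norm_eq_abs, abs_of_nonneg h0]
  have : ‖((Real.cos θ, Real.sin θ) : ℝ × ℝ)‖ ≤ 1 := by
    rw [Prod.norm_def]
    exact max_le (Real.abs_cos_le_one θ) (Real.abs_sin_le_one θ)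
  calc r * _ ≤ r * 1 := by gcongr
    _ ≤ R := by linarith

lemma circ_norm {θ : ℝ} : ‖((Real.cos θ, Real.sin θ) : ℝ × ℝ)‖ ≤ 1 := by
  rw [Prod.norm_def]
  exact max_le (Real.abs_cos_le_one θ) (Real.abs_sin_le_one θ)

variable [CompleteSpace V]

lemma circle_est (J : V →L[ℝ] V) (hJ : ∀ x, J (J x) = -x) (u : ℝ × ℝ → V) (p : ℝ × ℝ)
    {R G M : ℝ} (hR : 0 < R) (hG0 : 0 ≤ G)
    (hu : ∀ q ∈ Metric.closedBall p R, ContDiffAt ℝ 1 u q)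
    (hG : ∀ q ∈ Metric.closedBall p R, ‖(fderiv ℝ u q (1,0) + J (fderiv ℝ u q (0,1)))
      - (fderiv ℝ u p (1,0) + J (fderiv ℝ u p (0,1)))‖ ≤ G * ‖q - p‖)
    (hM : ∀ q ∈ Metric.closedBall p R, ‖u q‖ ≤ M) :
    ‖fderiv ℝ u p (1,0) - J (fderiv ℝ u p (0,1))‖ ≤ 4 * (1 + ‖J‖) * (M / R + R * G) := by
  set Q : ℝ → ℝ → ℝ × ℝ := fun r θ => p + r • (Real.cos θ, Real.sin θ) with hQ
  have hQc : ∀ r, Continuous (Q r) := fun r => by simp only [hQ]; fun_prop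
  have hQm : ∀ r θ, 0 ≤ r → r ≤ R → Q r θ ∈ Metric.closedBall p R :=
    fun r θ h0 h => circ_mem p h0 h
  have hdiff : ∀ q ∈ Metric.closedBall p R, HasFDerivAt u (fderiv ℝ u q) q := fun q hq =>
    ((hu q hq).differentiableAt (by simp)).hasFDerivAt
  have hDc : ∀ r, 0 ≤ r → r ≤ R → Continuous fun θ => fderiv ℝ u (Q r θ) := by
    intro r h0 h
    rw [continuous_iff_continuousAt]
    intro θ
    have h1 : ContinuousAt (fderiv ℝ u) (Q r θ) :=
      ((hu _ (hQm r θ h0 h)).fderiv_right (m := 0) (by simp)).continuousAt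
    exact ContinuousAt.comp (f := Q r) h1 (hQc r).continuousAt
  have huc : ∀ r, 0 ≤ r → r ≤ R → Continuous fun θ => u (Q r θ) := by
    intro r h0 h
    rw [continuous_iff_continuousAt]
    intro θ
    exact ContinuousAt.comp (f := Q r) ((hu _ (hQm r θ h0 h)).continuousAt) (hQc r).continuousAt
  -- bound for the derivative
  obtain ⟨C, hC⟩ : ∃ C, ∀ q ∈ Metric.closedBall p R, ‖fderiv ℝ u q‖ ≤ C := by
    apply (isCompact_closedBall p R).exists_bound_of_continuousOn
    intro q hq
    exact ((hu q hq).fderiv_right (m := 0) (by simp)).continuousAt.continuousWithinAt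
  set Φ : ℝ → ℝ → V := fun r θ => rotL J (Real.cos θ) (Real.sin θ) (u (Q r θ)) with hΦ
  set Φ' : ℝ → ℝ → V := fun r θ => rotL J (Real.cos θ) (Real.sin θ)
    (fderiv ℝ u (Q r θ) (Real.cos θ, Real.sin θ)) with hΦ'
  have hΦc : ∀ r, 0 ≤ r → r ≤ R → Continuous (Φ r) := by
    intro r h0 h
    exact rotL_cont J Real.continuous_cos Real.continuous_sin (huc r h0 h)
  have hΦ'c : ∀ r, 0 ≤ r → r ≤ R → Continuous (Φ' r) := by
    intro r h0 h
    have := hDc r h0 h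
    simp only [hΦ', rotL]; fun_prop
  set b : ℝ → V := fun r => ∫ θ in (0:ℝ)..(2 * Real.pi), Φ r θ with hb
  have hbd : ∀ r ∈ Ioo 0 R, HasDerivAt b (∫ θ in (0:ℝ)..(2 * Real.pi), Φ' r θ) r := by
    intro r hr
    refine (intervalIntegral.hasDerivAt_integral_of_dominated_loc_of_deriv_le (s := Ioo 0 R)
      (bound := fun _ => (1 + ‖J‖) * C)
      (isOpen_Ioo.mem_nhds hr) ?_ ?_ ?_ ?_ ?_ ?_).2
    · filter_upwards [isOpen_Ioo.mem_nhds hr] with x hx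
      exact (hΦc x hx.1.le hx.2.le).aestronglyMeasurable
    · exact (hΦc r hr.1.le hr.2.le).intervalIntegrable _ _
    · exact (hΦ'c r hr.1.le hr.2.le).aestronglyMeasurable
    · refine Eventually.of_forall fun θ _ x hx => ?_
      refine (rotL_norm J (Real.abs_cos_le_one θ) (Real.abs_sin_le_one θ) _).trans ?_
      gcongr
      refine (ContinuousLinearMap.le_opNorm _ _).trans ?_
      have := hC _ (hQm x θ hx.1.le hx.2.le)
      calc _ ≤ C * 1 := by
            gcongr
            · exact (norm_nonneg _).trans this
            · exact circ_norm
        _ = C := mul_one C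
    · exact intervalIntegrable_const
    · refine Eventually.of_forall fun θ _ x hx => ?_
      have h1 : HasDerivAt (fun x => Q x θ) (Real.cos θ, Real.sin θ) x := by
        have := ((hasDerivAt_id x).smul_const ((Real.cos θ, Real.sin θ) : ℝ × ℝ)).const_add p
        simpa [hQ] using this
      have h2 : HasDerivAt (fun x => u (Q x θ)) (fderiv ℝ u (Q x θ) (Real.cos θ, Real.sin θ)) x :=
        (hdiff _ (hQm x θ hx.1.le hx.2.le)).comp_hasDerivAt x h1
      exact (h2.const_smul (Real.cos θ)).sub ((J.hasFDerivAt.comp_hasDerivAt x h2).const_smul (Real.sin θ))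
  set f : ℝ × ℝ → V := fun q => fderiv ℝ u q (1,0) + J (fderiv ℝ u q (0,1)) with hf
  have hπ : (0:ℝ) < Real.pi := Real.pi_pos
  have hsplit : ∀ (L : ℝ × ℝ →L[ℝ] V) (x y : ℝ), L (x, y) = x • L (1,0) + y • L (0,1) := by
    intro L x y
    rw [← L.map_smul, ← L.map_smul, ← L.map_add]; simp
  -- the key identity
  have hkey : ∀ r ∈ Ioo 0 R, r • (∫ θ in (0:ℝ)..(2 * Real.pi), Φ' r θ) - b r =
      r • ∫ θ in (0:ℝ)..(2 * Real.pi), rotL J (Real.cos (2*θ)) (Real.sin (2*θ)) (f (Q r θ) - f p) := by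
    intro r hr
    set D : ℝ → V := fun θ => fderiv ℝ u (Q r θ) (-Real.sin θ, Real.cos θ) with hD
    have hcont := hDc r hr.1.le hr.2.le
    have hucont := huc r hr.1.le hr.2.le
    have hK : ∀ θ, HasDerivAt (fun θ => Real.cos θ • J (u (Q r θ)) + Real.sin θ • u (Q r θ))
        (Φ r θ + r • (Real.cos θ • J (D θ) + Real.sin θ • D θ)) θ := by
      intro θ
      have h1 : HasDerivAt (fun θ => Q r θ) (r • (-Real.sin θ, Real.cos θ)) θ := by
        exact (((Real.hasDerivAt_cos θ).prodMk (Real.hasDerivAt_sin θ)).const_smul r).const_add p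
      have h2 : HasDerivAt (fun θ => u (Q r θ)) (r • D θ) θ := by
        have := (hdiff _ (hQm r θ hr.1.le hr.2.le)).comp_hasDerivAt θ h1
        rwa [ContinuousLinearMap.map_smul] at this
      have h3 := ((Real.hasDerivAt_cos θ).smul (J.hasFDerivAt.comp_hasDerivAt θ h2)).add
        ((Real.hasDerivAt_sin θ).smul h2)
      refine h3.congr_deriv ?_
      simp only [hΦ, rotL, ContinuousLinearMap.map_smul, Function.comp_apply]
      module
    have hKint : ∫ θ in (0:ℝ)..(2 * Real.pi), (Φ r θ + r • (Real.cos θ • J (D θ) + Real.sin θ • D θ)) = 0 := by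
      rw [intervalIntegral.integral_eq_sub_of_hasDerivAt (fun θ _ => hK θ)]
      · simp [hQ]
      · apply Continuous.intervalIntegrable
        have := hΦc r hr.1.le hr.2.le
        simp only [hD]
        fun_prop
    have hzero : ∫ θ in (0:ℝ)..(2 * Real.pi), rotL J (Real.cos (2*θ)) (Real.sin (2*θ)) (f p) = 0 := by
      have hK2 : ∀ θ, HasDerivAt (fun θ => (Real.sin (2*θ)/2) • f p + (Real.cos (2*θ)/2) • J (f p))
        (rotL J (Real.cos (2*θ)) (Real.sin (2*θ)) (f p)) θ := by
        intro θ
        have h2 : HasDerivAt (fun θ : ℝ => 2 * θ) 2 θ := by simpa using (hasDerivAt_id θ).const_mul (2:ℝ)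
        have := ((h2.sin.div_const 2).smul_const (f p)).add ((h2.cos.div_const 2).smul_const (J (f p)))
        refine this.congr_deriv ?_
        simp only [rotL]
        module
      rw [intervalIntegral.integral_eq_sub_of_hasDerivAt (fun θ _ => hK2 θ)]
      · have h4 : Real.cos (2 * (2 * Real.pi)) = 1 := by
          rw [Real.cos_two_mul]; simp; norm_num
        have h5 : Real.sin (2 * (2 * Real.pi)) = 0 := by
          rw [Real.sin_two_mul]; simp
        simp [h4, h5]
      · apply Continuous.intervalIntegrable
        simp only [rotL]
        fun_prop
    have hi1 : IntervalIntegrable (Φ' r) volume 0 (2 * Real.pi) :=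
      (hΦ'c r hr.1.le hr.2.le).intervalIntegrable _ _
    have hi2 : IntervalIntegrable (Φ r) volume 0 (2 * Real.pi) :=
      (hΦc r hr.1.le hr.2.le).intervalIntegrable _ _
    have hpt : ∀ θ, r • Φ' r θ - Φ r θ = r • (rotL J (Real.cos (2*θ)) (Real.sin (2*θ)) (f (Q r θ) - f p))
        + r • (rotL J (Real.cos (2*θ)) (Real.sin (2*θ)) (f p))
        - (Φ r θ + r • (Real.cos θ • J (D θ) + Real.sin θ • D θ)) := by
      intro θ
      simp only [hΦ', hD, rotL, hf, hsplit _ (Real.cos θ), hsplit _ (-Real.sin θ), map_add, map_sub,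
        map_smul, hJ, Real.cos_two_mul', Real.sin_two_mul]
      set a := fderiv ℝ u (Q r θ) (1,0)
      set c := fderiv ℝ u (Q r θ) (0,1)
      have hcs := Real.sin_sq_add_cos_sq θ
      set S := Real.sin θ
      set T := Real.cos θ
      have hA : T ^ 2 = 1 - S ^ 2 := by linarith
      have hA' : T * T = 1 - S ^ 2 := by nlinarith
      simp only [smul_add, smul_sub, smul_smul, smul_neg, neg_smul, sub_smul, mul_assoc, hA, hA', mul_sub]
      module
    have hfc : Continuous fun θ => f (Q r θ) := by simp only [hf]; fun_prop
    calc r • (∫ θ in (0:ℝ)..(2 * Real.pi), Φ' r θ) - b r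
        = ∫ θ in (0:ℝ)..(2 * Real.pi), (r • Φ' r θ - Φ r θ) := by
          have := intervalIntegral.integral_sub (hi1.smul r) hi2
          simp only [Pi.smul_apply] at this
          rw [this, intervalIntegral.integral_smul]
      _ = ∫ θ in (0:ℝ)..(2 * Real.pi), (r • (rotL J (Real.cos (2*θ)) (Real.sin (2*θ)) (f (Q r θ) - f p))
        + r • (rotL J (Real.cos (2*θ)) (Real.sin (2*θ)) (f p))
        - (Φ r θ + r • (Real.cos θ • J (D θ) + Real.sin θ • D θ))) := by simp only [hpt]
      _ = _ := by
          rw [intervalIntegral.integral_sub, intervalIntegral.integral_add, hKint,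
            intervalIntegral.integral_smul, intervalIntegral.integral_smul, hzero]
          · simp
          all_goals
            apply Continuous.intervalIntegrable
            have h1 := hΦc r hr.1.le hr.2.le
            have h2 : Continuous fun θ => rotL J (Real.cos (2*θ)) (Real.sin (2*θ)) (f (Q r θ) - f p) :=
              rotL_cont J (by fun_prop) (by fun_prop) (hfc.sub continuous_const)
            have h3 : Continuous fun θ => rotL J (Real.cos (2*θ)) (Real.sin (2*θ)) (f p) :=
              rotL_cont J (by fun_prop) (by fun_prop) continuous_const
            have h4 : Continuous D := by simp only [hD]; fun_prop
            fun_prop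
  set β : ℝ → V := fun r => r⁻¹ • b r with hβ
  have hβd : ∀ r ∈ Ioo 0 R, ∃ d, HasDerivAt β d r ∧ ‖d‖ ≤ (1 + ‖J‖) * G * (2 * Real.pi) := by
    intro r hr
    have hr0 : r ≠ 0 := hr.1.ne'
    have h1 := (hasDerivAt_inv hr0).smul (hbd r hr)
    refine ⟨_, h1, ?_⟩
    have h2 : r⁻¹ • (∫ θ in (0:ℝ)..(2 * Real.pi), Φ' r θ) + -(r ^ 2)⁻¹ • b r
        = r⁻¹ • ∫ θ in (0:ℝ)..(2 * Real.pi), rotL J (Real.cos (2*θ)) (Real.sin (2*θ)) (f (Q r θ) - f p) := by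
      have := congrArg (fun v => (r^2)⁻¹ • v) (hkey r hr)
      simp only [smul_sub, smul_smul] at this
      have e : (r^2)⁻¹ * r = r⁻¹ := by field_simp
      rw [e] at this
      rw [neg_smul, ← sub_eq_add_neg, this]
    rw [h2, norm_smul, Real.norm_eq_abs, abs_of_pos (inv_pos.2 hr.1)]
    have h3 : ‖∫ θ in (0:ℝ)..(2 * Real.pi), rotL J (Real.cos (2*θ)) (Real.sin (2*θ)) (f (Q r θ) - f p)‖
        ≤ ((1 + ‖J‖) * (G * r)) * |2 * Real.pi - 0| := by
      apply intervalIntegral.norm_integral_le_of_norm_le_const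
      intro θ _
      refine (rotL_norm J (Real.abs_cos_le_one _) (Real.abs_sin_le_one _) _).trans ?_
      gcongr
      refine (hG _ (hQm r θ hr.1.le hr.2.le)).trans ?_
      gcongr
      have := circ_mem p hr.1.le (le_refl r) (θ := θ)
      rwa [mem_closedBall_iff_norm] at this
    rw [sub_zero, abs_of_pos (by positivity)] at h3
    calc r⁻¹ * _ ≤ r⁻¹ * (((1 + ‖J‖) * (G * r)) * (2 * Real.pi)) := by
          have := inv_pos.2 hr.1
          gcongr
      _ = _ := by field_simp
  have hR2 : R / 2 ∈ Ioo 0 R := ⟨by linarith, by linarith⟩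
  have hβR : ‖β (R/2)‖ ≤ (1 + ‖J‖) * M * (2 * Real.pi) * (2 / R) := by
    have h3 : ‖b (R/2)‖ ≤ ((1 + ‖J‖) * M) * |2 * Real.pi - 0| := by
      apply intervalIntegral.norm_integral_le_of_norm_le_const
      intro θ _
      refine (rotL_norm J (Real.abs_cos_le_one _) (Real.abs_sin_le_one _) _).trans ?_
      gcongr
      exact hM _ (hQm _ θ hR2.1.le hR2.2.le)
    rw [sub_zero, abs_of_pos (by positivity)] at h3
    rw [hβ, norm_smul, norm_inv, Real.norm_eq_abs, abs_of_pos hR2.1, inv_div, mul_comm]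
    gcongr
  set L : V := fderiv ℝ u p (1,0) - J (fderiv ℝ u p (0,1)) with hL
  have hLint : ∫ θ in (0:ℝ)..(2 * Real.pi), rotL J (Real.cos θ) (Real.sin θ)
      (fderiv ℝ u p (Real.cos θ, Real.sin θ)) = Real.pi • L := by
    have h1 : ∀ θ, rotL J (Real.cos θ) (Real.sin θ) (fderiv ℝ u p (Real.cos θ, Real.sin θ))
       = ((Real.cos θ)^2 • fderiv ℝ u p (1,0) - (Real.sin θ)^2 • J (fderiv ℝ u p (0,1))) +
        (Real.sin θ * Real.cos θ) • (fderiv ℝ u p (0,1) - J (fderiv ℝ u p (1,0))) := by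
      intro θ
      simp only [rotL, hsplit _ (Real.cos θ), map_add, map_smul]
      module
    simp only [h1]
    rw [intervalIntegral.integral_add, intervalIntegral.integral_sub,
      intervalIntegral.integral_smul_const, intervalIntegral.integral_smul_const,
      intervalIntegral.integral_smul_const, integral_cos_sq, integral_sin_sq,
      integral_sin_mul_cos₁]
    · simp [hL, smul_sub]
    all_goals
      apply Continuous.intervalIntegrable
      fun_prop
  have hsmall : ∀ δ > 0, ‖Real.pi • L‖ ≤ (1 + ‖J‖) * M * (2 * Real.pi) * (2 / R)
      + (1 + ‖J‖) * G * (2 * Real.pi) * (R/2) + (1 + ‖J‖) * δ * (2 * Real.pi) := by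
    intro δ hδ
    have hd := hdiff p (Metric.mem_closedBall_self hR.le)
    rw [hasFDerivAt_iff_isLittleO] at hd
    have := hd.def hδ
    obtain ⟨η, hη, hηb⟩ := Metric.eventually_nhds_iff_ball.1 this
    set ε := min (η/2) (R/4) with hε
    have hε0 : 0 < ε := by positivity
    have hεη : ε < η := (min_le_left _ _).trans_lt (by linarith)
    have hεR : ε ≤ R/4 := min_le_right _ _
    have h1 : ‖β (R/2) - β ε‖ ≤ (1 + ‖J‖) * G * (2 * Real.pi) * (R/2) := by
      have hconv : Convex ℝ (Ioo 0 R) := convex_Ioo 0 R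
      choose! d hd1 hd2 using hβd
      have hm := hconv.norm_image_sub_le_of_norm_hasDerivWithin_le
        (fun x hx => (hd1 x hx).hasDerivWithinAt) hd2
        (x := ε) (y := R/2) ⟨hε0, by linarith⟩ hR2
      refine hm.trans ?_
      gcongr
      rw [Real.norm_eq_abs, abs_of_nonneg (by linarith)]
      linarith
    have h2 : ‖β ε - Real.pi • L‖ ≤ (1 + ‖J‖) * δ * (2 * Real.pi) := by
      have hz : ∫ θ in (0:ℝ)..(2 * Real.pi), rotL J (Real.cos θ) (Real.sin θ) (u p) = 0 := by
        simp only [rotL]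
        rw [intervalIntegral.integral_sub, intervalIntegral.integral_smul_const,
          intervalIntegral.integral_smul_const]
        · simp
        all_goals
          apply Continuous.intervalIntegrable
          fun_prop
      have e : β ε - Real.pi • L = ε⁻¹ • ∫ θ in (0:ℝ)..(2 * Real.pi), rotL J (Real.cos θ) (Real.sin θ)
          (u (Q ε θ) - u p - fderiv ℝ u p (Q ε θ - p)) := by
        have hpt : ∀ θ, rotL J (Real.cos θ) (Real.sin θ)
          (u (Q ε θ) - u p - fderiv ℝ u p (Q ε θ - p)) = Φ ε θ - rotL J (Real.cos θ) (Real.sin θ) (u p)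
            - ε • rotL J (Real.cos θ) (Real.sin θ) (fderiv ℝ u p (Real.cos θ, Real.sin θ)) := by
          intro θ
          have : Q ε θ - p = ε • (Real.cos θ, Real.sin θ) := by simp only [hQ]; abel
          rw [this]
          simp only [hΦ, rotL, map_sub, map_smul]
          module
        simp only [hpt]
        rw [intervalIntegral.integral_sub, intervalIntegral.integral_sub,
          intervalIntegral.integral_smul, hLint, hz, sub_zero, smul_sub ε⁻¹,
          inv_smul_smul₀ hε0.ne']
        all_goals
          apply Continuous.intervalIntegrable
          have := hΦc ε hε0.le (by linarith)
          try simp only [rotL]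
          fun_prop
      rw [e, norm_smul, norm_inv, Real.norm_eq_abs, abs_of_pos hε0]
      have h3 : ‖∫ θ in (0:ℝ)..(2 * Real.pi), rotL J (Real.cos θ) (Real.sin θ)
          (u (Q ε θ) - u p - fderiv ℝ u p (Q ε θ - p))‖
          ≤ ((1 + ‖J‖) * (δ * ε)) * |2 * Real.pi - 0| := by
        apply intervalIntegral.norm_integral_le_of_norm_le_const
        intro θ _
        refine (rotL_norm J (Real.abs_cos_le_one _) (Real.abs_sin_le_one _) _).trans ?_
        gcongr
        have hm := circ_mem p hε0.le (le_refl ε) (θ := θ)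
        refine (hηb _ (Metric.closedBall_subset_ball hεη hm)).trans ?_
        gcongr
        rwa [mem_closedBall_iff_norm] at hm
      rw [sub_zero, abs_of_pos (by positivity)] at h3
      calc ε⁻¹ * _ ≤ ε⁻¹ * (((1 + ‖J‖) * (δ * ε)) * (2 * Real.pi)) := by gcongr
        _ = _ := by field_simp
    calc ‖Real.pi • L‖ = ‖β (R/2) - (β (R/2) - β ε) - (β ε - Real.pi • L)‖ := by congr 1; abel
      _ ≤ ‖β (R/2)‖ + ‖β (R/2) - β ε‖ + ‖β ε - Real.pi • L‖ :=
        (norm_sub_le _ _).trans (add_le_add_left (norm_sub_le _ _) _)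
      _ ≤ _ := by gcongr
  have hfin : ‖Real.pi • L‖ ≤ (1 + ‖J‖) * M * (2 * Real.pi) * (2 / R)
      + (1 + ‖J‖) * G * (2 * Real.pi) * (R/2) := by
    refine le_of_forall_pos_le_add fun δ hδ => ?_
    have := hsmall (δ / ((1 + ‖J‖) * (2 * Real.pi))) (by positivity)
    refine this.trans (le_of_eq ?_)
    have : (1 + ‖J‖) ≠ 0 := by positivity
    field_simp
  rw [norm_smul, Real.norm_eq_abs, abs_of_pos hπ] at hfin
  have : Real.pi * ‖L‖ ≤ Real.pi * (4 * (1 + ‖J‖) * (M / R + R * G)) := by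
    refine hfin.trans ?_
    have h0 : 0 ≤ (1 + ‖J‖) * G * R * Real.pi := by positivity
    have e : Real.pi * (4 * (1 + ‖J‖) * (M / R + R * G)) - ((1 + ‖J‖) * M * (2 * Real.pi) * (2 / R)
      + (1 + ‖J‖) * G * (2 * Real.pi) * (R/2)) = 3 * ((1 + ‖J‖) * G * R * Real.pi) := by
      field_simp; ring
    linarith
  exact le_of_mul_le_mul_left this hπ
end circle

section grad
variable {V : Type*} [NormedAddCommGroup V] [NormedSpace ℝ V] [CompleteSpace V]

lemma fderiv_norm_le_JC (J : V →L[ℝ] V) (hJ : ∀ x, J (J x) = -x) (L : ℝ × ℝ →L[ℝ] V) {a b : ℝ}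
    (ha : ‖L (1,0) - J (L (0,1))‖ ≤ a) (hb : ‖L (1,0) + J (L (0,1))‖ ≤ b) :
    ‖L‖ ≤ (1 + ‖J‖) * (a + b) := by
  have ha0 := (norm_nonneg _).trans ha
  have hb0 := (norm_nonneg _).trans hb
  have h1 : ‖L (1,0)‖ ≤ a + b := by
    have : L (1,0) = (1/2:ℝ) • ((L (1,0) - J (L (0,1))) + (L (1,0) + J (L (0,1)))) := by module
    rw [this, norm_smul, Real.norm_of_nonneg (by norm_num)]
    have := (norm_add_le (L (1,0) - J (L (0,1))) (L (1,0) + J (L (0,1))))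
    linarith
  have h2 : ‖L (0,1)‖ ≤ ‖J‖ * (a + b) := by
    have e : L (0,1) = J ((1/2:ℝ) • ((L (1,0) - J (L (0,1))) - (L (1,0) + J (L (0,1))))) := by
      have : (1/2:ℝ) • ((L (1,0) - J (L (0,1))) - (L (1,0) + J (L (0,1)))) = - J (L (0,1)) := by module
      rw [this, map_neg, hJ, neg_neg]
    rw [e]
    refine (J.le_opNorm _).trans ?_
    gcongr
    rw [norm_smul, Real.norm_of_nonneg (by norm_num)]
    have := (norm_sub_le (L (1,0) - J (L (0,1))) (L (1,0) + J (L (0,1))))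
    linarith
  refine L.opNorm_le_bound (by positivity) ?_
  rintro ⟨x, y⟩
  have : L (x, y) = x • L (1,0) + y • L (0,1) := by
    rw [← L.map_smul, ← L.map_smul, ← L.map_add]; simp
  rw [this]
  have hx : |x| ≤ ‖(x,y)‖ := norm_fst_le (x,y)
  have hy : |y| ≤ ‖(x,y)‖ := norm_snd_le (x,y)
  calc ‖x • L (1,0) + y • L (0,1)‖ ≤ |x| * ‖L (1,0)‖ + |y| * ‖L (0,1)‖ := by
        refine (norm_add_le _ _).trans ?_
        rw [norm_smul, norm_smul, Real.norm_eq_abs, Real.norm_eq_abs]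
    _ ≤ ‖(x,y)‖ * (a + b) + ‖(x,y)‖ * (‖J‖ * (a + b)) := by gcongr
    _ = _ := by ring

lemma grad_bound (J : V →L[ℝ] V) (hJ : ∀ x, J (J x) = -x) {R M M' L : ℝ} (hR : 0 < R)
    (hM0 : 0 ≤ M) (hM'0 : 0 ≤ M') (hL0 : 0 ≤ L) :
    ∃ C, ∀ (u : ℝ × ℝ → V) (p : ℝ × ℝ),
      (∀ q ∈ Metric.closedBall p R, ContDiffAt ℝ 1 u q) →
      (∀ q ∈ Metric.closedBall p R, ‖u q‖ ≤ M) →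
      (∀ q ∈ Metric.closedBall p R, ‖fderiv ℝ u q (1,0) + J (fderiv ℝ u q (0,1))‖ ≤ M') →
      (∀ q ∈ Metric.closedBall p R, ∀ q' ∈ Metric.closedBall p R,
        ‖(fderiv ℝ u q (1,0) + J (fderiv ℝ u q (0,1)))
        - (fderiv ℝ u q' (1,0) + J (fderiv ℝ u q' (0,1)))‖ ≤ L * (‖q - q'‖ + ‖u q - u q'‖)) →
      ∀ q ∈ Metric.closedBall p (R/2), ‖fderiv ℝ u q‖ ≤ C := by
  set A := 1 + ‖J‖ with hA
  have hA0 : 0 < A := by positivity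
  set ε := min (1/2) (1 / (16 * A^2 * R * L + 1)) with hε
  have hε0 : 0 < ε := by positivity
  have hε1 : ε ≤ 1/2 := min_le_left _ _
  have hε2 : 8 * A^2 * ε * R * L ≤ 1/2 := by
    have h1 : ε ≤ 1 / (16 * A^2 * R * L + 1) := min_le_right _ _
    rw [le_div_iff₀ (by positivity)] at h1
    nlinarith
  set B := 2 * (4 * A^2 * M / ε + 4 * A^2 * R^2 * L + A * R * M') with hB
  have hB0 : 0 ≤ B := by positivity
  refine ⟨B / (R/2), fun u p hu hM hM' hLip => ?_⟩
  have hcont : ContinuousOn (fun q => (R - dist q p) * ‖fderiv ℝ u q‖) (Metric.closedBall p R) := by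
    intro q hq
    have : ContinuousAt (fderiv ℝ u) q := ((hu q hq).fderiv_right (m := 0) (by simp)).continuousAt
    exact ((continuousAt_const.sub (continuousAt_id.dist continuousAt_const)).mul
      this.norm).continuousWithinAt
  obtain ⟨x, hx, hmax⟩ := (isCompact_closedBall p R).exists_isMaxOn
    (Metric.nonempty_closedBall.2 hR.le) hcont
  set d := R - dist x p with hd
  have hd0 : 0 ≤ d := by rw [hd, sub_nonneg]; exact hx
  have hdR : d ≤ R := by rw [hd]; have := dist_nonneg (x := x) (y := p); linarith
  set P := d * ‖fderiv ℝ u x‖ with hP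
  have hP0 : 0 ≤ P := by positivity
  have hmax' : ∀ q ∈ Metric.closedBall p R, (R - dist q p) * ‖fderiv ℝ u q‖ ≤ P :=
    fun q hq => hmax hq
  have hPB : P ≤ B := by
    rcases hd0.eq_or_lt with h0 | hdpos
    · rw [hP, ← h0, zero_mul]; exact hB0
    set r := ε * d with hr
    have hr0 : 0 < r := by positivity
    have hrd : r ≤ d / 2 := by rw [hr]; nlinarith
    have hsub : Metric.closedBall x r ⊆ Metric.closedBall p R := by
      intro q hq
      rw [Metric.mem_closedBall] at hq ⊢
      have := dist_triangle q x p
      linarith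
    have hDq : ∀ q ∈ Metric.closedBall x r, ‖fderiv ℝ u q‖ ≤ 2 * P / d := by
      intro q hq
      have h1 := hmax' q (hsub hq)
      rw [Metric.mem_closedBall] at hq
      have := dist_triangle q x p
      have h2 : d / 2 ≤ R - dist q p := by linarith
      rw [le_div_iff₀ hdpos]
      have h3 : d / 2 * ‖fderiv ℝ u q‖ ≤ (R - dist q p) * ‖fderiv ℝ u q‖ := by gcongr
      linarith
    have hxr : x ∈ Metric.closedBall x r := Metric.mem_closedBall_self hr0.le
    have hest := circle_est J hJ u x (R := r) (G := L * (1 + 2 * P / d)) (M := M) hr0 (by positivity)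
      (fun q hq => hu q (hsub hq)) (fun q hq => ?_) (fun q hq => hM q (hsub hq))
    · have h2 := fderiv_norm_le_JC J hJ (fderiv ℝ u x) hest (hM' x hx)
      rw [← hA] at h2
      have h3 : P ≤ d * (A * (4 * A * (M / r + r * (L * (1 + 2 * P / d))) + M')) := by
        rw [hP]; gcongr
      have e : d * (A * (4 * A * (M / r + r * (L * (1 + 2 * P / d))) + M')) =
          4 * A^2 * M / ε + 4 * A^2 * ε * L * d^2 + (8 * A^2 * ε * L * P) * d  + A * M' * d := by
        rw [hr]; field_simp; ring
      have h4 : 4 * A^2 * ε * L * d^2 ≤ 4 * A^2 * R^2 * L := by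
        calc 4 * A^2 * ε * L * d^2 ≤ 4 * A^2 * 1 * L * R^2 := by gcongr; linarith
          _ = _ := by ring
      have h5 : (8 * A^2 * ε * L * P) * d ≤ P / 2 := by
        calc (8 * A^2 * ε * L * P) * d ≤ (8 * A^2 * ε * L * P) * R := by gcongr
          _ = (8 * A^2 * ε * R * L) * P := by ring
          _ ≤ 1/2 * P := by gcongr
          _ = _ := by ring
      have h6 : A * M' * d ≤ A * R * M' := by
        calc A * M' * d ≤ A * M' * R := by gcongr
          _ = _ := by ring
      rw [e] at h3
      rw [hB]
      linarith
    · refine (hLip q (hsub hq) x hx).trans ?_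
      have h1 : ‖u q - u x‖ ≤ 2 * P / d * ‖q - x‖ :=
        (convex_closedBall x r).norm_image_sub_le_of_norm_fderiv_le
          (fun y hy => (hu y (hsub hy)).differentiableAt (by simp)) hDq hxr hq
      calc L * (‖q - x‖ + ‖u q - u x‖) ≤ L * (‖q - x‖ + 2 * P / d * ‖q - x‖) := by gcongr
        _ = _ := by ring
  intro q hq
  have hq' : q ∈ Metric.closedBall p R := Metric.closedBall_subset_closedBall (by linarith) hq
  have h1 := (hmax' q hq').trans hPB
  rw [Metric.mem_closedBall] at hq
  rw [le_div_iff₀ (by positivity)]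
  have h2 : R / 2 * ‖fderiv ℝ u q‖ ≤ (R - dist q p) * ‖fderiv ℝ u q‖ := by gcongr; linarith
  linarith
end grad

section seq
lemma ev_prod_iff {P : ℕ → ℝ × ℝ → Prop} {p : ℝ × ℝ} :
    (∀ᶠ x in (atTop : Filter ℕ) ×ˢ 𝓝 p, P x.1 x.2) ↔
      ∃ N : ℕ, ∃ R > 0, ∀ n ≥ N, ∀ q ∈ Metric.closedBall p R, P n q := by
  rw [(atTop_basis.prod Metric.nhds_basis_closedBall).eventually_iff]
  constructor
  · rintro ⟨⟨N, R⟩, ⟨-, hR⟩, h⟩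
    exact ⟨N, R, hR, fun n hn q hq => h (x := (n, q)) ⟨hn, hq⟩⟩
  · rintro ⟨N, R, hR, h⟩
    exact ⟨⟨N, R⟩, ⟨trivial, hR⟩, fun x hx => h x.1 hx.1 x.2 hx.2⟩

lemma ev_prod_nhds {P : ℕ → ℝ × ℝ → Prop} {p : ℝ × ℝ}
    (h : ∀ᶠ x in (atTop : Filter ℕ) ×ˢ 𝓝 p, P x.1 x.2) :
    ∀ᶠ x in (atTop : Filter ℕ) ×ˢ 𝓝 p, ∀ᶠ q in 𝓝 x.2, P x.1 q := by
  obtain ⟨N, R, hR, h⟩ := ev_prod_iff.1 h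
  refine (ev_prod_iff (P := fun n q => ∀ᶠ q' in 𝓝 q, P n q')).2 ⟨N, R/2, by positivity, fun n hn q hq => ?_⟩
  have : Metric.ball q (R/2) ∈ 𝓝 q := Metric.ball_mem_nhds q (by positivity)
  filter_upwards [this] with q' hq'
  refine h n hn q' ?_
  rw [Metric.mem_closedBall] at *
  rw [Metric.mem_ball] at hq'
  have := dist_triangle q' q p
  linarith

lemma grad_seq {V : Type*} [NormedAddCommGroup V] [NormedSpace ℝ V] [FiniteDimensional ℝ V]
    (J : V →L[ℝ] V) (hJ : ∀ x, J (J x) = -x) (F : ℝ × V → V) (hF : ContDiff ℝ (⊤ : ℕ∞) F)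
    (τ : ℕ → ℝ) (hτ : ∀ n, τ n ∈ Icc (0:ℝ) 1) (u : ℕ → ℝ × ℝ → V) (p : ℝ × ℝ)
    (hu : ∀ᶠ x in (atTop : Filter ℕ) ×ˢ 𝓝 p, ContDiffAt ℝ (⊤ : ℕ∞) (u x.1) x.2)
    (heq : ∀ᶠ x in (atTop : Filter ℕ) ×ˢ 𝓝 p, fderiv ℝ (u x.1) x.2 (1,0)
      + J (fderiv ℝ (u x.1) x.2 (0,1)) = F (x.2.2 + τ x.1, u x.1 x.2))
    (hb : ∃ C, ∀ᶠ x in (atTop : Filter ℕ) ×ˢ 𝓝 p, ‖u x.1 x.2‖ ≤ C) :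
    ∃ C, ∀ᶠ x in (atTop : Filter ℕ) ×ˢ 𝓝 p, ‖fderiv ℝ (u x.1) x.2‖ ≤ C := by
  have : CompleteSpace V := FiniteDimensional.complete ℝ V
  have : ProperSpace V := FiniteDimensional.proper ℝ V
  obtain ⟨M, hM⟩ := hb
  obtain ⟨N, R, hR, h⟩ := (ev_prod_iff (P := fun n q => ContDiffAt ℝ (⊤ : ℕ∞) (u n) q ∧
    (fderiv ℝ (u n) q (1,0) + J (fderiv ℝ (u n) q (0,1)) = F (q.2 + τ n, u n q)) ∧
    ‖u n q‖ ≤ M)).1 (hu.and (heq.and hM))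
  have hM0 : 0 ≤ M := (norm_nonneg _).trans (h N le_rfl p (Metric.mem_closedBall_self hR.le)).2.2
  set K : Set (ℝ × V) := Metric.closedBall p.2 (R+1) ×ˢ Metric.closedBall 0 M with hK
  have hKc : IsCompact K := (isCompact_closedBall _ _).prod (isCompact_closedBall _ _)
  have hKconv : Convex ℝ K := (convex_closedBall _ _).prod (convex_closedBall _ _)
  obtain ⟨M', hM'⟩ := hKc.exists_bound_of_continuousOn hF.continuous.continuousOn
  obtain ⟨L, hL⟩ := hKc.exists_bound_of_continuousOn
    (hF.fderiv_right (m := 0) (by simp)).continuous.continuousOn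
  have hKm : ∀ n ≥ N, ∀ q ∈ Metric.closedBall p R, (q.2 + τ n, u n q) ∈ K := by
    intro n hn q hq
    refine ⟨?_, by simpa using (h n hn q hq).2.2⟩
    have h1 : dist q.2 p.2 ≤ R := (le_max_right _ _).trans hq
    rw [Metric.mem_closedBall, Real.dist_eq] at *
    have h2 := hτ n
    rw [abs_le] at *
    constructor <;> linarith [h2.1, h2.2, h1.1, h1.2]
  have hpK := hKm N le_rfl p (Metric.mem_closedBall_self hR.le)
  have hM'0 : 0 ≤ M' := (norm_nonneg _).trans (hM' _ hpK)
  have hL0 : 0 ≤ L := (norm_nonneg _).trans (hL _ hpK)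
  obtain ⟨C, hC⟩ := grad_bound J hJ hR hM0 hM'0 hL0
  refine ⟨C, (ev_prod_iff (P := fun n q => ‖fderiv ℝ (u n) q‖ ≤ C)).2
    ⟨N, R/2, by positivity, fun n hn => ?_⟩⟩
  refine hC (u n) p (fun q hq => (h n hn q hq).1.of_le (by exact_mod_cast le_top))
    (fun q hq => (h n hn q hq).2.2) (fun q hq => ?_) (fun q hq q' hq' => ?_)
  · rw [(h n hn q hq).2.1]; exact hM' _ (hKm n hn q hq)
  · rw [(h n hn q hq).2.1, (h n hn q' hq').2.1]
    refine (hKconv.norm_image_sub_le_of_norm_fderiv_le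
      (fun y _ => (hF.differentiable (by simp)) y) hL (hKm n hn q' hq') (hKm n hn q hq)).trans ?_
    gcongr
    rw [Prod.norm_def]
    refine max_le ?_ ?_
    · simp only [Prod.fst_sub, add_sub_add_right_eq_sub]
      have : ‖q.2 - q'.2‖ ≤ ‖q - q'‖ := norm_snd_le (q - q')
      have := norm_nonneg (u n q - u n q')
      linarith
    · simp only [Prod.snd_sub]
      have := norm_nonneg (q - q')
      linarith

lemma all_deriv_bdd (k : ℕ) : ∀ {V : Type} [NormedAddCommGroup V] [NormedSpace ℝ V]
    [FiniteDimensional ℝ V]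
    (J : V →L[ℝ] V) (_ : ∀ x, J (J x) = -x) (F : ℝ × V → V) (_ : ContDiff ℝ (⊤ : ℕ∞) F)
    (τ : ℕ → ℝ) (_ : ∀ n, τ n ∈ Icc (0:ℝ) 1) (u : ℕ → ℝ × ℝ → V) (p : ℝ × ℝ)
    (_ : ∀ᶠ x in (atTop : Filter ℕ) ×ˢ 𝓝 p, ContDiffAt ℝ (⊤ : ℕ∞) (u x.1) x.2)
    (_ : ∀ᶠ x in (atTop : Filter ℕ) ×ˢ 𝓝 p, fderiv ℝ (u x.1) x.2 (1,0)
      + J (fderiv ℝ (u x.1) x.2 (0,1)) = F (x.2.2 + τ x.1, u x.1 x.2))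
    (_ : ∃ C, ∀ᶠ x in (atTop : Filter ℕ) ×ˢ 𝓝 p, ‖u x.1 x.2‖ ≤ C),
    ∃ C, ∀ᶠ x in (atTop : Filter ℕ) ×ˢ 𝓝 p, ‖iteratedFDeriv ℝ k (u x.1) x.2‖ ≤ C := by
  induction k with
  | zero =>
    intro V _ _ _ J hJ F hF τ hτ u p hu heq hb
    simpa using hb
  | succ k ih =>
    intro V _ _ _ J hJ F hF τ hτ u p hu heq hb
    obtain ⟨C1, hC1⟩ := grad_seq J hJ F hF τ hτ u p hu heq hb
    obtain ⟨C0, hC0⟩ := hb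
    set v : ℕ → ℝ × ℝ → V × V × V := fun n q =>
      (fderiv ℝ (u n) q (1,0), fderiv ℝ (u n) q (0,1), u n q) with hv
    set G : ℝ × (V × V × V) → V × V × V := fun y =>
      (fderiv ℝ F (y.1, y.2.2.2) (0, y.2.1), fderiv ℝ F (y.1, y.2.2.2) (1, y.2.2.1),
        F (y.1, y.2.2.2)) with hG
    have hDF : ContDiff ℝ (⊤ : ℕ∞) (fderiv ℝ F) := hF.fderiv_right (by simp)
    have hGs : ContDiff ℝ (⊤ : ℕ∞) G := by
      have hc : ContDiff ℝ (⊤ : ℕ∞) (fun y : ℝ × (V × V × V) => (y.1, y.2.2.2)) := by fun_prop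
      refine ContDiff.prodMk ?_ (ContDiff.prodMk ?_ ?_)
      · exact (hDF.comp hc).clm_apply (by fun_prop)
      · exact (hDF.comp hc).clm_apply (by fun_prop)
      · exact hF.comp hc
    have hDu : ∀ n q, ContDiffAt ℝ (⊤ : ℕ∞) (u n) q → ContDiffAt ℝ (⊤ : ℕ∞) (fderiv ℝ (u n)) q :=
      fun n q h => h.fderiv_right (by simp)
    have hvs : ∀ n q, ContDiffAt ℝ (⊤ : ℕ∞) (u n) q → ContDiffAt ℝ (⊤ : ℕ∞) (v n) q := by
      intro n q h
      exact ((hDu n q h).clm_apply contDiffAt_const).prodMk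
        (((hDu n q h).clm_apply contDiffAt_const).prodMk h)
    have key := ih (V := V × V × V) (J.prodMap (J.prodMap J))
      (by rintro ⟨a, b, c⟩; simp [hJ]) G hGs τ hτ v p
    have k1 : ∀ᶠ x in (atTop : Filter ℕ) ×ˢ 𝓝 p, ContDiffAt ℝ (⊤ : ℕ∞) (v x.1) x.2 := by
      filter_upwards [hu] with x hx using hvs _ _ hx
    have k2 : ∀ᶠ x in (atTop : Filter ℕ) ×ˢ 𝓝 p, fderiv ℝ (v x.1) x.2 (1,0)
      + (J.prodMap (J.prodMap J)) (fderiv ℝ (v x.1) x.2 (0,1)) = G (x.2.2 + τ x.1, v x.1 x.2) := by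
      have heq' := ev_prod_nhds (P := fun n q => fderiv ℝ (u n) q (1,0)
        + J (fderiv ℝ (u n) q (0,1)) = F (q.2 + τ n, u n q)) heq
      filter_upwards [heq', hu] with ⟨n, q⟩ hx hux
      simp only at hx hux ⊢
      have hd : HasFDerivAt (u n) (fderiv ℝ (u n) q) q := (hux.differentiableAt (by simp)).hasFDerivAt
      set B := fderiv ℝ (fderiv ℝ (u n)) q with hB
      have hd2 : HasFDerivAt (fderiv ℝ (u n)) B q :=
        ((hDu n q hux).differentiableAt (by simp)).hasFDerivAt
      have ha : ∀ e : ℝ × ℝ, HasFDerivAt (fun q => fderiv ℝ (u n) q e) (B.flip e) q := by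
        intro e
        have := hd2.clm_apply (hasFDerivAt_const e q)
        refine this.congr_fderiv ?_
        refine ContinuousLinearMap.ext fun w => ?_
        simp
      have hsymm : ∀ e e', B e e' = B e' e := by
        have := hux.isSymmSndFDerivAt (by rw [minSmoothness_of_isRCLikeNormedField]; exact WithTop.coe_le_coe.2 (le_top : (2 : ℕ∞) ≤ ⊤))
        exact fun e e' => this e e'
      have hdv : HasFDerivAt (v n) ((B.flip (1,0)).prod ((B.flip (0,1)).prod (fderiv ℝ (u n) q))) q :=
        (ha (1,0)).prodMk ((ha (0,1)).prodMk hd)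
      have hl : HasFDerivAt (fun q => fderiv ℝ (u n) q (1,0) + J (fderiv ℝ (u n) q (0,1)))
          (B.flip (1,0) + J.comp (B.flip (0,1))) q :=
        (ha (1,0)).add (J.hasFDerivAt.comp q (ha (0,1)))
      have hr : HasFDerivAt (fun q : ℝ × ℝ => F (q.2 + τ n, u n q))
          ((fderiv ℝ F (q.2 + τ n, u n q)).comp ((ContinuousLinearMap.snd ℝ ℝ ℝ).prod (fderiv ℝ (u n) q))) q := by
        have h1 : HasFDerivAt F (fderiv ℝ F (q.2 + τ n, u n q)) (q.2 + τ n, u n q) :=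
          ((hF.differentiable (by simp)) _).hasFDerivAt
        exact HasFDerivAt.comp q (f := fun q : ℝ × ℝ => (q.2 + τ n, u n q)) h1
          ((hasFDerivAt_snd.add_const _).prodMk hd)
      have hlr := (hl.congr_of_eventuallyEq (EventuallyEq.symm hx)).unique hr
      have h1 := congrArg (fun L => L (1,0)) hlr
      have h2 := congrArg (fun L => L (0,1)) hlr
      have h3 := hx.self_of_nhds
      simp at h1 h2
      rw [hdv.fderiv]
      refine Prod.ext ?_ (Prod.ext ?_ ?_)
      · change B (1,0) (1,0) + J (B (0,1) (1,0)) = _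
        rw [hsymm (0,1) (1,0), h1]
      · change B (1,0) (0,1) + J (B (0,1) (0,1)) = _
        rw [hsymm (1,0) (0,1), h2]
      · exact h3
    have k3 : ∃ C, ∀ᶠ x in (atTop : Filter ℕ) ×ˢ 𝓝 p, ‖v x.1 x.2‖ ≤ C := by
      refine ⟨max (C1 * 1) C0, ?_⟩
      filter_upwards [hC1, hC0] with x h1 h0
      have hC10 : 0 ≤ C1 := (norm_nonneg _).trans h1
      have hn : ∀ e : ℝ × ℝ, ‖e‖ ≤ 1 → ‖fderiv ℝ (u x.1) x.2 e‖ ≤ C1 * 1 := by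
        intro e he
        refine (ContinuousLinearMap.le_opNorm _ _).trans ?_
        gcongr
      simp only [hv]
      rw [Prod.norm_def, Prod.norm_def]
      refine max_le ((hn _ ?_).trans (le_max_left _ _)) (max_le ((hn _ ?_).trans (le_max_left _ _))
        (h0.trans (le_max_right _ _)))
      · simp [Prod.norm_def]
      · simp [Prod.norm_def]
    obtain ⟨C, hC⟩ := key k1 k2 k3
    · -- conclude
      set Λ : (V × V × V) →L[ℝ] (ℝ × ℝ →L[ℝ] V) :=
        ((ContinuousLinearMap.smulRightL ℝ (ℝ × ℝ) V (ContinuousLinearMap.fst ℝ ℝ ℝ)).comp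
          (ContinuousLinearMap.fst ℝ V (V × V))) +
        ((ContinuousLinearMap.smulRightL ℝ (ℝ × ℝ) V (ContinuousLinearMap.snd ℝ ℝ ℝ)).comp
          ((ContinuousLinearMap.fst ℝ V V).comp (ContinuousLinearMap.snd ℝ V (V × V)))) with hΛ
      have hΛv : ∀ n, fderiv ℝ (u n) = Λ ∘ v n := by
        intro n
        funext q
        ext <;> simp [hΛ, hv]
      refine ⟨‖Λ‖ * C, ?_⟩
      filter_upwards [hC, hu] with x hx hux
      rw [← norm_iteratedFDeriv_fderiv, hΛv, Λ.iteratedFDeriv_comp_left (hvs _ _ hux) (by exact_mod_cast le_top)]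
      refine (Λ.norm_compContinuousMultilinearMap_le _).trans ?_
      gcongr
end seq

section landau
lemma unif_of_loc {P : ℕ → ℝ × ℝ → Prop} {K : Set (ℝ × ℝ)} (hK : IsCompact K)
    (h : ∀ p ∈ K, ∀ᶠ x in (atTop : Filter ℕ) ×ˢ 𝓝 p, P x.1 x.2) :
    ∀ᶠ n in (atTop : Filter ℕ), ∀ q ∈ K, P n q := by
  refine hK.induction_on (p := fun s => ∀ᶠ n in (atTop : Filter ℕ), ∀ q ∈ s, P n q) ?_ ?_ ?_ ?_
  · simp
  · intro s t hst ht
    filter_upwards [ht] with n hn q hq using hn q (hst hq)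
  · intro s t hs ht
    filter_upwards [hs, ht] with n h1 h2 q hq
    rcases hq with hq | hq
    · exact h1 q hq
    · exact h2 q hq
  · intro p hp
    obtain ⟨N, R, hR, h⟩ := ev_prod_iff.1 (h p hp)
    refine ⟨Metric.closedBall p R, mem_nhdsWithin_of_mem_nhds (Metric.closedBall_mem_nhds p hR), ?_⟩
    filter_upwards [eventually_ge_atTop N] with n hn q hq using h n hn q hq

lemma landau {U : Set (ℝ × ℝ)} (hU : IsOpen U) (w : ℕ → ℝ × ℝ → ℂ) (m : ℕ)
    (hs : ∀ p ∈ U, ∀ᶠ x in (atTop : Filter ℕ) ×ˢ 𝓝 p, ContDiffAt ℝ (⊤ : ℕ∞) (w x.1) x.2)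
    (h2 : ∀ p ∈ U, ∃ C, ∀ᶠ x in (atTop : Filter ℕ) ×ˢ 𝓝 p, ‖iteratedFDeriv ℝ (m+2) (w x.1) x.2‖ ≤ C)
    (h0 : ∀ p ∈ U, ∀ ε > 0, ∀ᶠ x in (atTop : Filter ℕ) ×ˢ 𝓝 p, ‖iteratedFDeriv ℝ m (w x.1) x.2‖ ≤ ε) :
    ∀ p ∈ U, ∀ ε > 0, ∀ᶠ x in (atTop : Filter ℕ) ×ˢ 𝓝 p, ‖iteratedFDeriv ℝ (m+1) (w x.1) x.2‖ ≤ ε := by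
  intro p hp ε hε
  obtain ⟨C, hC⟩ := h2 p hp
  obtain ⟨N, R₀, hR₀, h⟩ := (ev_prod_iff (P := fun n q => ContDiffAt ℝ (⊤ : ℕ∞) (w n) q ∧
    ‖iteratedFDeriv ℝ (m+2) (w n) q‖ ≤ C)).1 ((hs p hp).and hC)
  obtain ⟨R₁, hR₁, hR₁U⟩ := Metric.nhds_basis_closedBall.mem_iff.1 (hU.mem_nhds hp)
  set R := min R₀ R₁ with hR
  have hR0 : 0 < R := lt_min hR₀ hR₁
  have hRU : Metric.closedBall p R ⊆ U :=
    (Metric.closedBall_subset_closedBall (min_le_right _ _)).trans hR₁U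
  have hRR : Metric.closedBall p R ⊆ Metric.closedBall p R₀ :=
    Metric.closedBall_subset_closedBall (min_le_left _ _)
  have hC0 : 0 ≤ C := (norm_nonneg _).trans (h N le_rfl p (Metric.mem_closedBall_self hR₀.le)).2
  set η := min (R/2) (ε / (2 * (C + 1))) with hη
  have hη0 : 0 < η := by positivity
  have hηC : C * η ≤ ε / 2 := by
    have : η ≤ ε / (2 * (C + 1)) := min_le_right _ _
    rw [le_div_iff₀ (by positivity)] at this
    nlinarith
  have hηR : η ≤ R / 2 := min_le_left _ _
  have hu := unif_of_loc (P := fun n q => ‖iteratedFDeriv ℝ m (w n) q‖ ≤ ε * η / 4)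
    (isCompact_closedBall p R) (fun q hq => h0 q (hRU hq) _ (by positivity))
  obtain ⟨N', hN'⟩ := eventually_atTop.1 hu
  refine (ev_prod_iff (P := fun n q => ‖iteratedFDeriv ℝ (m+1) (w n) q‖ ≤ ε)).2
    ⟨max N N', R/2, by positivity, fun n hn q hq => ?_⟩
  have hnN : N ≤ n := (le_max_left _ _).trans hn
  have hnN' : N' ≤ n := (le_max_right _ _).trans hn
  have hsub : Metric.closedBall q η ⊆ Metric.closedBall p R := by
    intro y hy
    rw [Metric.mem_closedBall] at *
    have := dist_triangle y q p
    linarith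
  have hqq : q ∈ Metric.closedBall q η := Metric.mem_closedBall_self hη0.le
  have hcd : ∀ (k : ℕ), ∀ y ∈ Metric.closedBall q η, DifferentiableAt ℝ (iteratedFDeriv ℝ k (w n)) y := by
    intro k y hy
    have h1 : ContDiffAt ℝ (⊤ : ℕ∞) (w n) y := (h n hnN y (hRR (hsub hy))).1
    have : ContDiffAt ℝ 1 (iteratedFDeriv ℝ k (w n)) y := by
      refine h1.iteratedFDeriv_right (m := 1) (i := k) ?_
      exact_mod_cast (le_top : ((1 + k : ℕ) : ℕ∞) ≤ ⊤)
    exact this.differentiableAt (by simp)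
  set g := iteratedFDeriv ℝ m (w n) with hg
  have hg' : ∀ y ∈ Metric.closedBall q η, ‖fderiv ℝ g y - fderiv ℝ g q‖ ≤ C * η := by
    intro y hy
    rw [hg, fderiv_iteratedFDeriv]
    simp only [Function.comp_apply]
    have e0 := (continuousMultilinearCurryLeftEquiv ℝ (fun _ : Fin (m+1) => ℝ × ℝ) ℂ).norm_map
      (iteratedFDeriv ℝ (m + 1) (w n) y - iteratedFDeriv ℝ (m + 1) (w n) q)
    refine le_of_eq_of_le e0 ?_
    refine ((convex_closedBall q η).norm_image_sub_le_of_norm_fderiv_le (C := C)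
      (fun y hy => hcd (m+1) y hy) (fun y hy => ?_) hqq hy).trans ?_
    · rw [norm_fderiv_iteratedFDeriv]
      exact (h n hnN y (hRR (hsub hy))).2
    · gcongr
      rwa [mem_closedBall_iff_norm] at hy
  rw [← norm_fderiv_iteratedFDeriv, ← hg]
  refine ContinuousLinearMap.opNorm_le_of_unit_norm hε.le fun e he => ?_
  have hy : q + η • e ∈ Metric.closedBall q η := by
    rw [mem_closedBall_iff_norm, add_sub_cancel_left, norm_smul, he, Real.norm_eq_abs,
      abs_of_pos hη0, mul_one]
  have h3 := (convex_closedBall q η).norm_image_sub_le_of_norm_fderiv_le' (f := g) (φ := fderiv ℝ g q)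
    (fun y hy => hcd m y hy) hg' hqq hy
  rw [add_sub_cancel_left, map_smul, norm_smul, he, Real.norm_eq_abs, abs_of_pos hη0, mul_one] at h3
  have h4 := hN' n hnN' _ (hsub hy)
  have h5 := hN' n hnN' _ (hsub hqq)
  rw [← hg] at h4 h5
  have h6 : ‖η • fderiv ℝ g q e‖ ≤ C * η * η + ε * η / 4 + ε * η / 4 := by
    calc ‖η • fderiv ℝ g q e‖ = ‖-(g (q + η • e) - g q - η • fderiv ℝ g q e) + g (q + η • e) - g q‖ := by
          congr 1; abel
      _ ≤ ‖g (q + η • e) - g q - η • fderiv ℝ g q e‖ + ‖g (q + η • e)‖ + ‖g q‖ := by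
          refine (norm_sub_le _ _).trans (add_le_add_left ((norm_add_le _ _).trans ?_) _)
          rw [norm_neg]
      _ ≤ _ := by gcongr
  rw [norm_smul, Real.norm_eq_abs, abs_of_pos hη0] at h6
  have h7 : η * ‖fderiv ℝ g q e‖ ≤ η * ε := by nlinarith
  exact le_of_mul_le_mul_left h7 hη0

lemma landau_all {U : Set (ℝ × ℝ)} (hU : IsOpen U) (w : ℕ → ℝ × ℝ → ℂ)
    (hs : ∀ p ∈ U, ∀ᶠ x in (atTop : Filter ℕ) ×ˢ 𝓝 p, ContDiffAt ℝ (⊤ : ℕ∞) (w x.1) x.2)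
    (hb : ∀ m, ∀ p ∈ U, ∃ C, ∀ᶠ x in (atTop : Filter ℕ) ×ˢ 𝓝 p, ‖iteratedFDeriv ℝ m (w x.1) x.2‖ ≤ C)
    (h0 : ∀ p ∈ U, ∀ ε > 0, ∀ᶠ x in (atTop : Filter ℕ) ×ˢ 𝓝 p, ‖w x.1 x.2‖ ≤ ε) (m : ℕ) :
    ∀ p ∈ U, ∀ ε > 0, ∀ᶠ x in (atTop : Filter ℕ) ×ˢ 𝓝 p, ‖iteratedFDeriv ℝ m (w x.1) x.2‖ ≤ ε := by
  induction m with
  | zero => simpa using h0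
  | succ m ih => exact landau hU w m hs (hb (m+2)) ih
end landau

section energy
lemma halfPlane_nhds {S : ℝ} {p : ℝ × ℝ} (h : S < p.1) : HalfPlaneFrom S ∈ 𝓝 p :=
  prod_mem_nhds (Ici_mem_nhds h) univ_mem

lemma per_fderiv {S c : ℝ} {z : ℝ × ℝ → ℂ} (hper : ∀ s t : ℝ, S ≤ s → z (s, t + c) = z (s, t))
    {p : ℝ × ℝ} (h : S < p.1) : fderiv ℝ z (p + (0, c)) = fderiv ℝ z p := by
  rw [← fderiv_comp_add_right]
  apply Filter.EventuallyEq.fderiv_eq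
  filter_upwards [halfPlane_nhds h] with x hx
  have := hper x.1 x.2 hx.1
  have e : x + (0, c) = (x.1, x.2 + c) := by ext <;> simp
  rw [e, this]

lemma energy_lower (H : ℝ → ℂ → ℝ) {S τ η ρ : ℝ} {n : ℕ} (hn : 1 ≤ n) (z : ℝ × ℝ → ℂ)
    (hper : ∀ s t : ℝ, S ≤ s → z (s, t + n) = z (s, t)) (q : ℝ × ℝ) (hq : S < q.1)
    (hη : 0 ≤ η) (hρ0 : 0 ≤ ρ) (hρ : ρ ≤ 1/2)
    (hlow : ∀ s t, q.1 < s → s < q.1 + ρ → |t - q.2| < ρ → η ≤ ‖fderiv ℝ z (s, t) (1,0)‖) :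
    (1/2 : ℝ≥0∞) * (ENNReal.ofReal (η^2) * (ENNReal.ofReal ρ * ENNReal.ofReal ρ)) ≤
      floerEnergyFrom H S n τ z := by
  unfold floerEnergyFrom
  gcongr
  have hn0 : (0:ℝ) < n := by exact_mod_cast hn
  have hn1 : (1:ℝ) ≤ n := by exact_mod_cast hn
  obtain ⟨k, hk, -⟩ := existsUnique_add_zsmul_mem_Ioc hn0 q.2 0
  simp only [zero_add, zsmul_eq_mul] at hk
  set t' := q.2 + k * n with ht'
  have hperk : ∀ s t : ℝ, S ≤ s → z (s, t + k * n) = z (s, t) := by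
    intro s t hs
    have : Function.Periodic (fun t => z (s, t)) (n:ℝ) := fun t => hper s t hs
    exact this.int_mul k t
  obtain ⟨a, ha0, ha1, ha2, ha3⟩ : ∃ a, 0 ≤ a ∧ a + ρ ≤ n ∧ t' - ρ ≤ a ∧ a ≤ t' := by
    rcases le_or_gt t' (n/2) with h | h
    · exact ⟨t', hk.1.le, by linarith, by linarith, le_rfl⟩
    · exact ⟨t' - ρ, by linarith, by linarith [hk.2], le_rfl, by linarith⟩
  set B : Set (ℝ × ℝ) := Ioo q.1 (q.1 + ρ) ×ˢ Ioo a (a + ρ) with hB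
  have hBm : MeasurableSet B := measurableSet_Ioo.prod measurableSet_Ioo
  have hBsub : B ⊆ Set.Ici S ×ˢ Set.Ioc (0:ℝ) (n:ℝ) := by
    rintro ⟨s, t⟩ ⟨h1, h2⟩
    simp only [mem_Ioo] at h1 h2
    exact ⟨by simp only [mem_Ici]; linarith, by simp only [mem_Ioc]; constructor <;> linarith⟩
  calc ENNReal.ofReal (η^2) * (ENNReal.ofReal ρ * ENNReal.ofReal ρ)
      = ∫⁻ _ in B, ENNReal.ofReal (η^2) := by
        rw [setLIntegral_const, hB, Measure.volume_eq_prod, Measure.prod_prod, Real.volume_Ioo,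
          Real.volume_Ioo, add_sub_cancel_left, add_sub_cancel_left]
    _ ≤ ∫⁻ p in B, ENNReal.ofReal (‖pds (HalfPlaneFrom S) z p‖ ^ 2 +
        ‖pdt (HalfPlaneFrom S) z p - XH H (p.2 + τ) (z p)‖ ^ 2) := by
        refine setLIntegral_mono' hBm ?_
        rintro ⟨s, t⟩ ⟨h1, h2⟩
        simp only [mem_Ioo] at h1 h2
        apply ENNReal.ofReal_le_ofReal
        have hS : S < ((s, t) : ℝ × ℝ).1 := by simp only; linarith
        have h3 : pds (HalfPlaneFrom S) z (s, t) = fderiv ℝ z (s, t - k * n) (1, 0) := by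
          unfold pds
          rw [fderivWithin_of_mem_nhds (halfPlane_nhds hS)]
          have := per_fderiv hperk (p := (s, t - k * n)) hS
          rw [← this]
          simp
        rw [h3]
        have h4 := hlow s (t - k * n) h1.1 h1.2 (by rw [abs_lt]; constructor <;> linarith)
        have : η^2 ≤ ‖fderiv ℝ z (s, t - k * n) (1, 0)‖^2 := by gcongr
        have := sq_nonneg ‖pdt (HalfPlaneFrom S) z (s, t) - XH H ((s, t).2 + τ) (z (s, t))‖
        linarith
    _ ≤ _ := lintegral_mono_set hBsub
end energy

section gronwall
lemma gron_fwd (X : ℝ → ℂ → ℂ) (K : NNReal) (hK : 1 ≤ K) (T : ℝ)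
    (hX : ∀ t ∈ Icc 0 T, LipschitzOnWith K (X t) Disk) (w w' : ℕ → ℝ → ℂ)
    (hw : ∀ j t, HasDerivAt (w j) (w' j t) t) (hD : ∀ j t, w j t ∈ Disk)
    (happ : ∀ ε > 0, ∀ᶠ j in atTop, ∀ t ∈ Icc 0 T, ‖w' j t - X t (w j t)‖ ≤ ε)
    (h0 : CauchySeq (fun j => w j 0)) :
    ∀ ε > 0, ∃ N, ∀ i ≥ N, ∀ j ≥ N, ∀ t ∈ Icc 0 T, dist (w i t) (w j t) ≤ ε := by
  intro ε hε
  set M := Real.exp (K * T) with hM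
  have hM0 : 0 < M := Real.exp_pos _
  have hK1 : (1:ℝ) ≤ K := by exact_mod_cast hK
  set δ := ε / (3 * M) with hδ
  have hδ0 : 0 < δ := by positivity
  obtain ⟨N₁, hN₁⟩ := eventually_atTop.1 (happ δ hδ0)
  obtain ⟨N₂, hN₂⟩ := Metric.cauchySeq_iff.1 h0 δ hδ0
  refine ⟨max N₁ N₂, fun i hi j hj t ht => ?_⟩
  have hi1 : N₁ ≤ i := (le_max_left _ _).trans hi
  have hi2 : N₂ ≤ i := (le_max_right _ _).trans hi
  have hj1 : N₁ ≤ j := (le_max_left _ _).trans hj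
  have hj2 : N₂ ≤ j := (le_max_right _ _).trans hj
  have := dist_le_of_approx_trajectories_ODE_of_mem (v := X) (s := fun _ => Disk) (K := K)
    (f := w i) (g := w j) (f' := w' i) (g' := w' j) (a := 0) (b := T) (εf := δ) (εg := δ) (δ := δ)
    (fun t ht => hX t (Ico_subset_Icc_self ht))
    (fun t _ => (hw i t).continuousAt.continuousWithinAt)
    (fun t _ => (hw i t).hasDerivWithinAt)
    (fun t ht => by rw [dist_eq_norm]; exact hN₁ i hi1 t (Ico_subset_Icc_self ht))
    (fun t _ => hD i t)
    (fun t _ => (hw j t).continuousAt.continuousWithinAt)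
    (fun t _ => (hw j t).hasDerivWithinAt)
    (fun t ht => by rw [dist_eq_norm]; exact hN₁ j hj1 t (Ico_subset_Icc_self ht))
    (fun t _ => hD j t) (hN₂ i hi2 j hj2).le t ht
  refine this.trans ?_
  rw [gronwallBound_of_K_ne_0 (by positivity)]
  simp only [sub_zero]
  have h1 : Real.exp (K * t) ≤ M := Real.exp_le_exp.2 (by have := ht.2; gcongr)
  have h2 : 1 ≤ Real.exp (K * t) := Real.one_le_exp (by have := ht.1; positivity)
  have h3 : (δ + δ) / K ≤ δ + δ := div_le_self (by positivity) hK1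
  have h4 : δ * M = ε / 3 := by rw [hδ]; field_simp
  have h5 : (δ + δ) / K * (Real.exp (K * t) - 1) ≤ (δ + δ) * M := by
    apply mul_le_mul h3 (by linarith) (by linarith) (by positivity)
  have h6 : δ * Real.exp (K * t) ≤ δ * M := by gcongr
  linarith

lemma gron_main (X : ℝ → ℂ → ℂ)
    (hX : ∀ T, ∃ K : NNReal, ∀ t ∈ Icc (-T) T, LipschitzOnWith K (X t) Disk) (w w' : ℕ → ℝ → ℂ)
    (hw : ∀ j t, HasDerivAt (w j) (w' j t) t) (hD : ∀ j t, w j t ∈ Disk)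
    (happ : ∀ T, ∀ ε > 0, ∀ᶠ j in atTop, ∀ t ∈ Icc (-T) T, ‖w' j t - X t (w j t)‖ ≤ ε)
    (h0 : CauchySeq (fun j => w j 0)) :
    ∃ γ : ℝ → ℂ, (∀ t, γ t ∈ Disk) ∧ (∀ t, HasDerivAt γ (X t (γ t)) t) ∧
      ∀ T, TendstoUniformlyOn w γ atTop (Icc (-T) T) := by
  have hC : ∀ T, UniformCauchySeqOn w atTop (Icc (-T) T) := by
    intro T
    obtain ⟨K, hK⟩ := hX T
    have hK' : ∀ t ∈ Icc (-T) T, LipschitzOnWith (max K 1) (X t) Disk :=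
      fun t ht => (hK t ht).weaken (le_max_left _ _)
    rw [Metric.uniformCauchySeqOn_iff]
    intro ε hε
    have h1 := gron_fwd X (max K 1) (le_max_right _ _) T
      (fun t ht => hK' t ⟨by linarith [ht.1, ht.2], ht.2⟩) w w' hw hD
      (fun ε hε => (happ T ε hε).mono fun j hj t ht => hj t ⟨by linarith [ht.1, ht.2], ht.2⟩)
      h0 (ε/2) (by positivity)
    have h2 := gron_fwd (fun t x => - X (-t) x) (max K 1) (le_max_right _ _) T
      (fun t ht => (hK' (-t) ⟨by linarith [ht.1, ht.2], by linarith [ht.1, ht.2]⟩).neg)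
      (fun j t => w j (-t)) (fun j t => - w' j (-t))
      (fun j t => by
        have := (hw j (-t)).scomp t (hasDerivAt_neg t)
        rw [neg_smul, one_smul] at this
        exact this)
      (fun j t => hD j _)
      (fun ε hε => (happ T ε hε).mono fun j hj t ht => by
        have := hj (-t) ⟨by linarith [ht.1, ht.2], by linarith [ht.1, ht.2]⟩
        rw [← norm_neg] at this
        refine le_of_eq_of_le (congrArg norm ?_) this
        simp only [neg_sub]
        abel)
      (by simpa using h0) (ε/2) (by positivity)
    obtain ⟨N₁, hN₁⟩ := h1
    obtain ⟨N₂, hN₂⟩ := h2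
    refine ⟨max N₁ N₂, fun i hi j hj t ht => ?_⟩
    have hi1 : N₁ ≤ i := (le_max_left _ _).trans hi
    have hi2 : N₂ ≤ i := (le_max_right _ _).trans hi
    have hj1 : N₁ ≤ j := (le_max_left _ _).trans hj
    have hj2 : N₂ ≤ j := (le_max_right _ _).trans hj
    rcases le_total 0 t with h | h
    · have := hN₁ i hi1 j hj1 t ⟨h, ht.2⟩
      linarith
    · have := hN₂ i hi2 j hj2 (-t) ⟨by linarith, by linarith [ht.1]⟩
      simp only [neg_neg] at this
      linarith
  have hmem : ∀ t : ℝ, t ∈ Icc (-|t|) |t| := fun t => ⟨neg_abs_le t, le_abs_self t⟩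
  have hc : ∀ t, ∃ g, Tendsto (fun j => w j t) atTop (𝓝 g) := fun t =>
    cauchySeq_tendsto_of_complete ((hC |t|).cauchySeq (hmem t))
  choose γ hγ using hc
  have hγD : ∀ t, γ t ∈ Disk := fun t =>
    Metric.isClosed_closedBall.mem_of_tendsto (hγ t) (Eventually.of_forall fun j => hD j t)
  have hu : ∀ T, TendstoUniformlyOn w γ atTop (Icc (-T) T) := fun T =>
    (hC T).tendstoUniformlyOn_of_tendsto fun t _ => hγ t
  refine ⟨γ, hγD, fun t => ?_, hu⟩
  set T := |t| + 1 with hT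
  have htm : t ∈ Ioo (-T) T := ⟨by linarith [neg_abs_le t], by linarith [le_abs_self t]⟩
  refine hasDerivAt_of_tendstoUniformlyOn (f := w) (f' := w') (g' := fun t => X t (γ t)) (l := atTop)
    (isOpen_Ioo (a := -T) (b := T)) ?_ (Eventually.of_forall fun n x _ => hw n x) (fun x _ => hγ x) htm
  obtain ⟨K, hK⟩ := hX T
  rw [Metric.tendstoUniformlyOn_iff]
  intro ε hε
  have h1 := happ T (ε/3) (by positivity)
  have h2 := Metric.tendstoUniformlyOn_iff.1 (hu T) (ε / (3 * (K+1))) (by positivity)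
  filter_upwards [h1, h2] with j h1 h2 x hx
  have hx' := Ioo_subset_Icc_self hx
  have h3 := (hK x hx').dist_le_mul _ (hγD x) _ (hD j x)
  have h4 := h1 x hx'
  rw [← dist_eq_norm, dist_comm] at h4
  have h5 := h2 x hx'
  have h6 : K * dist (γ x) (w j x) ≤ ε / 3 := by
    rw [lt_div_iff₀ (by positivity)] at h5
    have : 0 ≤ dist (γ x) (w j x) := dist_nonneg
    nlinarith
  have := dist_triangle (X x (γ x)) (X x (w j x)) (w' j x)
  linarith

lemma ode_smooth (X : ℝ × ℂ → ℂ) (hX : ContDiff ℝ (⊤ : ℕ∞) X) (γ : ℝ → ℂ)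
    (h : ∀ t, HasDerivAt γ (X (t, γ t)) t) : ContDiff ℝ (⊤ : ℕ∞) γ := by
  rw [contDiff_infty]
  intro n
  induction n with
  | zero =>
    exact contDiff_zero.2 (continuous_iff_continuousAt.2 fun t => (h t).continuousAt)
  | succ n ih =>
    have : ContDiff ℝ ((n : WithTop ℕ∞) + 1) γ := by
      rw [contDiff_succ_iff_deriv]
      refine ⟨fun t => (h t).differentiableAt, by simp, ?_⟩
      have e : deriv γ = fun t => X (t, γ t) := funext fun t => (h t).deriv
      rw [e]
      exact (contDiff_infty.1 hX n).comp (contDiff_id.prodMk ih)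
    exact_mod_cast this

lemma XH_smooth {H : ℝ → ℂ → ℝ} (hH : IsAdmissible H) :
    ContDiff ℝ (⊤ : ℕ∞) (fun p : ℝ × ℂ => XH H p.1 p.2) := by
  have h1 : ContDiff ℝ (⊤ : ℕ∞) (fun p : ℝ × ℂ => fderiv ℝ (H p.1) p.2) := by
    refine ContDiff.fderiv (f := fun (p : ℝ × ℂ) (w : ℂ) => H p.1 w) (m := (⊤ : ℕ∞)) ?_ contDiff_snd ?_
    · exact hH.smooth.comp ((contDiff_fst.comp contDiff_fst).prodMk contDiff_snd)
    · exact_mod_cast (le_top : (⊤ + 1 : ℕ∞) ≤ ⊤)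
  unfold XH
  have h2 : ∀ v : ℂ, ContDiff ℝ (⊤ : ℕ∞) (fun p : ℝ × ℂ => ((fderiv ℝ (H p.1) p.2 v : ℝ) : ℂ)) :=
    fun v => Complex.ofRealCLM.contDiff.comp (h1.clm_apply contDiff_const)
  exact contDiff_const.mul ((h2 1).add ((h2 I).mul contDiff_const))
end gronwall

section core
lemma ds_small (H : ℝ → ℂ → ℝ) {S τ : ℕ → ℝ} {Np : ℕ → ℕ} (hNp : ∀ j, 1 ≤ Np j) (z : ℕ → ℝ × ℝ → ℂ)
    (hper : ∀ j, ∀ s t : ℝ, S j ≤ s → z j (s, t + Np j) = z j (s, t))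
    (hsm : ∀ j p, S j < p.1 → ContDiffAt ℝ (⊤ : ℕ∞) (z j) p)
    (hE : Tendsto (fun j => floerEnergyFrom H (S j) (Np j) (τ j) (z j)) atTop (𝓝 0))
    (p : ℝ × ℝ) (hS : ∀ᶠ x in (atTop : Filter ℕ) ×ˢ 𝓝 p, S x.1 < x.2.1)
    (h2 : ∃ C, ∀ᶠ x in (atTop : Filter ℕ) ×ˢ 𝓝 p, ‖iteratedFDeriv ℝ 2 (z x.1) x.2‖ ≤ C) :
    ∀ ε > 0, ∀ᶠ x in (atTop : Filter ℕ) ×ˢ 𝓝 p, ‖fderiv ℝ (z x.1) x.2 (1, 0)‖ ≤ ε := by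
  intro ε hε
  obtain ⟨C, hC⟩ := h2
  obtain ⟨N, R, hR, h⟩ := (ev_prod_iff (P := fun n q => S n < q.1 ∧
    ‖iteratedFDeriv ℝ 2 (z n) q‖ ≤ C)).1 (hS.and hC)
  have hC0 : 0 ≤ C := (norm_nonneg _).trans (h N le_rfl p (Metric.mem_closedBall_self hR.le)).2
  set ρ := min (1/2) (min (R/2) (ε / (2 * (C + 1)))) with hρ
  have hρ0 : 0 < ρ := by positivity
  have hρ1 : ρ ≤ 1/2 := min_le_left _ _
  have hρR : ρ ≤ R/2 := (min_le_right _ _).trans (min_le_left _ _)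
  have hρC : C * ρ ≤ ε / 2 := by
    have : ρ ≤ ε / (2 * (C + 1)) := (min_le_right _ _).trans (min_le_right _ _)
    rw [le_div_iff₀ (by positivity)] at this
    nlinarith
  set c0 : ℝ≥0∞ := (1/2 : ℝ≥0∞) * (ENNReal.ofReal ((ε/2)^2) * (ENNReal.ofReal ρ * ENNReal.ofReal ρ)) with hc0
  have hc0pos : 0 < c0 := by
    have h1 : 0 < ENNReal.ofReal ((ε/2)^2) := ENNReal.ofReal_pos.2 (by positivity)
    have h2 : 0 < ENNReal.ofReal ρ := ENNReal.ofReal_pos.2 hρ0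
    have h3 : (0 : ℝ≥0∞) < 1/2 := by simp
    exact ENNReal.mul_pos h3.ne' (ENNReal.mul_pos h1.ne' (ENNReal.mul_pos h2.ne' h2.ne').ne').ne'
  obtain ⟨N', hN'⟩ := eventually_atTop.1 (hE.eventually_lt_const hc0pos)
  refine (ev_prod_iff (P := fun n q => ‖fderiv ℝ (z n) q (1, 0)‖ ≤ ε)).2
    ⟨max N N', R/2, by positivity, fun n hn q hq => ?_⟩
  have hnN : N ≤ n := (le_max_left _ _).trans hn
  have hnN' : N' ≤ n := (le_max_right _ _).trans hn
  by_contra! hcon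
  have hsub : Metric.closedBall q ρ ⊆ Metric.closedBall p R := by
    intro y hy
    rw [Metric.mem_closedBall] at *
    have := dist_triangle y q p
    linarith
  have hqq : q ∈ Metric.closedBall q ρ := Metric.mem_closedBall_self hρ0.le
  refine absurd (hN' n hnN') (not_lt.2 ?_)
  refine energy_lower H (hNp n) (z n) (hper n) q (h n hnN q (hsub hqq)).1 (by positivity) hρ0.le hρ1 ?_
  intro s t h1 h2 h3
  have hy : (s, t) ∈ Metric.closedBall q ρ := by
    rw [Metric.mem_closedBall, Prod.dist_eq, max_le_iff, Real.dist_eq, Real.dist_eq]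
    refine ⟨?_, h3.le⟩
    simp only
    rw [abs_le]
    constructor <;> linarith
  have h4 : ‖fderiv ℝ (z n) (s, t) - fderiv ℝ (z n) q‖ ≤ C * ρ := by
    refine ((convex_closedBall q ρ).norm_image_sub_le_of_norm_fderiv_le (𝕜 := ℝ) (f := fderiv ℝ (z n)) (C := C)
      (fun y hy => ?_) (fun y hy => ?_) hqq hy).trans ?_
    · have h5 := hsm n y (h n hnN y (hsub hy)).1
      have : ContDiffAt ℝ 1 (fderiv ℝ (z n)) y :=
        h5.fderiv_right (WithTop.coe_le_coe.2 (le_top : (2:ℕ∞) ≤ ⊤))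
      exact this.differentiableAt (by simp)
    · have e : ‖fderiv ℝ (fderiv ℝ (z n)) y‖ = ‖iteratedFDeriv ℝ 2 (z n) y‖ := by
        rw [show (2:ℕ) = 1 + 1 from rfl, ← norm_iteratedFDeriv_fderiv, norm_iteratedFDeriv_one]
      rw [e]
      exact (h n hnN y (hsub hy)).2
    · gcongr
      rwa [mem_closedBall_iff_norm] at hy
  have h5 : ‖(fderiv ℝ (z n) (s, t) - fderiv ℝ (z n) q) (1, 0)‖ ≤ C * ρ := by
    refine (ContinuousLinearMap.le_opNorm _ _).trans ?_
    have : ‖((1, 0) : ℝ × ℝ)‖ = 1 := by simp [Prod.norm_def]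
    rw [this, mul_one]
    exact h4
  rw [_root_.sub_apply] at h5
  have h6 := norm_sub_norm_le (fderiv ℝ (z n) q (1, 0)) (fderiv ℝ (z n) (s, t) (1, 0))
  rw [norm_sub_rev] at h6
  linarith

lemma core (H : ℝ → ℂ → ℝ) (hH : IsAdmissible H) {S τ : ℕ → ℝ} {Np : ℕ → ℕ} (hNp : ∀ j, 1 ≤ Np j)
    (z : ℕ → ℝ × ℝ → ℂ) (hS0 : ∀ j, S j ≤ 0) (hτ : ∀ j, τ j ∈ Icc (0:ℝ) 1)
    (hper : ∀ j, ∀ s t : ℝ, S j ≤ s → z j (s, t + Np j) = z j (s, t))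
    (hsm : ∀ j p, S j < p.1 → ContDiffAt ℝ (⊤ : ℕ∞) (z j) p)
    (hdk : ∀ j p, S j < p.1 → z j p ∈ Disk)
    (hfl : ∀ j p, S j < p.1 →
      fderiv ℝ (z j) p (1, 0) + I * (fderiv ℝ (z j) p (0, 1) - XH H (p.2 + τ j) (z j p)) = 0)
    (hE : Tendsto (fun j => floerEnergyFrom H (S j) (Np j) (τ j) (z j)) atTop (𝓝 0))
    {τ₀ : ℝ} (hτ₀ : τ₀ ∈ Icc (0:ℝ) 1) (hτl : Tendsto τ atTop (𝓝 τ₀))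
    (hc : CauchySeq (fun j => z j (1, 0)))
    {U : Set (ℝ × ℝ)} (hU : IsOpen U)
    (hUS : ∀ p ∈ U, ∀ᶠ x in (atTop : Filter ℕ) ×ˢ 𝓝 p, S x.1 < x.2.1)
    (hUup : ∀ p ∈ U, ∀ s ≥ p.1, (s, p.2) ∈ U) (hU1 : ∀ t, (1, t) ∈ U) :
    ∃ γ : ℝ → ℂ, ContDiff ℝ (⊤ : ℕ∞) γ ∧ (∀ t, γ t ∈ Disk) ∧
        (∀ t : ℝ, deriv γ t = XH H (t + τ₀) (γ t)) ∧
      ∀ m : ℕ, ∀ p ∈ U, ∀ ε > 0, ∀ᶠ x in (atTop : Filter ℕ) ×ˢ 𝓝 p,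
        ‖iteratedFDeriv ℝ m (z x.1) x.2 - iteratedFDeriv ℝ m (fun q : ℝ × ℝ => γ q.2) x.2‖ ≤ ε := by
  have hX := XH_smooth hH
  -- all derivatives are locally bounded
  have hbdd : ∀ m, ∀ p ∈ U, ∃ C, ∀ᶠ x in (atTop : Filter ℕ) ×ˢ 𝓝 p,
      ‖iteratedFDeriv ℝ m (z x.1) x.2‖ ≤ C := by
    intro m p hp
    refine all_deriv_bdd m (ContinuousLinearMap.mul ℝ ℂ I) (fun x => ?_)
      (fun q => I * XH H q.1 q.2) (contDiff_const.mul hX) τ hτ z p ?_ ?_ ⟨1, ?_⟩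
    · simp only [ContinuousLinearMap.mul_apply']
      rw [← mul_assoc, I_mul_I, neg_one_mul]
    · filter_upwards [hUS p hp] with x hx using hsm _ _ hx
    · filter_upwards [hUS p hp] with x hx
      have := hfl _ _ hx
      simp only [ContinuousLinearMap.mul_apply']
      linear_combination this
    · filter_upwards [hUS p hp] with x hx
      have := hdk _ _ hx
      rwa [Disk, mem_closedBall_zero_iff] at this
  have hds : ∀ p ∈ U, ∀ ε > 0, ∀ᶠ x in (atTop : Filter ℕ) ×ˢ 𝓝 p,
      ‖fderiv ℝ (z x.1) x.2 (1, 0)‖ ≤ ε := fun p hp =>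
    ds_small H hNp z hper hsm hE p (hUS p hp) (hbdd 2 p hp)
  have hS1 : ∀ j, S j < 1 := fun j => (hS0 j).trans_lt one_pos
  -- Lipschitz
  have hLip : ∀ T, ∃ K : NNReal, LipschitzOnWith K (fun p : ℝ × ℂ => XH H p.1 p.2)
      (Icc (-T) (T+1) ×ˢ Disk) := fun T =>
    (hX.contDiffOn).exists_lipschitzOnWith (by simp) ((convex_Icc _ _).prod (convex_closedBall _ _))
      (isCompact_Icc.prod (isCompact_closedBall _ _))
  obtain ⟨γ, hγD, hγ', hγu⟩ := gron_main (fun t x => XH H (t + τ₀) x) (fun T => by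
      obtain ⟨K, hK⟩ := hLip T
      refine ⟨K, fun t ht => LipschitzOnWith.of_dist_le_mul fun x hx y hy => ?_⟩
      have hm : t + τ₀ ∈ Icc (-T) (T+1) := ⟨by linarith [ht.1, hτ₀.1], by linarith [ht.2, hτ₀.2]⟩
      have := hK.dist_le_mul (t + τ₀, x) ⟨hm, hx⟩ (t + τ₀, y) ⟨hm, hy⟩
      rwa [Prod.dist_eq, dist_self, max_eq_right dist_nonneg] at this)
    (fun j t => z j (1, t)) (fun j t => fderiv ℝ (z j) (1, t) (0, 1))
    (fun j t => by
      have h1 : HasFDerivAt (z j) (fderiv ℝ (z j) (1, t)) (1, t) :=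
        ((hsm j (1, t) (hS1 j)).differentiableAt (by simp)).hasFDerivAt
      exact h1.comp_hasDerivAt t ((hasDerivAt_const t (1:ℝ)).prodMk (hasDerivAt_id t)))
    (fun j t => hdk j (1, t) (hS1 j))
    (fun T ε hε => by
      obtain ⟨K, hK⟩ := hLip T
      have h1 := unif_of_loc (P := fun n q => ‖fderiv ℝ (z n) q (1, 0)‖ ≤ ε / 2)
        (K := ({1} : Set ℝ) ×ˢ Icc (-T) T) (isCompact_singleton.prod isCompact_Icc)
        (fun p hp => hds p (by
          obtain ⟨a, b⟩ := p
          have : a = 1 := hp.1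
          subst this
          exact hU1 b) _ (by positivity))
      have h2 := Metric.tendsto_nhds.1 hτl (ε / (2 * (K + 1))) (by positivity)
      filter_upwards [h1, h2] with j h1 h2 t ht
      have h3 := h1 (1, t) ⟨rfl, ht⟩
      have h4 := hfl j (1, t) (hS1 j)
      have h5 : ‖fderiv ℝ (z j) (1, t) (0, 1) - XH H (t + τ j) (z j (1, t))‖ ≤ ε / 2 := by
        have e : fderiv ℝ (z j) (1, t) (0, 1) - XH H (t + τ j) (z j (1, t)) =
          I * fderiv ℝ (z j) (1, t) (1, 0) := by
          linear_combination (-I) * h4 + (fderiv ℝ (z j) (1, t) (0, 1) - XH H (t + τ j) (z j (1, t))) * I_mul_I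
        rw [e, norm_mul, norm_I, one_mul]
        exact h3
      have h6 := hK.dist_le_mul (t + τ j, z j (1, t))
        ⟨⟨by linarith [ht.1, (hτ j).1], by linarith [ht.2, (hτ j).2]⟩, hdk j (1, t) (hS1 j)⟩
        (t + τ₀, z j (1, t))
        ⟨⟨by linarith [ht.1, hτ₀.1], by linarith [ht.2, hτ₀.2]⟩, hdk j (1, t) (hS1 j)⟩
      rw [Prod.dist_eq, dist_self, max_eq_left dist_nonneg] at h6
      simp only [dist_add_left] at h6
      rw [lt_div_iff₀ (by positivity)] at h2
      have h7 : 0 ≤ dist (τ j) τ₀ := dist_nonneg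
      have h8 := dist_triangle (fderiv ℝ (z j) (1, t) (0, 1)) (XH H (t + τ j) (z j (1, t)))
        (XH H (t + τ₀) (z j (1, t)))
      rw [dist_eq_norm, dist_eq_norm] at h8
      nlinarith)
    hc
  have hγs : ContDiff ℝ (⊤ : ℕ∞) γ :=
    ode_smooth (fun p => XH H (p.1 + τ₀) p.2)
      (hX.comp ((contDiff_fst.add contDiff_const).prodMk contDiff_snd)) γ hγ'
  have hγs2 : ContDiff ℝ (⊤ : ℕ∞) (fun q : ℝ × ℝ => γ q.2) := hγs.comp contDiff_snd
  refine ⟨γ, hγs, hγD, fun t => (hγ' t).deriv, ?_⟩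
  -- locally uniform convergence
  have hconv : ∀ p ∈ U, ∀ ε > 0, ∀ᶠ x in (atTop : Filter ℕ) ×ˢ 𝓝 p,
      ‖z x.1 x.2 - γ x.2.2‖ ≤ ε := by
    rintro ⟨s0, t0⟩ hp ε hε
    obtain ⟨R, hR, hRU⟩ := Metric.nhds_basis_closedBall.mem_iff.1 (hU.mem_nhds hp)
    set a := min (s0 - R) 1 with ha
    set b := max (s0 + R) 1 with hb
    have hab : a < b := lt_of_le_of_lt (min_le_left _ _) (lt_of_lt_of_le (by linarith) (le_max_left _ _))
    have ha1 : a ≤ 1 := min_le_right _ _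
    have hb1 : 1 ≤ b := le_max_right _ _
    have ha2 : a ≤ s0 - R := min_le_left _ _
    have hb2 : s0 + R ≤ b := le_max_left _ _
    have hKU : Icc a b ×ˢ Icc (t0 - R) (t0 + R) ⊆ U := by
      rintro ⟨s, t⟩ ⟨h1, h2⟩
      simp only at h1 h2
      rcases le_total (s0 - R) 1 with h | h
      · rw [min_eq_left h] at ha
        refine hUup (s0 - R, t) (hRU ?_) s (by simp only; linarith [h1.1])
        rw [Metric.mem_closedBall, Prod.dist_eq, max_le_iff, Real.dist_eq, Real.dist_eq]
        simp only [abs_le]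
        refine ⟨⟨by linarith, by linarith⟩, by linarith [h2.1], by linarith [h2.2]⟩
      · rw [min_eq_right h] at ha
        exact hUup (1, t) (hU1 t) s (by simp only; linarith [h1.1])
    set δ := ε / (2 * (b - a)) with hδ
    have hba : 0 < b - a := by linarith
    have hδ0 : 0 < δ := by positivity
    have h1 := unif_of_loc (P := fun n q => S n < q.1 ∧ ‖fderiv ℝ (z n) q (1, 0)‖ ≤ δ)
      (isCompact_Icc.prod isCompact_Icc) (fun p hp => (hUS p (hKU hp)).and (hds p (hKU hp) _ hδ0))
    have h2 := Metric.tendstoUniformlyOn_iff.1 (hγu (|t0| + R)) (ε / 2) (by positivity)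
    obtain ⟨N, hN⟩ := eventually_atTop.1 (h1.and h2)
    refine (ev_prod_iff (P := fun n q => ‖z n q - γ q.2‖ ≤ ε)).2 ⟨N, R, hR, fun n hn q hq => ?_⟩
    obtain ⟨h3, h4⟩ := hN n hn
    obtain ⟨s, t⟩ := q
    rw [Metric.mem_closedBall, Prod.dist_eq, max_le_iff, Real.dist_eq, Real.dist_eq] at hq
    simp only [abs_le] at hq
    obtain ⟨⟨h5, h6⟩, h7, h8⟩ := hq
    have ht : t ∈ Icc (t0 - R) (t0 + R) := ⟨by linarith, by linarith⟩
    have hs : s ∈ Icc a b := ⟨by linarith, by linarith⟩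
    have h9 := h4 t ⟨by linarith [neg_abs_le t0], by linarith [le_abs_self t0]⟩
    have h10 : ‖z n (s, t) - z n (1, t)‖ ≤ δ * ‖s - 1‖ := by
      refine (convex_Icc a b).norm_image_sub_le_of_norm_hasDerivWithin_le
        (f := fun s => z n (s, t)) (f' := fun s => fderiv ℝ (z n) (s, t) (1, 0)) (fun y hy => ?_)
        (fun y hy => (h3 (y, t) ⟨hy, ht⟩).2) ⟨ha1, hb1⟩ hs
      have h1 : HasFDerivAt (z n) (fderiv ℝ (z n) (y, t)) (y, t) :=
        ((hsm n (y, t) (h3 (y, t) ⟨hy, ht⟩).1).differentiableAt (by simp)).hasFDerivAt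
      exact (h1.comp_hasDerivAt y ((hasDerivAt_id y).prodMk (hasDerivAt_const y t))).hasDerivWithinAt
    have h11 : ‖s - 1‖ ≤ b - a := by
      rw [Real.norm_eq_abs, abs_le]
      constructor <;> linarith [hs.1, hs.2]
    have h12 : δ * ‖s - 1‖ ≤ ε / 2 := by
      calc δ * ‖s - 1‖ ≤ δ * (b - a) := by gcongr
        _ = ε / 2 := by rw [hδ]; field_simp
    rw [dist_comm, dist_eq_norm] at h9
    have h13 := norm_add_le (z n (s, t) - z n (1, t)) (z n (1, t) - γ t)
    rw [sub_add_sub_cancel] at h13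
    simp only
    linarith
  -- Landau
  intro m
  have hsub : ∀ m, ∀ p ∈ U, ∀ᶠ x in (atTop : Filter ℕ) ×ˢ 𝓝 p,
      iteratedFDeriv ℝ m (z x.1 - fun q : ℝ × ℝ => γ q.2) x.2 =
      iteratedFDeriv ℝ m (z x.1) x.2 - iteratedFDeriv ℝ m (fun q : ℝ × ℝ => γ q.2) x.2 := by
    intro m p hp
    filter_upwards [hUS p hp] with x hx
    exact iteratedFDeriv_sub_apply ((hsm _ _ hx).of_le (by exact_mod_cast le_top))
      (hγs2.contDiffAt.of_le (by exact_mod_cast le_top))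
  have hmain := landau_all hU (fun j => z j - fun q : ℝ × ℝ => γ q.2) (fun p hp => by
      filter_upwards [hUS p hp] with x hx
      exact (hsm _ _ hx).sub hγs2.contDiffAt)
    (fun m p hp => by
      obtain ⟨C, hC⟩ := hbdd m p hp
      have hcont : Continuous (iteratedFDeriv ℝ m (fun q : ℝ × ℝ => γ q.2)) :=
        hγs2.continuous_iteratedFDeriv (by exact_mod_cast le_top)
      have h1 : ∀ᶠ q in 𝓝 p, ‖iteratedFDeriv ℝ m (fun q : ℝ × ℝ => γ q.2) q‖ <
          ‖iteratedFDeriv ℝ m (fun q : ℝ × ℝ => γ q.2) p‖ + 1 :=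
        (hcont.norm.tendsto p).eventually_lt_const (by linarith)
      refine ⟨C + (‖iteratedFDeriv ℝ m (fun q : ℝ × ℝ => γ q.2) p‖ + 1), ?_⟩
      filter_upwards [hC, hsub m p hp, h1.prod_inr (atTop : Filter ℕ)] with x h1 h2 h3
      rw [h2]
      exact (norm_sub_le _ _).trans (add_le_add h1 h3.le))
    hconv m
  intro p hp ε hε
  filter_upwards [hmain p hp ε hε, hsub m p hp] with x h1 h2
  rwa [← h2]
end core

/-- **Compactness.**  If `z_n : [S_n,∞) × ℝ → D` are `n`-periodic solutions of the
Floer equation with unit-circle boundary values and Floer energies tending to zero,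
then a subsequence converges in `C^∞_loc` on the interior of the limit domain to a
trajectory `(s,t) ↦ γ(t)` of the Hamiltonian vector field. -/
theorem compactness_of_low_energy_sequences
    (H : ℝ → ℂ → ℝ) (hH : IsAdmissible H)
    (S : ℕ → ℝ) (τ : ℕ → ℝ) (z : ℕ → ℝ × ℝ → ℂ)
    (hS : ∀ n, 1 ≤ n → S n ≤ 0)
    (hτ : ∀ n, 1 ≤ n → τ n ∈ Set.Ico (0:ℝ) 1)
    (hz_smooth : ∀ n, 1 ≤ n → ContDiffOn ℝ (⊤ : ℕ∞) (z n) (HalfPlaneFrom (S n)))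
    (hz_disk : ∀ n, 1 ≤ n → ∀ p ∈ HalfPlaneFrom (S n), z n p ∈ Disk)
    (hz_per : ∀ n, 1 ≤ n → ∀ s t : ℝ, S n ≤ s → z n (s, t + n) = z n (s, t))
    (hfloer : ∀ n, 1 ≤ n → ∀ p ∈ HalfPlaneFrom (S n),
      pds (HalfPlaneFrom (S n)) (z n) p +
        Complex.I * (pdt (HalfPlaneFrom (S n)) (z n) p - XH H (p.2 + τ n) (z n p)) = 0)
    (hbdry : ∀ n, 1 ≤ n → ∀ t : ℝ, ‖z n (S n, t)‖ = 1)
    (hE : Tendsto (fun n => floerEnergyFrom H (S n) n (τ n) (z n)) atTop (nhds 0)) :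
    ∃ ns : ℕ → ℕ, StrictMono ns ∧ (∀ j, 1 ≤ ns j) ∧
      ∃ τ₀ ∈ Set.Icc (0:ℝ) 1, ∃ γ : ℝ → ℂ,
        ContDiff ℝ (⊤ : ℕ∞) γ ∧ (∀ t, γ t ∈ Disk) ∧
        (∀ t : ℝ, deriv γ t = XH H (t + τ₀) (γ t)) ∧
        Tendsto (fun j => τ (ns j)) atTop (nhds τ₀) ∧
        ((∃ Sl : ℝ, Sl ≤ 0 ∧ Tendsto (fun j => S (ns j)) atTop (nhds Sl) ∧
            CinftyLocConv (Set.Ioi Sl ×ˢ Set.univ) S ns z γ) ∨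
         (Tendsto (fun j => S (ns j)) atTop atBot ∧
            CinftyLocConv Set.univ S ns z γ)) := by
  have hcpt : IsCompact ((univ : Set EReal) ×ˢ (Icc (0:ℝ) 1 ×ˢ (Metric.closedBall (0:ℂ) 1))) :=
    isCompact_univ.prod (isCompact_Icc.prod (isCompact_closedBall _ _))
  have hk : ∀ k : ℕ, 1 ≤ k + 1 := fun k => Nat.le_add_left 1 k
  have hmem1 : ∀ k, 1 ≤ k → ((1, 0) : ℝ × ℝ) ∈ HalfPlaneFrom (S k) := fun k hk =>
    ⟨(hS k hk).trans zero_le_one, mem_univ _⟩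
  obtain ⟨⟨a, τ₀, c⟩, hlim, φ, hφ, hconv⟩ := hcpt.tendsto_subseq
    (x := fun k : ℕ => (((S (k+1) : ℝ) : EReal), τ (k+1), z (k+1) (1, 0)))
    (fun k => ⟨mem_univ _, Ico_subset_Icc_self (hτ _ (hk k)), hz_disk _ (hk k) _ (hmem1 _ (hk k))⟩)
  obtain ⟨-, hτ₀, -⟩ := hlim
  simp only at hτ₀
  rw [nhds_prod_eq, nhds_prod_eq] at hconv
  have hSl : Tendsto (fun j => ((S (φ j + 1) : ℝ) : EReal)) atTop (𝓝 a) := tendsto_fst.comp hconv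
  have hτl : Tendsto (fun j => τ (φ j + 1)) atTop (𝓝 τ₀) :=
    (tendsto_fst.comp tendsto_snd).comp hconv
  have hcl : Tendsto (fun j => z (φ j + 1) (1, 0)) atTop (𝓝 c) :=
    (tendsto_snd.comp tendsto_snd).comp hconv
  have hns : StrictMono (fun j => φ j + 1) := fun i j hij => Nat.add_lt_add_right (hφ hij) 1
  have ha0 : a ≤ 0 := le_of_tendsto hSl (Eventually.of_forall fun j => by
    exact_mod_cast hS _ (hk _))
  have hcoe : Continuous (fun p : ℝ × ℝ => ((p.1 : ℝ) : EReal)) :=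
    continuous_coe_real_ereal.comp continuous_fst
  set U : Set (ℝ × ℝ) := {p | a < ((p.1 : ℝ) : EReal)} with hUdef
  have hU : IsOpen U := isOpen_lt continuous_const hcoe
  have hUS : ∀ p ∈ U, ∀ᶠ x in (atTop : Filter ℕ) ×ˢ 𝓝 p, S (φ x.1 + 1) < x.2.1 := by
    intro p hp
    have h1 : Tendsto (fun x : ℕ × (ℝ × ℝ) => ((S (φ x.1 + 1) : ℝ) : EReal)) (atTop ×ˢ 𝓝 p) (𝓝 a) :=
      hSl.comp tendsto_fst
    have h2 : Tendsto (fun x : ℕ × (ℝ × ℝ) => ((x.2.1 : ℝ) : EReal)) ((atTop : Filter ℕ) ×ˢ 𝓝 p)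
        (𝓝 ((p.1 : ℝ) : EReal)) := (hcoe.tendsto p).comp tendsto_snd
    filter_upwards [h1.eventually_lt h2 hp] with x hx
    exact_mod_cast hx
  have hnear : ∀ j p, S (φ j + 1) < p.1 → p ∈ HalfPlaneFrom (S (φ j + 1)) := fun j p h =>
    ⟨h.le, mem_univ _⟩
  obtain ⟨γ, hγs, hγD, hγ', hγc⟩ := core H hH (S := fun j => S (φ j + 1)) (τ := fun j => τ (φ j + 1))
    (Np := fun j => φ j + 1) (fun j => hk _) (fun j => z (φ j + 1)) (fun j => hS _ (hk _))
    (fun j => Ico_subset_Icc_self (hτ _ (hk _))) (fun j => hz_per _ (hk _))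
    (fun j p h => (hz_smooth _ (hk _)).contDiffAt (halfPlane_nhds h))
    (fun j p h => hz_disk _ (hk _) p (hnear j p h))
    (fun j p h => by
      have := hfloer _ (hk (φ j)) p (hnear j p h)
      rwa [pds, pdt, fderivWithin_of_mem_nhds (halfPlane_nhds h)] at this)
    (hE.comp hns.tendsto_atTop) hτ₀ hτl hcl.cauchySeq hU hUS
    (fun p hp s hs => lt_of_lt_of_le (show a < ((p.1 : ℝ) : EReal) from hp)
      (EReal.coe_le_coe_iff.2 hs))
    (fun t => lt_of_le_of_lt ha0 (by
      change (0 : EReal) < ((1 : ℝ) : EReal)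
      exact_mod_cast (one_pos : (0:ℝ) < 1)))
  have hfin : CinftyLocConv U S (fun j => φ j + 1) z γ := by
    intro K hK hKU m
    rw [Metric.tendstoUniformlyOn_iff]
    intro ε hε
    have h1 := unif_of_loc (P := fun n q => S (φ n + 1) < q.1 ∧
      ‖iteratedFDeriv ℝ m (z (φ n + 1)) q - iteratedFDeriv ℝ m (fun q : ℝ × ℝ => γ q.2) q‖ ≤ ε / 2)
      hK (fun p hp => (hUS p (hKU hp)).and (hγc m p (hKU hp) _ (by positivity)))
    filter_upwards [h1] with j hj p hp
    obtain ⟨h2, h3⟩ := hj p hp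
    have e : iteratedFDerivWithin ℝ m (z (φ j + 1)) (HalfPlaneFrom (S (φ j + 1))) p =
        iteratedFDeriv ℝ m (z (φ j + 1)) p := by
      rw [← iteratedFDerivWithin_univ]
      apply iteratedFDerivWithin_congr_set
      exact eventuallyEq_univ.2 (halfPlane_nhds h2)
    rw [e, dist_comm, dist_eq_norm]
    linarith
  refine ⟨fun j => φ j + 1, hns, fun j => hk _, τ₀, hτ₀, γ, hγs, hγD, hγ', hτl, ?_⟩
  induction a with
  | bot =>
    right
    refine ⟨?_, ?_⟩
    · exact EReal.tendsto_coe_nhds_bot_iff.1 hSl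
    · have : U = univ := by
        rw [hUdef]
        ext p
        simp
      rwa [this] at hfin
  | top => simp at ha0
  | coe x =>
    left
    refine ⟨x, by exact_mod_cast ha0, EReal.tendsto_coe.1 hSl, ?_⟩
    have : U = Ioi x ×ˢ univ := by
      rw [hUdef]
      ext p
      simp
    rwa [this] at hfin
end

section
/- Let φ : D → D be an irrational pseudo-rotation. Let f : ℝ → ℝ be any continuous lift of the boundary restriction φ|_{∂D}, i.e. f is continuous, f(x+1) = f(x)+1, and φ(e^{2πix}) = e^{2πi f(x)} for all x ∈ ℝ, and let α := lim_{n→∞} (fⁿ(x) − x)/n be its translation number (which exists and is independent of x). Then the eigenvalues over ℂ of the linearization Dφ(0) are exactly e^{2πiα} and e^{−2πiα}. -/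
open Complex Metric Set Filter Polynomial

/-- A `C^∞`-smooth diffeomorphism of the closed unit disk: a bijection of `Disk`
which is `C^∞` up to the boundary together with its inverse. -/
structure SmoothDiskDiffeo where
  toFun : ℂ → ℂ
  invFun : ℂ → ℂ
  mapsTo : Set.MapsTo toFun Disk Disk
  mapsTo_inv : Set.MapsTo invFun Disk Disk
  left_inv : ∀ z ∈ Disk, invFun (toFun z) = z
  right_inv : ∀ z ∈ Disk, toFun (invFun z) = z
  smooth : ContDiffOn ℝ (⊤ : ℕ∞) toFun Disk
  smooth_inv : ContDiffOn ℝ (⊤ : ℕ∞) invFun Disk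

/-- The matrix of the derivative `Dφ(0)` in the real basis `(1, i)` of `ℂ`. -/
noncomputable def derivMatrix (φ : SmoothDiskDiffeo) : Matrix (Fin 2) (Fin 2) ℝ :=
  LinearMap.toMatrix Complex.basisOneI Complex.basisOneI
    (fderivWithin ℝ φ.toFun Disk 0 : ℂ →ₗ[ℝ] ℂ)

namespace PR

/-- An integer valued continuous function on a connected space is constant. -/
lemma int_const {X : Type*} [TopologicalSpace X] [PreconnectedSpace X] {g : X → ℝ}
    (hg : Continuous g) (h : ∀ x, ∃ n : ℤ, g x = n) (x y : X) : g x = g y := by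
  have hr : IsPreconnected (Set.range g) := isPreconnected_range hg
  by_contra hne
  rcases lt_or_gt_of_ne hne with hlt | hlt
  all_goals
    obtain ⟨n, hn⟩ := h x
    obtain ⟨m, hm⟩ := h y
    rw [hn, hm] at hlt
    have hlt' := Int.cast_lt.mp hlt
  · have : ((n : ℝ) + 1/2) ∈ Set.range g := by
      apply hr.ordConnected.out ⟨x, rfl⟩ ⟨y, rfl⟩
      rw [hn, hm]
      have : (n : ℝ) + 1 ≤ m := by exact_mod_cast hlt'
      constructor <;> linarith
    obtain ⟨z, hz⟩ := this
    obtain ⟨k, hk⟩ := h z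
    rw [hk] at hz
    have : (2 * k : ℝ) = 2 * n + 1 := by linarith
    have : 2 * k = 2 * n + 1 := by exact_mod_cast this
    omega
  · have : ((m : ℝ) + 1/2) ∈ Set.range g := by
      apply hr.ordConnected.out ⟨y, rfl⟩ ⟨x, rfl⟩
      rw [hn, hm]
      have : (m : ℝ) + 1 ≤ n := by exact_mod_cast hlt'
      constructor <;> linarith
    obtain ⟨z, hz⟩ := this
    obtain ⟨k, hk⟩ := h z
    rw [hk] at hz
    have : (2 * k : ℝ) = 2 * m + 1 := by linarith
    have : 2 * k = 2 * m + 1 := by exact_mod_cast this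
    omega

/-- Lifting through the exponential. -/
lemma exists_log {X : Type*} [TopologicalSpace X] [SimplyConnectedSpace X]
    [LocallyPathConnectedSpace X] {V : X → ℂ} (hV : Continuous V) (h0 : ∀ x, V x ≠ 0) :
    ∃ L : X → ℂ, Continuous L ∧ ∀ x, Complex.exp (L x) = V x := by
  obtain ⟨a⟩ : Nonempty X := inferInstance
  obtain ⟨L, ⟨_, hL⟩, _⟩ := isCoveringMapOn_exp.existsUnique_continuousMap_lifts
    (f := ⟨V, hV⟩) (a₀ := a) (e₀ := Complex.log (V a)) (Complex.exp_log (h0 a)) (by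
      intro x; simp [h0 x])
  refine ⟨L, L.continuous, fun x => ?_⟩
  exact congrFun hL x

/-- Two continuous logarithms differ by a constant. -/
lemma log_const {X : Type*} [TopologicalSpace X] [PreconnectedSpace X] {L M : X → ℂ}
    (hL : Continuous L) (hM : Continuous M) (h : ∀ x, Complex.exp (L x) = Complex.exp (M x))
    (x y : X) : (L x).im - (L y).im = (M x).im - (M y).im := by
  have := int_const (g := fun x => ((L x).im - (M x).im) / (2 * Real.pi)) (by fun_prop) (by
    intro x
    obtain ⟨n, hn⟩ := Complex.exp_eq_exp_iff_exists_int.mp (h x)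
    refine ⟨n, ?_⟩
    have := congrArg Complex.im hn
    simp at this
    rw [this]
    field_simp
    ring) x y
  have hp := Real.pi_pos
  field_simp at this
  linarith

end PR

namespace PR

/-- The fundamental domain. -/
def Q : Set ℂ := {z | 0 ≤ z.re ∧ z.re < 1}

/-- Lifted area preserving maps of the annulus, extended to the plane. -/
structure StripMap (F : ℂ ≃ₜ ℂ) : Prop where
  per : ∀ z, F (z + 1) = F z + 1
  low : ∀ z : ℂ, z.im ≤ 0 → F z - z = F (z.re : ℂ) - (z.re : ℂ)
  low_im : ∀ z : ℂ, z.im ≤ 0 → (F z).im = z.im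
  high : ∀ z : ℂ, 1 ≤ z.im → F z - z = F ((z.re : ℂ) + I) - ((z.re : ℂ) + I)
  high_im : ∀ z : ℂ, 1 ≤ z.im → (F z).im = z.im
  mid : ∀ z : ℂ, 0 < z.im → z.im < 1 → 0 < (F z).im ∧ (F z).im < 1
  area : ∀ S : Set ℂ, MeasurableSet S → (∀ z, z + 1 ∈ S ↔ z ∈ S) →
    (∀ z ∈ S, 0 < z.im ∧ z.im < 1) →
    MeasureTheory.volume (F '' S ∩ Q) = MeasureTheory.volume (S ∩ Q)

namespace StripMap
variable {F : ℂ ≃ₜ ℂ}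

lemma im_ge (hF : StripMap F) {b : ℝ} (hb : b ≤ 0) {z : ℂ} (hz : b ≤ z.im) : b ≤ (F z).im := by
  rcases le_or_gt z.im 0 with h | h
  · rw [hF.low_im z h]; exact hz
  rcases le_or_gt 1 z.im with h1 | h1
  · rw [hF.high_im z h1]; exact hz
  · linarith [(hF.mid z h h1).1]

lemma im_gt (hF : StripMap F) {b : ℝ} (hb : b ≤ 0) {z : ℂ} (hz : b < z.im) : b < (F z).im := by
  rcases le_or_gt z.im 0 with h | h
  · rw [hF.low_im z h]; exact hz
  rcases le_or_gt 1 z.im with h1 | h1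
  · rw [hF.high_im z h1]; exact hz
  · linarith [(hF.mid z h h1).1]

lemma im_lt_one (hF : StripMap F) {z : ℂ} (hz : z.im < 1) : (F z).im < 1 := by
  rcases le_or_gt z.im 0 with h | h
  · rw [hF.low_im z h]; exact hz
  · exact (hF.mid z h hz).2

lemma escape (hF : StripMap F) {ε : ℝ} (hε : 0 < ε) (hε1 : ε < 1) :
    ∃ w : ℂ, -ε < w.im ∧ w.im < 0 ∧ ∃ n : ℕ, 1 ≤ ((fun z => F z + ε * I)^[n] w).im := by
  set G : ℂ → ℂ := fun z => F z + ε * I with hG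
  have Gim : ∀ z, (G z).im = (F z).im + ε := by intro z; simp [hG]
  have Ginj : Function.Injective G := by
    intro a b h
    simpa [hG] using h
  by_contra! hcon
  set D : Set ℂ := {z | 0 < z.im ∧ z.im < ε} with hD
  have hDlt : ∀ z ∈ D, ∀ n, (G^[n] z).im < 1 := by
    intro z hz n
    have h1 : (F (F.symm (z - ε * I))).im = z.im - ε := by simp
    have h2 : (F.symm (z - ε * I)).im = z.im - ε := by
      rcases le_or_gt (F.symm (z - ε * I)).im 0 with h | h
      · rw [← hF.low_im _ h, h1]
      · have := hF.im_gt le_rfl h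
        rw [h1] at this
        linarith [hz.2]
    have := hcon (F.symm (z - ε * I)) (by rw [h2]; linarith [hz.1]) (by rw [h2]; linarith [hz.2])
      (n + 1)
    rw [Function.iterate_succ_apply] at this
    have e : G (F.symm (z - ε * I)) = z := by simp [hG]
    rwa [e] at this
  have Gpos : ∀ z : ℂ, 0 < z.im → ε < (G z).im := by
    intro z hz
    rw [Gim]; linarith [hF.im_gt le_rfl hz]
  have Gnpos : ∀ n, ∀ z : ℂ, 0 < z.im → 0 < (G^[n] z).im := by
    intro n
    induction n with
    | zero => intro z hz; simpa using hz
    | succ n ih =>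
      intro z hz
      rw [Function.iterate_succ_apply']
      linarith [Gpos _ (ih z hz)]
  set A : ℕ → Set ℂ := fun n => G^[n] '' D with hA
  have Asucc : ∀ n, A (n + 1) = (fun z => z + ε * I) '' (F '' A n) := by
    intro n
    change G^[n + 1] '' D = _
    rw [Function.iterate_succ', image_comp, ← image_comp (fun z => z + ε * I) F]
    rfl
  have Aim : ∀ n, ∀ z ∈ A n, 0 < z.im ∧ z.im < 1 := by
    rintro n z ⟨w, hw, rfl⟩
    exact ⟨Gnpos n w hw.1, hDlt w hw n⟩
  have Ameas : ∀ n, IsOpen (A n) := by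
    intro n
    induction n with
    | zero =>
      simp only [hA, Function.iterate_zero, image_id]
      exact (isOpen_lt continuous_const continuous_im).inter
        (isOpen_lt continuous_im continuous_const)
    | succ n ih =>
      rw [Asucc]
      exact (Homeomorph.addRight ((ε : ℂ) * I)).isOpenMap _ (F.isOpenMap _ ih)
  have Gper : ∀ n z, G^[n] (z + 1) = G^[n] z + 1 := by
    intro n
    induction n with
    | zero => intro z; rfl
    | succ n ih =>
      intro z
      rw [Function.iterate_succ_apply', Function.iterate_succ_apply', ih]
      simp only [hG, hF.per]; ring
  have Aper : ∀ n z, z + 1 ∈ A n ↔ z ∈ A n := by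
    intro n z
    constructor
    · rintro ⟨w, hw, h⟩
      refine ⟨w - 1, by simpa [hD] using hw, ?_⟩
      have := Gper n (w - 1)
      rw [sub_add_cancel, h] at this
      exact (add_right_cancel this).symm
    · rintro ⟨w, hw, h⟩
      exact ⟨w + 1, by simpa [hD] using hw, by rw [Gper, h]⟩
  have Avol : ∀ n, MeasureTheory.volume (A n ∩ Q) = MeasureTheory.volume (D ∩ Q) := by
    intro n
    induction n with
    | zero => simp [hA]
    | succ n ih =>
      rw [Asucc, ← ih, ← hF.area (A n) (Ameas n).measurableSet (Aper n) (Aim n)]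
      have : (fun z => z + ε * I) '' (F '' A n) ∩ Q =
          (fun z => z + ε * I) '' (F '' A n ∩ Q) := by
        have hQ : (Q : Set ℂ) = (fun z => z + ε * I) '' Q := by
          ext z
          constructor
          · intro hz
            exact ⟨z - ε * I, by simpa [Q] using hz, by simp⟩
          · rintro ⟨w, hw, rfl⟩
            simpa [Q] using hw
        rw [image_inter (add_left_injective _), ← hQ]
      rw [this, image_add_right, MeasureTheory.measure_preimage_add_right]
  have Adisj : Pairwise (Function.onFun Disjoint fun n => A n ∩ Q) := by
    have key : ∀ j k, j < k → Disjoint (A j) (A k) := by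
      intro j k hjk
      rw [Set.disjoint_left]
      rintro z ⟨a, ha, rfl⟩ ⟨b, hb, h⟩
      obtain ⟨m, rfl⟩ := Nat.exists_eq_add_of_lt hjk
      rw [show j + m + 1 = j + (m + 1) by ring, Function.iterate_add_apply] at h
      have := Ginj.iterate j h
      rw [Function.iterate_succ_apply'] at this
      have h2 := Gpos _ (Gnpos m b hb.1)
      rw [this] at h2
      linarith [ha.2]
    intro j k hjk
    rcases lt_or_gt_of_ne hjk with h | h
    · exact (key j k h).mono inter_subset_left inter_subset_left
    · exact (key k j h).symm.mono inter_subset_left inter_subset_left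
  have Qmeas : MeasurableSet Q :=
    (measurableSet_le measurable_const measurable_re).inter
      (measurableSet_lt measurable_re measurable_const)
  have hU := MeasureTheory.measure_iUnion (μ := MeasureTheory.volume) Adisj
    (fun n => (Ameas n).measurableSet.inter Qmeas)
  simp only [Avol] at hU
  have hpos : MeasureTheory.volume (D ∩ Q) ≠ 0 := by
    have hop : IsOpen {z : ℂ | (0 < z.im ∧ z.im < ε) ∧ (0 < z.re ∧ z.re < 1)} :=
      ((isOpen_lt continuous_const continuous_im).inter
        (isOpen_lt continuous_im continuous_const)).inter
      ((isOpen_lt continuous_const continuous_re).inter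
        (isOpen_lt continuous_re continuous_const))
    have := hop.measure_pos MeasureTheory.volume ⟨⟨1/2, ε/2⟩, by
      simp only [mem_ofPred_eq]
      refine ⟨⟨?_, ?_⟩, ?_, ?_⟩ <;> linarith⟩
    refine (this.trans_le (MeasureTheory.measure_mono ?_)).ne'
    rintro z ⟨h1, h2⟩
    exact ⟨h1, h2.1.le, h2.2⟩
  rw [ENNReal.tsum_const_eq_top_of_ne_zero hpos] at hU
  have hsub : (⋃ n, A n ∩ Q) ⊆ (Icc (0:ℝ) 1 ×ℂ Icc (0:ℝ) 1) := by
    intro z hz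
    obtain ⟨n, hn, hq⟩ := mem_iUnion.mp hz
    rw [mem_reProdIm]
    exact ⟨⟨hq.1, hq.2.le⟩, (Aim n z hn).1.le, (Aim n z hn).2.le⟩
  have hfin := (MeasureTheory.measure_mono (μ := MeasureTheory.volume) hsub).trans_lt
    ((isCompact_Icc.reProdIm isCompact_Icc).measure_lt_top)
  rw [hU] at hfin
  exact lt_irrefl _ hfin

end StripMap
end PR

namespace PR

lemma arg_aux {v : ℂ} (h0 : v ≠ 0) (him : v.im = 0) {ε : ℝ} (hε : 0 < ε) :
    (1 + ε * I / v).arg = (v + ε * I).arg - v.arg := by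
  obtain ⟨r, rfl⟩ : ∃ r : ℝ, v = r := ⟨v.re, by apply Complex.ext <;> simp [him]⟩
  have hr : r ≠ 0 := by exact_mod_cast h0
  rcases lt_or_gt_of_ne hr with h | h
  · have e : (r : ℂ) + ε * I = ((-r : ℝ) : ℂ) * (-(1 + ε * I / r)) := by
      push_cast; field_simp
    rw [e, Complex.arg_real_mul _ (by linarith), Complex.arg_ofReal_of_neg h,
      Complex.arg_neg_eq_arg_add_pi_of_im_neg]
    · ring
    · have : (1 + ε * I / r : ℂ).im = ε / r := by
        rw [mul_div_right_comm, ← Complex.ofReal_div]; simp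
      rw [this]
      exact div_neg_of_pos_of_neg hε h
  · have e : (r : ℂ) + ε * I = (r : ℂ) * (1 + ε * I / r) := by field_simp
    rw [e, Complex.arg_real_mul _ h, Complex.arg_ofReal_of_nonneg h.le, sub_zero]

lemma exists_curve {G : ℂ → ℂ} (hG : Continuous G) (w : ℂ) (n : ℕ) :
    ∃ γ : ℝ → ℂ, Continuous γ ∧ (∀ t ∈ Icc (0:ℝ) 1, γ t = w + t * (G w - w)) ∧
      ∀ t ∈ Icc (0:ℝ) n, γ (t + 1) = G (γ t) := by
  induction n with
  | zero =>
    refine ⟨fun t => w + t * (G w - w), by fun_prop, fun t _ => rfl, ?_⟩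
    intro t ht
    have : t = 0 := le_antisymm (by simpa using ht.2) ht.1
    subst this
    simp
  | succ n ih =>
    obtain ⟨γ, hc, h1, h2⟩ := ih
    refine ⟨fun t => if t ≤ n + 1 then γ t else G (γ (t - 1)), ?_, ?_, ?_⟩
    · apply Continuous.if_le hc (by fun_prop) continuous_id continuous_const
      intro t ht
      have ht' : t = n + 1 := ht
      subst ht'
      rw [h2 n ⟨by positivity, le_rfl⟩]
      simp
    · intro t ht
      have : t ≤ n + 1 := ht.2.trans (by have : (0:ℝ) ≤ n := by positivity
                                         linarith)
      simp only [this, if_true]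
      exact h1 t ht
    · intro t ht
      have htn : t ≤ n + 1 := by simpa using ht.2
      simp only [htn, if_true]
      by_cases h : t ≤ n
      · have : t + 1 ≤ (n:ℝ) + 1 := by linarith
        simp only [this, if_true]
        exact h2 t ⟨ht.1, h⟩
      · have : ¬ (t + 1 ≤ (n:ℝ) + 1) := by linarith
        simp only [this, if_false]
        congr 2
        ring

namespace StripMap
variable {F : ℂ ≃ₜ ℂ}

lemma per_int (hF : StripMap F) (z : ℂ) (n : ℤ) : F (z + n) = F z + n := by
  induction n using Int.induction_on with
  | zero => simp
  | succ n ih =>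
    push_cast at *
    rw [← add_assoc, hF.per, ih]; ring
  | pred n ih =>
    push_cast at *
    have := hF.per (z + (-n - 1))
    rw [show z + (-(n:ℂ) - 1) + 1 = z + -n by ring, ih] at this
    linear_combination -this

lemma exists_delta (hF : StripMap F) (hfix : ∀ z, F z ≠ z) :
    ∃ δ > 0, ∀ z, δ ≤ ‖F z - z‖ := by
  obtain ⟨z0, -, hz0⟩ := ((isCompact_Icc (a := (0:ℝ)) (b := 1)).reProdIm
    (isCompact_Icc (a := (0:ℝ)) (b := 1))).exists_isMinOn (f := fun z => ‖F z - z‖)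
    ⟨0, by simp [mem_reProdIm]⟩ (by have := F.continuous; fun_prop)
  refine ⟨‖F z0 - z0‖, norm_pos_iff.mpr (sub_ne_zero.mpr (hfix z0)), ?_⟩
  have key : ∀ z : ℂ, 0 ≤ z.im → z.im ≤ 1 → ‖F z0 - z0‖ ≤ ‖F z - z‖ := by
    intro z h0 h1
    have e : F z - z = F (z - ⌊z.re⌋) - (z - ⌊z.re⌋) := by
      have := hF.per_int (z - ⌊z.re⌋) ⌊z.re⌋
      rw [sub_add_cancel] at this
      rw [this]; ring
    rw [e]
    apply hz0
    rw [mem_reProdIm]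
    have a1 := Int.floor_le z.re
    have a2 := Int.lt_floor_add_one z.re
    constructor
    · simp only [sub_re, intCast_re, mem_Icc]
      constructor <;> linarith
    · simpa using ⟨h0, h1⟩
  intro z
  rcases le_or_gt z.im 0 with h | h
  · rw [hF.low z h]; exact key _ (by simp) (by simp)
  rcases le_or_gt 1 z.im with h1 | h1
  · rw [hF.high z h1]; exact key _ (by simp) (by simp)
  · exact key z h.le h1.le

lemma index (hF : StripMap F) (hfix : ∀ z, F z ≠ z) {Λ : ℂ → ℂ} (hΛ : Continuous Λ)
    (hexp : ∀ z, Complex.exp (Λ z) = F z - z) :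
    ∃ p q : ℂ, p.im ≤ 0 ∧ 1 ≤ q.im ∧
      (Λ q).im - (Λ p).im = (F q - q).arg - (F p - p).arg := by
  obtain ⟨δ, hδ, hδF⟩ := hF.exists_delta hfix
  obtain ⟨ε, hε, hε1, hεδ⟩ : ∃ ε : ℝ, 0 < ε ∧ ε < 1 ∧ ε < δ :=
    ⟨min 1 δ / 2, by positivity, by have := min_le_left 1 δ; linarith,
      by have := min_le_right 1 δ; linarith⟩
  obtain ⟨w, hw1, hw0, n, hn⟩ := hF.escape hε hε1
  set G : ℂ → ℂ := fun z => F z + ε * I with hG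
  have Gim : ∀ z, (G z).im = (F z).im + ε := by intro z; simp [hG]
  have Ginj : Function.Injective G := by
    intro a b h
    simpa [hG] using h
  have Fc := F.continuous
  have Gc : Continuous G := by fun_prop
  obtain ⟨γ, γc, γ1, γ2⟩ := exists_curve Gc w n
  have hwim : (G w - w).im = ε := by
    rw [sub_im, Gim, hF.low_im w hw0.le]; ring
  have γ1im : ∀ t ∈ Icc (0:ℝ) 1, (γ t).im = w.im + t * ε := by
    intro t ht
    rw [γ1 t ht, add_im, Complex.im_ofReal_mul, hwim]
  have γlow' : ∀ k : ℕ, ∀ t ∈ Icc (0:ℝ) k, t ≤ n + 1 → w.im ≤ (γ t).im := by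
    intro k
    induction k with
    | zero =>
      intro t ht _
      have : t = 0 := le_antisymm (by simpa using ht.2) ht.1
      subst this
      rw [γ1im 0 (by simp)]; simp
    | succ k ih =>
      intro t ht htn
      rcases le_or_gt t 1 with h | h
      · rw [γ1im t ⟨ht.1, h⟩]
        have := mul_nonneg ht.1 hε.le
        linarith
      · have ht2 : t ≤ k + 1 := by simpa using ht.2
        have e := γ2 (t - 1) ⟨by linarith, by linarith⟩
        rw [sub_add_cancel] at e
        rw [e, Gim]
        have := hF.im_ge hw0.le (ih (t - 1) ⟨by linarith, by linarith⟩ (by linarith))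
        linarith
  have γlow : ∀ t : ℝ, 0 ≤ t → t ≤ n + 1 → w.im ≤ (γ t).im := by
    intro t h0 h1
    exact γlow' (n + 1) t ⟨h0, by simpa using h1⟩ h1
  have γlow1 : ∀ t : ℝ, 1 ≤ t → t ≤ n + 1 → w.im + ε ≤ (γ t).im := by
    intro t h0 h1
    have e := γ2 (t - 1) ⟨by linarith, by linarith⟩
    rw [sub_add_cancel] at e
    rw [e, Gim]
    have := hF.im_ge hw0.le (γlow (t - 1) (by linarith) (by linarith))
    linarith
  have γinj' : ∀ k : ℕ, ∀ t s : ℝ, 0 ≤ t → t < k + 1 → t + 1 ≤ s → s ≤ n + 1 → γ s ≠ γ t := by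
    intro k
    induction k with
    | zero =>
      intro t s h0 h1 h2 h3 h
      have a := γlow1 s (by linarith) h3
      simp only [Nat.cast_zero, zero_add] at h1
      rw [h, γ1im t ⟨h0, h1.le⟩] at a
      nlinarith
    | succ k ih =>
      intro t s h0 h1 h2 h3 h
      push_cast at h1
      rcases lt_or_ge t 1 with h4 | h4
      · have a := γlow1 s (by linarith) h3
        rw [h, γ1im t ⟨h0, h4.le⟩] at a
        nlinarith
      · have e := γ2 (t - 1) ⟨by linarith, by linarith⟩
        have e' := γ2 (s - 1) ⟨by linarith, by linarith⟩
        rw [sub_add_cancel] at e e'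
        rw [e, e'] at h
        exact ih (t - 1) (s - 1) (by linarith) (by linarith) (by linarith) (by linarith) (Ginj h)
  have γinj : ∀ t s : ℝ, 0 ≤ t → t + 1 ≤ s → s ≤ n + 1 → γ s ≠ γ t := by
    intro t s h0 h1 h2
    exact γinj' n t s h0 (by linarith) h1 h2
  have γnat : ∀ k : ℕ, k ≤ n → γ k = G^[k] w := by
    intro k
    induction k with
    | zero => intro _; rw [Nat.cast_zero, γ1 0 (by simp)]; simp
    | succ k ih =>
      intro hk
      have hk' : (k : ℝ) ≤ n := by exact_mod_cast (Nat.le_of_succ_le hk)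
      rw [Nat.cast_succ, γ2 k ⟨by positivity, hk'⟩, ih (Nat.le_of_succ_le hk),
        Function.iterate_succ_apply']
  have hn0 : (0:ℝ) ≤ n := by positivity
  have hend : 1 + ε ≤ (γ (n + 1)).im := by
    rw [γ2 n ⟨hn0, le_rfl⟩, γnat n le_rfl, Gim, hF.high_im _ hn]
    linarith
  obtain ⟨T, hT, hTmax⟩ := (isCompact_Icc (a := (0:ℝ)) (b := n + 1)).exists_isMaxOn
    (f := fun t => (γ t).im) ⟨0, by simp; linarith⟩ (by fun_prop)
  have hTmax' : ∀ t : ℝ, 0 ≤ t → t ≤ n + 1 → (γ t).im ≤ (γ T).im := fun t h0 h1 => hTmax ⟨h0, h1⟩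
  have hT1 : 1 + ε ≤ (γ T).im := hend.trans (hTmax' _ (by linarith) le_rfl)
  have hT2 : 1 < T := by
    by_contra! h
    rw [γ1im T ⟨hT.1, h⟩] at hT1
    nlinarith
  obtain ⟨τ, hτ⟩ : ∃ τ : ℝ, T = 1 + τ := ⟨T - 1, by ring⟩
  have hτ0 : 0 < τ := by linarith
  have hTn : 1 + τ ≤ n + 1 := by rw [← hτ]; exact hT.2
  have hstep : ∀ t : ℝ, 0 ≤ t → t ≤ n → 1 ≤ (γ t).im → (γ (t + 1)).im = (γ t).im + ε := by
    intro t h0 h1 h2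
    rw [γ2 t ⟨h0, h1⟩, Gim, hF.high_im _ h2]
  have htop : ∀ t : ℝ, 0 ≤ t → t ≤ τ → (γ t).im < (γ T).im := by
    intro t h0 h1
    rcases lt_or_ge (γ t).im 1 with h | h
    · linarith
    · have a := hstep t h0 (by linarith) h
      have b := hTmax' (t + 1) (by linarith) (by linarith)
      linarith
  have hqim : 1 ≤ (γ τ).im := by
    by_contra! h
    have a := hF.im_lt_one h
    have e := γ2 τ ⟨hτ0.le, by linarith⟩
    rw [hτ, add_comm 1 τ, e, Gim] at hT1
    linarith
  -- the two parameter family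
  set pa : ℝ → ℝ := fun a => max 0 (min a τ) with hpa
  set pb : ℝ × ℝ → ℝ := fun x => max (pa x.1) (min x.2 τ) with hpb
  have pa0 : ∀ a, 0 ≤ pa a := fun a => le_max_left _ _
  have paτ : ∀ a, pa a ≤ τ := fun a => max_le hτ0.le (min_le_right _ _)
  have pbτ : ∀ x, pb x ≤ τ := fun x => max_le (paτ _) (min_le_right _ _)
  have pab : ∀ x, pa x.1 ≤ pb x := fun x => le_max_left _ _
  have pac : Continuous pa := by fun_prop
  have pbc : Continuous pb := by fun_prop
  have pa_0 : pa 0 = 0 := by simp [hpa, hτ0.le]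
  have pa_τ : pa τ = τ := by simp [hpa, hτ0.le]
  have pb_diag : ∀ a, pb (a, a) = pa a := by
    intro a
    simp only [hpb, hpa]
    rw [max_assoc, max_self]
  have pb_τ : ∀ a, pb (a, τ) = τ := by
    intro a
    simp only [hpb, min_self]
    exact max_eq_right (paτ a)
  set V : ℝ × ℝ → ℂ := fun x => γ (1 + pb x) - γ (pa x.1) with hV
  have Vc : Continuous V := by fun_prop
  have V0 : ∀ x, V x ≠ 0 := by
    intro x
    apply sub_ne_zero.mpr
    apply γinj _ _ (pa0 _) _ _
    · linarith [pab x]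
    · linarith [pbτ x]
  obtain ⟨L, Lc, hL⟩ := exists_log Vc V0
  have s1 := log_const (L := fun b : ℝ => L (0, b)) (M := fun b : ℝ => Complex.log (V (0, b)))
    (by fun_prop) (by
      apply Continuous.clog (by fun_prop)
      intro b
      right
      apply ne_of_gt
      simp only [hV, sub_im, pa_0, γ1im 0 (by simp)]
      have := γlow1 (1 + pb (0, b)) (by linarith [pab (0, b), pa0 0]) (by linarith [pbτ (0, b)])
      linarith) (by
      intro b
      rw [hL, Complex.exp_log (V0 _)]) τ 0
  have s2 := log_const (L := fun a : ℝ => L (a, τ)) (M := fun a : ℝ => Complex.log (V (a, τ)))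
    (by fun_prop) (by
      apply Continuous.clog (by fun_prop)
      intro a
      right
      apply ne_of_gt
      simp only [hV, sub_im, pb_τ, ← hτ]
      have := htop (pa a) (pa0 a) (paτ a)
      linarith) (by
      intro b
      rw [hL, Complex.exp_log (V0 _)]) τ 0
  have d0 : ∀ z, F z - z ≠ 0 := fun z => sub_ne_zero.mpr (hfix z)
  have Vd : ∀ a, V (a, a) = F (γ (pa a)) - γ (pa a) + ε * I := by
    intro a
    simp only [hV, pb_diag]
    rw [add_comm, γ2 (pa a) ⟨pa0 a, by linarith [paτ a]⟩]
    simp only [hG]; ring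
  have hslit : ∀ z, 1 + ε * I / (F z - z) ∈ slitPlane := by
    intro z
    left
    have : ‖ε * I / (F z - z)‖ < 1 := by
      rw [norm_div, div_lt_one (norm_pos_iff.mpr (d0 z))]
      have := hδF z
      simp only [norm_mul, norm_real, norm_I, mul_one, Real.norm_eq_abs, abs_of_pos hε]
      linarith
    have h2 := (abs_le.mp (Complex.abs_re_le_norm (ε * I / (F z - z)))).1
    rw [add_re, one_re]
    linarith
  have s3 := log_const (L := fun a : ℝ => L (a, a))
    (M := fun a : ℝ => Λ (γ (pa a)) +
      Complex.log (1 + ε * I / (F (γ (pa a)) - γ (pa a)))) (by fun_prop) (by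
      apply Continuous.add (by fun_prop)
      apply Continuous.clog _ (fun a => hslit _)
      apply continuous_const.add
      exact continuous_const.div (by fun_prop) (fun a => d0 _)) (by
      intro a
      rw [hL, Vd, Complex.exp_add, hexp, Complex.exp_log (slitPlane_ne_zero (hslit _))]
      have := d0 (γ (pa a))
      field_simp) τ 0
  refine ⟨γ 0, γ τ, ?_, hqim, ?_⟩
  · rw [γ1im 0 (by simp)]; linarith
  have him0 : (F (γ 0) - γ 0).im = 0 := by
    rw [sub_im, hF.low_im _ (by rw [γ1im 0 (by simp)]; linarith), sub_self]
  have himτ : (F (γ τ) - γ τ).im = 0 := by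
    rw [sub_im, hF.high_im _ hqim, sub_self]
  have a0 := arg_aux (d0 (γ 0)) him0 hε
  have aτ := arg_aux (d0 (γ τ)) himτ hε
  simp only [add_im, log_im, pa_0, pa_τ, a0, aτ] at s1 s2 s3
  have v0 := Vd 0
  have vτ := Vd τ
  rw [pa_0] at v0
  rw [pa_τ] at vτ
  rw [← v0, ← vτ] at s3
  linarith

end StripMap
end PR

namespace PR

namespace StripMap
variable {F : ℂ ≃ₜ ℂ}

lemma im_le_zero_iff (hF : StripMap F) (z : ℂ) : (F z).im ≤ 0 ↔ z.im ≤ 0 := by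
  constructor
  · intro h
    by_contra! h1
    linarith [hF.im_gt le_rfl h1]
  · intro h
    rwa [hF.low_im z h]

lemma one_le_im_iff (hF : StripMap F) (z : ℂ) : 1 ≤ (F z).im ↔ 1 ≤ z.im := by
  constructor
  · intro h
    by_contra! h1
    linarith [hF.im_lt_one h1]
  · intro h
    rwa [hF.high_im z h]

lemma image_per (hF : StripMap F) {S : Set ℂ} (hS : ∀ z, z + 1 ∈ S ↔ z ∈ S) (z : ℂ) :
    z + 1 ∈ F '' S ↔ z ∈ F '' S := by
  constructor
  · rintro ⟨w, hw, h⟩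
    refine ⟨w - 1, (hS _).mp (by simpa using hw), ?_⟩
    have := hF.per (w - 1)
    rw [sub_add_cancel, h] at this
    exact (add_right_cancel this).symm
  · rintro ⟨w, hw, rfl⟩
    exact ⟨w + 1, (hS _).mpr hw, hF.per w⟩

lemma symm_per (hF : StripMap F) (z : ℂ) : F.symm (z + 1) = F.symm z + 1 := by
  apply F.injective
  rw [hF.per]; simp

lemma symm (hF : StripMap F) : StripMap F.symm where
  per := hF.symm_per
  low_im z hz := by
    have h : (F.symm z).im ≤ 0 := by rw [← hF.im_le_zero_iff]; simpa using hz
    rw [← hF.low_im _ h]; simp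
  high_im z hz := by
    have h : 1 ≤ (F.symm z).im := by rw [← hF.one_le_im_iff]; simpa using hz
    rw [← hF.high_im _ h]; simp
  low z hz := by
    have h : (F.symm z).im ≤ 0 := by rw [← hF.im_le_zero_iff]; simpa using hz
    have h1 := hF.low _ h
    have h2 := hF.low_im _ h
    rw [F.apply_symm_apply] at h1 h2
    have h3 : F ((F.symm z).re : ℂ) = (z.re : ℂ) := by
      have e : F ((F.symm z).re : ℂ) = z - F.symm z + (F.symm z).re := by rw [h1]; ring
      rw [e]
      apply Complex.ext <;> simp [h2]
    rw [← h3, F.symm_apply_apply, ← neg_sub, h1]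
    ring
  high z hz := by
    have h : 1 ≤ (F.symm z).im := by rw [← hF.one_le_im_iff]; simpa using hz
    have h1 := hF.high _ h
    have h2 := hF.high_im _ h
    rw [F.apply_symm_apply] at h1 h2
    have h3 : F ((F.symm z).re + I : ℂ) = (z.re : ℂ) + I := by
      have e : F ((F.symm z).re + I : ℂ) = z - F.symm z + ((F.symm z).re + I) := by rw [h1]; ring
      rw [e]
      apply Complex.ext <;> simp [h2]
    rw [← h3, F.symm_apply_apply, ← neg_sub, h1]
    ring
  mid z h0 h1 := by
    constructor
    · by_contra! h
      have := (hF.im_le_zero_iff _).mpr h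
      rw [F.apply_symm_apply] at this
      linarith
    · by_contra! h
      have := (hF.one_le_im_iff _).mpr h
      rw [F.apply_symm_apply] at this
      linarith
  area S hS hper him := by
    have hp : ∀ z, z + 1 ∈ F.symm '' S ↔ z ∈ F.symm '' S := by
      intro z
      constructor
      · rintro ⟨w, hw, h⟩
        refine ⟨w - 1, (hper _).mp (by simpa using hw), ?_⟩
        have := hF.symm_per (w - 1)
        rw [sub_add_cancel, h] at this
        exact (add_right_cancel this).symm
      · rintro ⟨w, hw, rfl⟩
        exact ⟨w + 1, (hper _).mpr hw, hF.symm_per w⟩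
    have := hF.area (F.symm '' S)
      (by rw [Homeomorph.image_symm]; exact F.continuous.measurable hS) hp (by
        rintro z ⟨w, hw, rfl⟩
        have := him w hw
        constructor
        · by_contra! h
          have h' := (hF.im_le_zero_iff _).mpr h
          rw [F.apply_symm_apply] at h'
          linarith
        · by_contra! h
          have h' := (hF.one_le_im_iff _).mpr h
          rw [F.apply_symm_apply] at h'
          linarith)
    rw [← this, ← image_comp]
    simp


lemma trans {K : ℂ ≃ₜ ℂ} (hF : StripMap F) (hK : StripMap K) : StripMap (F.trans K) where
  per z := by simp [hF.per, hK.per]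
  low_im z hz := by
    simp only [Homeomorph.trans_apply]
    rw [hK.low_im _ ((hF.im_le_zero_iff z).mpr hz), hF.low_im z hz]
  high_im z hz := by
    simp only [Homeomorph.trans_apply]
    rw [hK.high_im _ ((hF.one_le_im_iff z).mpr hz), hF.high_im z hz]
  low z hz := by
    simp only [Homeomorph.trans_apply]
    have a := hF.low z hz
    have b := hK.low _ ((hF.im_le_zero_iff z).mpr hz)
    have c : ((F z).re : ℂ) = F (z.re : ℂ) := by
      have h1 : F (z.re : ℂ) = F z - z + z.re := by rw [a]; ring
      rw [h1]
      have h2 := hF.low_im z hz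
      apply Complex.ext <;> simp [h2]
    rw [c] at b
    linear_combination a + b
  high z hz := by
    simp only [Homeomorph.trans_apply]
    have a := hF.high z hz
    have b := hK.high _ ((hF.one_le_im_iff z).mpr hz)
    have c : ((F z).re : ℂ) + I = F (z.re + I : ℂ) := by
      have h1 : F (z.re + I : ℂ) = F z - z + (z.re + I) := by rw [a]; ring
      rw [h1]
      have h2 := hF.high_im z hz
      apply Complex.ext <;> simp [h2]
    rw [c] at b
    linear_combination a + b
  mid z h0 h1 := by
    obtain ⟨a, b⟩ := hF.mid z h0 h1
    exact hK.mid _ a b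
  area S hS hper him := by
    have hcoe : ⇑(F.trans K) = K ∘ F := rfl
    rw [hcoe, image_comp, hK.area (F '' S) _ (hF.image_per hper) _,
      hF.area S hS hper him]
    · rw [← F.symm_symm, Homeomorph.image_symm]
      exact F.symm.continuous.measurable hS
    · rintro z ⟨w, hw, rfl⟩
      exact hF.mid w (him w hw).1 (him w hw).2

lemma refl : StripMap (Homeomorph.refl ℂ) where
  per z := rfl
  low_im z hz := rfl
  high_im z hz := rfl
  low z hz := by simp
  high z hz := by simp
  mid z h0 h1 := ⟨h0, h1⟩
  area S hS hper him := by simp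

lemma addInt (n : ℤ) : StripMap (Homeomorph.addRight (n : ℂ)) where
  per z := by simp; ring
  low_im z hz := by simp
  high_im z hz := by simp
  low z hz := by simp
  high z hz := by simp
  mid z h0 h1 := by simpa using ⟨h0, h1⟩
  area S hS hper him := by
    have key : ∀ m : ℤ, ∀ z : ℂ, z + m ∈ S ↔ z ∈ S := by
      intro m
      induction m using Int.induction_on with
      | zero => simp
      | succ k ih =>
        intro z
        push_cast at *
        rw [← add_assoc, hper, ih]
      | pred k ih =>
        intro z
        push_cast at *
        rw [← hper, show z + (-(k:ℂ) - 1) + 1 = z + -k by ring, ih]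
    have : (Homeomorph.addRight (n : ℂ)) '' S = S := by
      ext z
      constructor
      · rintro ⟨w, hw, rfl⟩
        exact (key n w).mpr hw
      · intro hz
        exact ⟨z - n, by rw [← key n]; simpa using hz, by simp⟩
    rw [this]

/-- iterate -/
noncomputable def iter (F : ℂ ≃ₜ ℂ) : ℕ → (ℂ ≃ₜ ℂ)
  | 0 => Homeomorph.refl ℂ
  | n + 1 => (iter F n).trans F

lemma iter_apply (F : ℂ ≃ₜ ℂ) (n : ℕ) (z : ℂ) : iter F n z = F^[n] z := by
  induction n with
  | zero => rfl
  | succ n ih =>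
    rw [Function.iterate_succ_apply', ← ih]; rfl

lemma iter_strip (hF : StripMap F) (n : ℕ) : StripMap (iter F n) := by
  induction n with
  | zero => exact refl
  | succ n ih => exact ih.trans hF

lemma low_const (hF : StripMap F) (hlow : ∀ x : ℝ, (F x - x).re < 0) {Λ : ℂ → ℂ}
    (hΛ : Continuous Λ) (hexp : ∀ z, Complex.exp (Λ z) = F z - z) {p q : ℂ}
    (hp : p.im ≤ 0) (hq : q.im ≤ 0) : (Λ p).im = (Λ q).im := by
  set P : ℂ → ℂ := fun z => z.re + (min z.im 0 : ℝ) * I with hP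
  have Pc : Continuous P := by fun_prop
  have Fc := F.continuous
  have Pim : ∀ z, (P z).im ≤ 0 := by intro z; simp [hP]
  have Pfix : ∀ z : ℂ, z.im ≤ 0 → P z = z := by
    intro z hz
    simp only [hP, min_eq_left hz]
    exact Complex.re_add_im z
  have hre : ∀ z : ℂ, z.im ≤ 0 → (F z - z).re < 0 := by
    intro z hz
    rw [hF.low z hz]; exact hlow _
  have him : ∀ z : ℂ, z.im ≤ 0 → (F z - z).im = 0 := by
    intro z hz
    rw [sub_im, hF.low_im z hz, sub_self]
  have hne : ∀ z, -(F z - z) ≠ 0 := by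
    intro z; rw [← hexp]; exact neg_ne_zero.mpr (Complex.exp_ne_zero _)
  have := log_const (L := fun z => Λ (P z))
    (M := fun z => Complex.log (-(F (P z) - P z)) + Real.pi * I) (by fun_prop) (by
      refine Continuous.add (Continuous.clog (by fun_prop) ?_) continuous_const
      intro z
      left
      rw [neg_re]
      linarith [hre _ (Pim z)]) (by
      intro z
      rw [hexp, Complex.exp_add, Complex.exp_log (hne _), Complex.exp_pi_mul_I]
      ring) p q
  have harg : ∀ z : ℂ, z.im ≤ 0 → (-(F z - z)).arg = 0 := by
    intro z hz
    rw [Complex.arg_eq_zero_iff]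
    constructor
    · rw [neg_re]; linarith [hre z hz]
    · rw [neg_im, him z hz, neg_zero]
  simp only [Pfix p hp, Pfix q hq, add_im, log_im, harg p hp, harg q hq] at this
  linarith

lemma high_const (hF : StripMap F) (hhigh : ∀ x : ℝ, 0 < (F (x + I) - (x + I)).re) {Λ : ℂ → ℂ}
    (hΛ : Continuous Λ) (hexp : ∀ z, Complex.exp (Λ z) = F z - z) {p q : ℂ}
    (hp : 1 ≤ p.im) (hq : 1 ≤ q.im) : (Λ p).im = (Λ q).im := by
  set P : ℂ → ℂ := fun z => z.re + (max z.im 1 : ℝ) * I with hP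
  have Pc : Continuous P := by fun_prop
  have Fc := F.continuous
  have Pim : ∀ z, 1 ≤ (P z).im := by intro z; simp [hP]
  have Pfix : ∀ z : ℂ, 1 ≤ z.im → P z = z := by
    intro z hz
    simp only [hP, max_eq_left hz]
    exact Complex.re_add_im z
  have hre : ∀ z : ℂ, 1 ≤ z.im → 0 < (F z - z).re := by
    intro z hz
    rw [hF.high z hz]; exact hhigh _
  have him : ∀ z : ℂ, 1 ≤ z.im → (F z - z).im = 0 := by
    intro z hz
    rw [sub_im, hF.high_im z hz, sub_self]
  have hne : ∀ z, (F z - z) ≠ 0 := by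
    intro z; rw [← hexp]; exact (Complex.exp_ne_zero _)
  have := log_const (L := fun z => Λ (P z))
    (M := fun z => Complex.log ((F (P z) - P z))) (by fun_prop) (by
      refine (Continuous.clog (by fun_prop) ?_)
      intro z
      left
      exact hre _ (Pim z)) (by
      intro z
      rw [hexp, Complex.exp_log (hne _)]) p q
  have harg : ∀ z : ℂ, 1 ≤ z.im → (F z - z).arg = 0 := by
    intro z hz
    rw [Complex.arg_eq_zero_iff]
    exact ⟨(hre z hz).le, him z hz⟩
  simp only [Pfix p hp, Pfix q hq, log_im, harg p hp, harg q hq] at this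
  linarith

/-- The Poincaré-Birkhoff theorem (existence of one fixed point). -/
theorem fixed_point (hF : StripMap F) (hlow : ∀ x : ℝ, (F x - x).re < 0)
    (hhigh : ∀ x : ℝ, 0 < (F (x + I) - (x + I)).re) :
    ∃ z : ℂ, 0 < z.im ∧ z.im < 1 ∧ F z = z := by
  by_contra! hcon
  have hrel : ∀ z : ℂ, z.im ≤ 0 → (F z - z).re < 0 := by
    intro z hz
    rw [hF.low z hz]; exact hlow _
  have himl : ∀ z : ℂ, z.im ≤ 0 → (F z - z).im = 0 := by
    intro z hz
    rw [sub_im, hF.low_im z hz, sub_self]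
  have hreh : ∀ z : ℂ, 1 ≤ z.im → 0 < (F z - z).re := by
    intro z hz
    rw [hF.high z hz]; exact hhigh _
  have himh : ∀ z : ℂ, 1 ≤ z.im → (F z - z).im = 0 := by
    intro z hz
    rw [sub_im, hF.high_im z hz, sub_self]
  have hfix : ∀ z, F z ≠ z := by
    intro z h
    rcases le_or_gt z.im 0 with h0 | h0
    · have := hrel z h0
      rw [h] at this; simp at this
    rcases le_or_gt 1 z.im with h1 | h1
    · have := hreh z h1
      rw [h] at this; simp at this
    · exact hcon z h0 h1 h
  have Fc := F.continuous
  have Fsc := F.symm.continuous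
  obtain ⟨Λ, hΛ, hexp⟩ := exists_log (V := fun z => F z - z) (by fun_prop)
    (fun z => sub_ne_zero.mpr (hfix z))
  obtain ⟨p, q, hp, hq, h1⟩ := hF.index hfix hΛ hexp
  obtain ⟨p', q', hp', hq', h2⟩ := hF.symm.index (by
      intro z h
      apply hfix (F.symm z)
      rw [F.apply_symm_apply, h]) (Λ := fun w => Λ (F.symm w) + Real.pi * I) (by fun_prop) (by
      intro z
      rw [Complex.exp_add, hexp, Complex.exp_pi_mul_I, F.apply_symm_apply]; ring)
  have hp'' : (F.symm p').im ≤ 0 := by rw [hF.symm.low_im _ hp']; exact hp'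
  have hq'' : 1 ≤ (F.symm q').im := by rw [hF.symm.high_im _ hq']; exact hq'
  have e1 := hF.low_const hlow hΛ hexp hp hp''
  have e2 := hF.high_const hhigh hΛ hexp hq hq''
  have a1 : (F p - p).arg = Real.pi := Complex.arg_eq_pi_iff.mpr ⟨hrel p hp, himl p hp⟩
  have a2 : (F q - q).arg = 0 := Complex.arg_eq_zero_iff.mpr ⟨(hreh q hq).le, himh q hq⟩
  have a3 : (F.symm p' - p').arg = 0 := by
    have b1 := hrel _ hp''
    have b2 := himl _ hp''
    rw [F.apply_symm_apply] at b1 b2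
    rw [Complex.arg_eq_zero_iff]
    simp only [sub_re, sub_im] at *
    constructor <;> linarith
  have a4 : (F.symm q' - q').arg = Real.pi := by
    have b1 := hreh _ hq''
    have b2 := himh _ hq''
    rw [F.apply_symm_apply] at b1 b2
    rw [Complex.arg_eq_pi_iff]
    simp only [sub_re, sub_im] at *
    constructor <;> linarith
  rw [a1, a2] at h1
  rw [a3, a4] at h2
  simp only [add_im] at h2
  linarith [Real.pi_pos]

end StripMap
end PR

namespace PR

/-- The standard covering of the circle. -/
noncomputable def e (x : ℝ) : ℂ := Complex.exp ((2 * Real.pi * x) * Complex.I)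

lemma e_cont : Continuous e := by unfold e; fun_prop

lemma e_norm (x : ℝ) : ‖e x‖ = 1 := by
  have := Complex.norm_exp_ofReal_mul_I (2 * Real.pi * x)
  push_cast at this
  exact this

lemma e_ne (x : ℝ) : e x ≠ 0 := Complex.exp_ne_zero _

lemma e_add (x y : ℝ) : e (x + y) = e x * e y := by
  unfold e; rw [← Complex.exp_add]; congr 1; push_cast; ring

lemma e_int (n : ℤ) : e n = 1 := by
  unfold e
  rw [Complex.exp_eq_one_iff]
  exact ⟨n, by push_cast; ring⟩

lemma e_one : e 1 = 1 := by simpa using e_int 1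

lemma e_zero : e 0 = 1 := by simp [e]

lemma e_eq {x y : ℝ} (h : e x = e y) : ∃ n : ℤ, x = y + n := by
  unfold e at h
  rw [Complex.exp_eq_exp_iff_exists_int] at h
  obtain ⟨n, hn⟩ := h
  refine ⟨n, ?_⟩
  have h2 : (2 * Real.pi * I : ℂ) ≠ 0 := Complex.two_pi_I_ne_zero
  have : (x : ℂ) = y + n := by
    apply mul_left_cancel₀ h2
    linear_combination hn
  exact_mod_cast this

lemma exists_e (z : ℂ) : ∃ x : ℝ, z = ‖z‖ * e x := by
  refine ⟨Complex.arg z / (2 * Real.pi), ?_⟩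
  conv_lhs => rw [← Complex.norm_mul_exp_arg_mul_I z]
  unfold e
  congr 2
  have : (Real.pi : ℂ) ≠ 0 := by exact_mod_cast Real.pi_ne_zero
  push_cast
  field_simp

/-- Area preserving (up to a factor) polar coordinates. -/
noncomputable def E (z : ℂ) : ℂ := (Real.sqrt z.im : ℂ) * e z.re

lemma E_norm (z : ℂ) : ‖E z‖ = Real.sqrt z.im := by
  simp [E, e_norm, abs_of_nonneg (Real.sqrt_nonneg _)]

lemma E_add_int (z : ℂ) (n : ℤ) : E (z + n) = E z := by
  simp [E, e_add, e_int]

lemma E_ne {z : ℂ} (h : 0 < z.im) : E z ≠ 0 := by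
  rw [← norm_pos_iff, E_norm]; positivity

lemma E_eq {z w : ℂ} (hz : 0 < z.im) (hw : 0 < w.im) (h : E z = E w) : ∃ n : ℤ, z = w + n := by
  have h1 : Real.sqrt z.im = Real.sqrt w.im := by rw [← E_norm, ← E_norm, h]
  have h2 : z.im = w.im := by
    rwa [Real.sqrt_inj hz.le hw.le] at h1
  have h3 : e z.re = e w.re := by
    unfold E at h
    rw [h1] at h
    refine mul_left_cancel₀ ?_ h
    have := (Real.sqrt_pos.mpr hw).ne'
    exact_mod_cast this
  obtain ⟨n, hn⟩ := e_eq h3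
  exact ⟨n, by apply Complex.ext <;> simp [hn, h2]⟩

lemma exists_E (p : ℂ) : ∃ z : ℂ, z.im = ‖p‖ ^ 2 ∧ E z = p := by
  obtain ⟨x, hx⟩ := exists_e p
  refine ⟨⟨x, ‖p‖ ^ 2⟩, rfl, ?_⟩
  simp only [E]
  rw [Real.sqrt_sq (norm_nonneg _), ← hx]

lemma E_mem {z : ℂ} (h : z.im ≤ 1) : E z ∈ Disk := by
  simp only [Disk, mem_closedBall, dist_zero_right, E_norm]
  exact Real.sqrt_le_one.mpr h

lemma deg_one_int {g : ℝ → ℝ} (hg : ∀ x, g (x + 1) = g x + 1) (n : ℕ) (x : ℝ) :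
    g (x + n) = g x + n := by
  induction n with
  | zero => simp
  | succ n ih => push_cast; rw [← add_assoc, hg, ih]; ring

lemma deg_one_surj {g : ℝ → ℝ} (hc : Continuous g) (hg : ∀ x, g (x + 1) = g x + 1) :
    Function.Surjective g := by
  intro a
  apply mem_range_of_exists_le_of_exists_ge hc
  · obtain ⟨n, hn⟩ := exists_nat_ge (g 0 - a)
    refine ⟨-n, ?_⟩
    have := deg_one_int hg n (-n)
    simp at this
    linarith
  · obtain ⟨n, hn⟩ := exists_nat_ge (a - g 0)
    refine ⟨n, ?_⟩
    have := deg_one_int hg n 0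
    simp at this
    linarith

/-- bounded displacement, bijective, continuous ⇒ homeomorphism -/
lemma exists_homeo {F : ℂ → ℂ} (hc : Continuous F) (hb : Function.Bijective F) {C : ℝ}
    (hC : ∀ z, ‖F z - z‖ ≤ C) : ∃ G : ℂ ≃ₜ ℂ, ∀ z, G z = F z := by
  have ht : Tendsto F (cocompact ℂ) (cocompact ℂ) := by
    rw [← Metric.cobounded_eq_cocompact, ← tendsto_norm_atTop_iff_cobounded,
      Metric.cobounded_eq_cocompact]
    have h1 : Tendsto (fun z : ℂ => ‖z‖ - C) (cocompact ℂ) atTop :=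
      tendsto_atTop_add_const_right _ (-C) tendsto_norm_cocompact_atTop
    refine tendsto_atTop_mono ?_ h1
    intro z
    have := norm_sub_norm_le z (z - F z)
    rw [norm_sub_rev z (F z)] at this
    have h2 := hC z
    simp only [sub_sub_cancel] at this
    linarith
  have hp : IsProperMap F := by
    rw [isProperMap_iff_tendsto_cocompact]
    exact ⟨hc, ht⟩
  exact ⟨Equiv.toHomeomorphOfContinuousClosed (Equiv.ofBijective F hb) hc hp.isClosedMap,
    fun z => rfl⟩

/-- clamp to the unit interval -/
noncomputable def cl (y : ℝ) : ℝ := max 0 (min y 1)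

lemma cl_cont : Continuous cl := by unfold cl; fun_prop
lemma cl_nonneg (y : ℝ) : 0 ≤ cl y := le_max_left _ _
lemma cl_le (y : ℝ) : cl y ≤ 1 := by simp [cl]
lemma cl_low {y : ℝ} (h : y ≤ 0) : cl y = 0 := by
  unfold cl; exact max_eq_left ((min_le_left _ _).trans h)
lemma cl_high {y : ℝ} (h : 1 ≤ y) : cl y = 1 := by
  unfold cl; rw [min_eq_right h]; simp
lemma cl_mid {y : ℝ} (h : 0 ≤ y) (h1 : y ≤ 1) : cl y = y := by
  unfold cl; rw [min_eq_left h1, max_eq_right h]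
lemma cl_pos {y : ℝ} (h : 0 < y) : 0 < cl y := by
  unfold cl; simp [h]

end PR

namespace PR

lemma exp_angle {L V : ℂ} (h : Complex.exp L = V) : V = ‖V‖ * e (L.im / (2 * Real.pi)) := by
  subst h
  rw [Complex.norm_exp]
  conv_lhs => rw [← Complex.re_add_im L, Complex.exp_add]
  unfold e
  have : (Real.pi : ℂ) ≠ 0 := by exact_mod_cast Real.pi_ne_zero
  push_cast
  congr 2
  field_simp

lemma angle_unique {V : ℂ} (_hV : V ≠ 0) {r s a b : ℝ} (hr : 0 < r) (hs : 0 < s)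
    (h1 : V = r * e a) (h2 : V = s * e b) : ∃ n : ℤ, a = b + n := by
  have hn : r = s := by
    have a1 : ‖V‖ = r := by rw [h1]; simp [e_norm, abs_of_pos hr]
    have a2 : ‖V‖ = s := by rw [h2]; simp [e_norm, abs_of_pos hs]
    linarith
  subst hn
  apply e_eq
  rw [h1] at h2
  exact mul_left_cancel₀ (by exact_mod_cast hr.ne') h2

lemma exists_angle {T : Type*} [TopologicalSpace T]
    (hlog : ∀ V : T → ℂ, Continuous V → (∀ x, V x ≠ 0) →
      ∃ L : T → ℂ, Continuous L ∧ ∀ x, Complex.exp (L x) = V x)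
    {V : T → ℂ} (hc : Continuous V) (h0 : ∀ x, V x ≠ 0) :
    ∃ k : T → ℝ, Continuous k ∧ ∀ x, V x = ‖V x‖ * e (k x) := by
  obtain ⟨L, Lc, hL⟩ := hlog V hc h0
  exact ⟨fun x => (L x).im / (2 * Real.pi), by fun_prop, fun x => exp_angle (hL x)⟩

lemma rho_cont {φ : ℂ → ℂ} {A : ℂ →L[ℝ] ℂ} (hc : ContinuousOn φ Disk)
    (h0 : φ 0 = 0) (hA : HasFDerivAt φ A 0) :
    ContinuousOn (fun w : ℂ => (‖w‖⁻¹ : ℝ) • (φ w - A w)) Disk := by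
  intro w hw
  by_cases h : w = 0
  · subst h
    apply ContinuousAt.continuousWithinAt
    have := hasFDerivAt_iff_tendsto.mp hA
    simp only [sub_zero, h0] at this
    unfold ContinuousAt
    simp only [norm_zero, inv_zero, zero_smul]
    rw [tendsto_zero_iff_norm_tendsto_zero]
    refine this.congr ?_
    intro x
    rw [norm_smul, norm_inv, norm_norm]
  · have h1 : ContinuousAt (fun w : ℂ => (‖w‖⁻¹ : ℝ)) w :=
      continuous_norm.continuousAt.inv₀ (by simpa using h)
    exact h1.continuousWithinAt.smul ((hc w hw).sub A.continuous.continuousWithinAt)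

lemma smul_eq' (r : ℝ) (z : ℂ) : r • z = (r : ℂ) * z := Complex.real_smul

lemma construct {φ : ℂ → ℂ} {A : ℂ →L[ℝ] ℂ} {f : ℝ → ℝ} (hc : ContinuousOn φ Disk)
    (hm : MapsTo φ Disk Disk) (hi : InjOn φ Disk) (hs : SurjOn φ Disk Disk)
    (h0 : φ 0 = 0) (hA : HasFDerivAt φ A 0) (hAi : ∀ v, A v = 0 → v = 0)
    (fc : Continuous f) (f1 : ∀ x, f (x + 1) = f x + 1) (fp : ∀ x, φ (e x) = e (f x)) :
    ∃ F : ℂ ≃ₜ ℂ, (∀ z, F (z + 1) = F z + 1) ∧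
      (∀ z : ℂ, z.im ≤ 0 → F z - z = F (z.re : ℂ) - (z.re : ℂ)) ∧
      (∀ z : ℂ, z.im ≤ 0 → (F z).im = z.im) ∧
      (∀ z : ℂ, 1 ≤ z.im → F z - z = F ((z.re : ℂ) + I) - ((z.re : ℂ) + I)) ∧
      (∀ z : ℂ, 1 ≤ z.im → (F z).im = z.im) ∧
      (∀ z : ℂ, 0 < z.im → z.im < 1 → 0 < (F z).im ∧ (F z).im < 1) ∧
      (∀ x : ℝ, F (x + I) = f x + I) ∧
      (∀ z : ℂ, 0 < z.im → z.im ≤ 1 → φ (E z) = E (F z)) ∧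
      (∀ x : ℝ, A (e x) = ‖A (e x)‖ * e (F x).re) := by
  have fsurj := deg_one_surj fc f1
  -- boundary
  have D_iff : ∀ p, p ∈ Disk ↔ ‖p‖ ≤ 1 := by intro p; simp [Disk]
  have bd1 : ∀ p, ‖p‖ = 1 → ‖φ p‖ = 1 := by
    intro p hp
    obtain ⟨x, hx⟩ := exists_e p
    rw [hp] at hx
    rw [hx]
    simp [fp, e_norm]
  have bd2 : ∀ p ∈ Disk, ‖φ p‖ = 1 → ‖p‖ = 1 := by
    intro p hpD hp
    obtain ⟨x, hx⟩ := exists_e (φ p)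
    rw [hp] at hx
    obtain ⟨y, hy⟩ := fsurj x
    rw [← hy] at hx
    have : φ p = φ (e y) := by rw [hx, fp]; simp
    rw [hi hpD ((D_iff _).mpr (e_norm y).le) this, e_norm]
  have nz : ∀ p ∈ Disk, p ≠ 0 → φ p ≠ 0 := by
    intro p hp hp0 h
    apply hp0
    apply hi hp ((D_iff _).mpr (by simp))
    rw [h, h0]
  set R : ℂ → ℂ := fun w : ℂ => (‖w‖⁻¹ : ℝ) • (φ w - A w) with hR
  set P : ℂ → ℂ := fun z => (Real.sqrt (cl z.im) : ℂ) * e z.re with hP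
  have clc := cl_cont
  have ec := e_cont
  have Pc : Continuous P := by fun_prop
  have Pn : ∀ z, ‖P z‖ = Real.sqrt (cl z.im) := by
    intro z; simp [hP, e_norm, abs_of_nonneg (Real.sqrt_nonneg _)]
  have PD : ∀ z, P z ∈ Disk := by
    intro z; rw [D_iff, Pn]; exact Real.sqrt_le_one.mpr (cl_le _)
  have P1 : ∀ z, P (z + 1) = P z := by
    intro z; simp [hP, e_add, e_one]
  have Ppos : ∀ z : ℂ, 0 < z.im → P z ≠ 0 := by
    intro z hz; rw [← norm_pos_iff, Pn]; exact Real.sqrt_pos.mpr (cl_pos hz)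
  have PE : ∀ z : ℂ, 0 < z.im → z.im ≤ 1 → P z = E z := by
    intro z hz hz1; simp only [hP, E, cl_mid hz.le hz1]
  set Ψ : ℂ → ℂ := fun z => A (e z.re) + R (P z) with hΨ
  have Ψc : Continuous Ψ := by
    have : Continuous fun z => R (P z) := (rho_cont hc h0 hA).comp_continuous Pc PD
    exact (A.continuous.comp (ec.comp Complex.continuous_re)).add this
  have Ψpos : ∀ z : ℂ, 0 < z.im → (‖P z‖ : ℂ) * Ψ z = φ (P z) := by
    intro z hz
    have hp := Ppos z hz
    have hp' : (‖P z‖ : ℂ) ≠ 0 := by simpa using hp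
    have h3 : A (P z) = (‖P z‖ : ℂ) * A (e z.re) := by
      have : P z = (‖P z‖ : ℝ) • e z.re := by
        rw [Pn]; simp [hP]
      conv_lhs => rw [this]
      rw [map_smul, smul_eq']
    simp only [hΨ, hR, smul_eq']
    rw [h3]
    push_cast
    field_simp
    ring
  have Ψlow : ∀ z : ℂ, z.im ≤ 0 → Ψ z = A (e z.re) := by
    intro z hz
    simp [hΨ, hR, hP, cl_low hz, h0]
  have Ψ0 : ∀ z, Ψ z ≠ 0 := by
    intro z h
    rcases le_or_gt z.im 0 with hz | hz
    · rw [Ψlow z hz] at h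
      exact e_ne _ (hAi _ h)
    · have := Ψpos z hz
      rw [h, mul_zero] at this
      exact nz _ (PD z) (Ppos z hz) this.symm
  have Ψ1 : ∀ z, Ψ (z + 1) = Ψ z := by
    intro z; simp only [hΨ, P1]; simp [e_add, e_one]
  have Ψcl : ∀ z : ℂ, Ψ z = Ψ (z.re + cl z.im * I) := by
    intro z
    have : cl (cl z.im) = cl z.im := cl_mid (cl_nonneg _) (cl_le _)
    simp [hΨ, hP, this]
  obtain ⟨X0, X0c, hX0⟩ := exists_angle (fun V h1 h2 => exists_log h1 h2) Ψc Ψ0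
  have Ψpn : ∀ z, 0 < ‖Ψ z‖ := fun z => norm_pos_iff.mpr (Ψ0 z)
  have X1 : ∀ z, X0 (z + 1) - X0 z = X0 (0 + 1) - X0 0 := by
    intro z
    apply int_const (g := fun z => X0 (z + 1) - X0 z) (by fun_prop)
    intro z
    have a := hX0 (z + 1)
    rw [Ψ1] at a
    obtain ⟨n, hn⟩ := angle_unique (Ψ0 z) (Ψpn z) (Ψpn z) a (hX0 z)
    exact ⟨n, by rw [hn]; ring⟩
  have Xcl : ∀ z : ℂ, X0 z - X0 (z.re + cl z.im * I) = 0 := by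
    intro z
    have := int_const (g := fun z : ℂ => X0 z - X0 (z.re + cl z.im * I)) (by fun_prop) (by
      intro z
      have a := hX0 z
      have b := hX0 (z.re + cl z.im * I)
      rw [← Ψcl z] at b
      obtain ⟨n, hn⟩ := angle_unique (Ψ0 z) (Ψpn z) (Ψpn z) a b
      exact ⟨n, by rw [hn]; ring⟩) z 0
    simpa [cl_low] using this
  have Ψf : ∀ x : ℝ, Ψ (x + I) = e (f x) := by
    intro x
    have := Ψpos (x + I) (by simp)
    have h1 : P (x + I) = e x := by
      simp [hP, cl_high]
    rw [h1, e_norm, fp] at this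
    simpa using this
  have Xf : ∀ x : ℝ, X0 (x + I) - f x = X0 ((0 : ℝ) + I) - f 0 := by
    intro x
    apply int_const (g := fun x : ℝ => X0 (x + I) - f x) (by fun_prop)
    intro x
    have a := hX0 (x + I)
    have b : Ψ (x + I) = (1 : ℝ) * e (f x) := by simp [Ψf]
    obtain ⟨n, hn⟩ := angle_unique (Ψ0 _) (Ψpn _) one_pos a b
    exact ⟨n, by rw [hn]; ring⟩
  obtain ⟨m, hm'⟩ : ∃ m : ℤ, X0 ((0 : ℝ) + I) - f 0 = m := by
    have a := hX0 ((0 : ℝ) + I)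
    have b : Ψ ((0 : ℝ) + I) = (1 : ℝ) * e (f 0) := by simpa using Ψf 0
    obtain ⟨n, hn⟩ := angle_unique (Ψ0 _) (Ψpn _) one_pos a b
    exact ⟨n, by rw [hn]; ring⟩
  rw [hm'] at Xf
  set X : ℂ → ℝ := fun z => X0 z - m with hX
  have Xc : Continuous X := by fun_prop
  have XΨ : ∀ z, Ψ z = ‖Ψ z‖ * e (X z) := by
    intro z
    have : e (X0 z) = e (X z) := by
      have : X0 z = X z + m := by simp [hX]
      rw [this, e_add, e_int, mul_one]
    rw [← this]; exact hX0 z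
  have XI : ∀ x : ℝ, X (x + I) = f x := by
    intro x; have := Xf x; simp only [hX]; linarith
  have Xone : ∀ z, X (z + 1) = X z + 1 := by
    intro z
    have a := X1 z
    have b := X1 ((0 : ℝ) + I)
    have c1 := XI 0
    have c2 := XI (0 + 1)
    rw [f1] at c2
    have d : ((0 + 1 : ℝ) : ℂ) + I = ((0 : ℝ) : ℂ) + I + 1 := by push_cast; ring
    rw [d] at c2
    simp only [hX] at *
    linarith
  have Xcl' : ∀ z : ℂ, X z = X (z.re + cl z.im * I) := by
    intro z; have := Xcl z; simp only [hX]; linarith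
  have Xint : ∀ (n : ℤ) z, X (z + n) = X z + n := by
    intro n
    induction n using Int.induction_on with
    | zero => simp
    | succ k ih =>
      intro z
      push_cast at *
      rw [← add_assoc, Xone, ih]; ring
    | pred k ih =>
      intro z
      have := Xone (z + ((-(k:ℤ) - 1 : ℤ) : ℂ))
      push_cast at *
      rw [show z + (-(k:ℂ) - 1) + 1 = z + -k by ring, ih] at this
      linarith
  set Y : ℂ → ℝ := fun z => ‖φ (P z)‖ ^ 2 + (z.im - cl z.im) with hY
  have Yc : Continuous Y := by
    have : Continuous fun z => φ (P z) := hc.comp_continuous Pc PD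
    exact (this.norm.pow 2).add (by fun_prop)
  have Ylow : ∀ z : ℂ, z.im ≤ 0 → Y z = z.im := by
    intro z hz; simp [hY, hP, cl_low hz, h0]
  have Yhigh : ∀ z : ℂ, 1 ≤ z.im → Y z = z.im := by
    intro z hz
    have : ‖P z‖ = 1 := by rw [Pn, cl_high hz]; simp
    simp [hY, bd1 _ this, cl_high hz]
  have Ymid : ∀ z : ℂ, 0 < z.im → z.im ≤ 1 → Y z = ‖φ (P z)‖ ^ 2 := by
    intro z hz hz1
    simp [hY, cl_mid hz.le hz1]
  have mid : ∀ z : ℂ, 0 < z.im → z.im < 1 → 0 < Y z ∧ Y z < 1 := by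
    intro z hz hz1
    rw [Ymid z hz hz1.le]
    have a : 0 < ‖φ (P z)‖ := norm_pos_iff.mpr (nz _ (PD z) (Ppos z hz))
    have b : ‖φ (P z)‖ ≤ 1 := (D_iff _).mp (hm (PD z))
    have c : ‖φ (P z)‖ ≠ 1 := by
      intro h
      have := bd2 _ (PD z) h
      rw [Pn, cl_mid hz.le hz1.le, Real.sqrt_eq_one] at this
      linarith
    have b' := lt_of_le_of_ne b c
    exact ⟨by positivity, by nlinarith⟩
  have rel : ∀ z : ℂ, 0 < z.im → z.im ≤ 1 → φ (P z) = (Real.sqrt (Y z) : ℂ) * e (X z) := by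
    intro z hz hz1
    have a := Ψpos z hz
    rw [XΨ z, ← mul_assoc] at a
    rw [Ymid z hz hz1, Real.sqrt_sq (norm_nonneg _), ← a]
    congr 1
    simp [e_norm]
  set F : ℂ → ℂ := fun z => ⟨X z, Y z⟩ with hF
  have Fc : Continuous F := by
    have : F = fun z => (X z : ℂ) + Y z * I := by
      ext z; exact (Complex.mk_eq_add_mul_I _ _)
    rw [this]; fun_prop
  have FE : ∀ z : ℂ, 0 < z.im → z.im ≤ 1 → φ (P z) = E (F z) := rel
  have Yn : ∀ (n : ℤ) z, Y (z + n) = Y z := by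
    intro n z
    have : P (z + n) = P z := by simp [hP, e_add, e_int]
    simp [hY, this]
  have Fn : ∀ (n : ℤ) z, F (z + n) = F z + n := by
    intro n z
    apply Complex.ext <;> simp [hF, Xint, Yn]
  have Finj : Function.Injective F := by
    intro z w hzw
    have hXe : X z = X w := congrArg Complex.re hzw
    have hYe : Y z = Y w := congrArg Complex.im hzw
    -- suffices to find integer translation
    suffices h : ∃ n : ℤ, z = w + n by
      obtain ⟨n, hn⟩ := h
      rw [hn, Xint] at hXe
      have : n = 0 := by
        have : (n : ℝ) = 0 := by linarith
        exact_mod_cast this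
      rw [hn, this]; simp
    have im_of : ∀ z w : ℂ, Y z = Y w → z.im ≤ 0 → w.im ≤ 0 := by
      intro z w h hz
      by_contra! hw
      rw [Ylow z hz] at h
      rcases lt_or_ge w.im 1 with h1 | h1
      · linarith [(mid w hw h1).1]
      · rw [Yhigh w h1] at h; linarith
    have im_of1 : ∀ z w : ℂ, Y z = Y w → 1 ≤ z.im → 1 ≤ w.im := by
      intro z w h hz
      by_contra! hw
      rw [Yhigh z hz] at h
      rcases le_or_gt w.im 0 with h1 | h1
      · rw [Ylow w h1] at h; linarith
      · linarith [(mid w h1 hw).2]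
    rcases le_or_gt z.im 0 with hz | hz
    · have hw := im_of z w hYe hz
      have him : z.im = w.im := by rw [← Ylow z hz, ← Ylow w hw, hYe]
      have a := XΨ z
      have b := XΨ w
      rw [Ψlow z hz] at a
      rw [Ψlow w hw] at b
      set r := ‖A (e z.re)‖ with hr
      set s := ‖A (e w.re)‖ with hs
      have hr0 : 0 < r := norm_pos_iff.mpr fun h => e_ne _ (hAi _ h)
      have hs0 : 0 < s := norm_pos_iff.mpr fun h => e_ne _ (hAi _ h)
      have h5 : A ((s : ℝ) • e z.re - (r : ℝ) • e w.re) = 0 := by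
        rw [map_sub, map_smul, map_smul, smul_eq', smul_eq', a, b, hXe]; ring
      have h6 := hAi _ h5
      rw [sub_eq_zero, smul_eq', smul_eq'] at h6
      obtain ⟨n, hn⟩ := angle_unique (by
        apply mul_ne_zero _ (e_ne _); exact_mod_cast hr0.ne') hs0 hr0 h6.symm rfl
      exact ⟨n, by apply Complex.ext <;> simp [hn, him]⟩
    · have hw : 0 < w.im := by
        by_contra! h
        exact absurd (im_of w z hYe.symm h) (not_le.mpr hz)
      rcases lt_or_ge z.im 1 with h1 | h1
      · have hw1 : w.im < 1 := by
          by_contra! h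
          exact absurd (im_of1 w z hYe.symm h) (not_le.mpr h1)
        have a := FE z hz h1.le
        rw [hzw, ← FE w hw hw1.le] at a
        have := hi (PD z) (PD w) a
        rw [PE z hz h1.le, PE w hw hw1.le] at this
        exact E_eq hz hw this
      · have hw1 := im_of1 z w hYe h1
        have him : z.im = w.im := by rw [← Yhigh z h1, ← Yhigh w hw1, hYe]
        rw [Xcl' z, Xcl' w, cl_high h1, cl_high hw1] at hXe
        simp only [ofReal_one, one_mul, XI] at hXe
        have : φ (e z.re) = φ (e w.re) := by rw [fp, fp, hXe]
        have := hi ((D_iff _).mpr (e_norm _).le) ((D_iff _).mpr (e_norm _).le) this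
        obtain ⟨n, hn⟩ := e_eq this
        exact ⟨n, by apply Complex.ext <;> simp [hn, him]⟩
  have Fsurj : Function.Surjective F := by
    intro w
    rcases le_or_gt w.im 0 with hw | hw
    · have hg : Function.Surjective fun x : ℝ => X (x : ℂ) := by
        apply deg_one_surj (by fun_prop)
        intro x; push_cast; exact Xone _
      obtain ⟨x, hx⟩ := hg w.re
      refine ⟨⟨x, w.im⟩, ?_⟩
      apply Complex.ext
      · simp only [hF]
        rw [Xcl']
        simp only [cl_low hw]
        simpa using hx
      · exact Ylow _ hw
    rcases le_or_gt 1 w.im with hw1 | hw1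
    · obtain ⟨x, hx⟩ := fsurj w.re
      refine ⟨⟨x, w.im⟩, ?_⟩
      apply Complex.ext
      · simp only [hF]
        rw [Xcl']
        simp only [cl_high hw1]
        simpa [XI] using hx
      · exact Yhigh _ hw1
    · obtain ⟨q, hq, hqe⟩ := hs (E_mem hw1.le)
      have hq0 : q ≠ 0 := by
        rintro rfl
        rw [h0] at hqe
        exact E_ne hw hqe.symm
      obtain ⟨z, hz, hze⟩ := exists_E q
      have hz0 : 0 < z.im := by rw [hz]; have := norm_pos_iff.mpr hq0; positivity
      have hz1 : z.im ≤ 1 := by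
        rw [hz]; have := (D_iff _).mp hq
        nlinarith [norm_nonneg q]
      have a := FE z hz0 hz1
      rw [PE z hz0 hz1, hze, hqe] at a
      have hFz : 0 < (F z).im := by
        rcases lt_or_ge z.im 1 with h | h
        · exact (mid z hz0 h).1
        · have := Yhigh z h
          simp only [hF]; linarith
      obtain ⟨n, hn⟩ := E_eq hw hFz a
      exact ⟨z + n, by rw [Fn, hn]⟩
  -- bounded displacement
  have hbd : ∃ C, ∀ z, ‖F z - z‖ ≤ C := by
    have hK : IsCompact (Set.Icc (0:ℝ) 1 ×ˢ Set.Icc (0:ℝ) 1) := isCompact_Icc.prod isCompact_Icc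
    have hcont : Continuous fun p : ℝ × ℝ => X (p.1 + p.2 * I) := by fun_prop
    obtain ⟨C, hC⟩ := hK.exists_bound_of_continuousOn hcont.continuousOn
    refine ⟨C + 1 + 1, fun z => ?_⟩
    have hx : |X z - z.re| ≤ C + 1 := by
      have h1 : X z = X ((Int.fract z.re : ℝ) + cl z.im * I) + ⌊z.re⌋ := by
        rw [Xcl', ← Xint]
        congr 1
        have : (z.re : ℂ) = (Int.fract z.re : ℝ) + (⌊z.re⌋ : ℂ) := by
          have := Int.fract_add_floor z.re
          exact_mod_cast this.symm
        linear_combination this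
      have h2 := hC (Int.fract z.re, cl z.im)
        ⟨⟨Int.fract_nonneg _, (Int.fract_lt_one _).le⟩, ⟨cl_nonneg _, cl_le _⟩⟩
      simp only [Real.norm_eq_abs] at h2
      rw [h1]
      have h3 := Int.fract_add_floor z.re
      have h4 := Int.fract_nonneg z.re
      have h5 := Int.fract_lt_one z.re
      rw [abs_le] at *
      constructor <;> linarith
    have hy : |Y z - z.im| ≤ 1 := by
      have a : ‖φ (P z)‖ ≤ 1 := (D_iff _).mp (hm (PD z))
      have b := norm_nonneg (φ (P z))
      have c1 := cl_nonneg z.im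
      have c2 := cl_le z.im
      simp only [hY]
      rw [abs_le]
      constructor <;> nlinarith
    calc ‖F z - z‖ ≤ |(F z - z).re| + |(F z - z).im| := Complex.norm_le_abs_re_add_abs_im _
      _ ≤ _ := by
        simp only [hF, Complex.sub_re, Complex.sub_im]
        linarith
  obtain ⟨C, hC⟩ := hbd
  obtain ⟨G, hG⟩ := exists_homeo Fc ⟨Finj, Fsurj⟩ hC
  refine ⟨G, ?_, ?_, ?_, ?_, ?_, ?_, ?_, ?_, ?_⟩
  · intro z; rw [hG, hG]; simpa using Fn 1 z
  · intro z hz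
    rw [hG, hG]
    apply Complex.ext
    · simp only [hF, Complex.sub_re]
      rw [Xcl' z, cl_low hz]; simp
    · simp [hF, Ylow z hz, Ylow (z.re : ℂ) (by simp)]
  · intro z hz; rw [hG]; exact Ylow z hz
  · intro z hz
    rw [hG, hG]
    apply Complex.ext
    · simp only [hF, Complex.sub_re]
      rw [Xcl' z, cl_high hz]; simp
    · simp [hF, Yhigh z hz, Yhigh (z.re + I : ℂ) (by simp)]
  · intro z hz; rw [hG]; exact Yhigh z hz
  · intro z hz hz1; rw [hG]; exact mid z hz hz1
  · intro x
    rw [hG]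
    apply Complex.ext
    · simp [hF, XI]
    · simp [hF, Yhigh (x + I : ℂ) (by simp)]
  · intro z hz hz1
    rw [hG, ← PE z hz hz1]; exact FE z hz hz1
  · intro x
    rw [hG]
    have := XΨ (x : ℂ)
    rw [Ψlow _ (by simp)] at this
    simpa [hF] using this

end PR

namespace PR

/-- derivative of `E` -/
noncomputable def dE (z : ℂ) : ℂ →L[ℝ] ℂ :=
  Complex.reCLM.smulRight ((Real.sqrt z.im : ℂ) * (2 * Real.pi * I * e z.re)) +
    Complex.imCLM.smulRight ((1 / (2 * Real.sqrt z.im) : ℝ) * e z.re)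

lemma hasFDerivAt_E {z : ℂ} (hz : 0 < z.im) : HasFDerivAt E (dE z) z := by
  have h1 : HasFDerivAt (fun z : ℂ => Real.sqrt z.im) ((1 / (2 * Real.sqrt z.im)) • Complex.imCLM) z := by
    have := (Real.hasDerivAt_sqrt hz.ne').comp_hasFDerivAt z Complex.imCLM.hasFDerivAt
    exact this
  have h2 : HasDerivAt e (2 * Real.pi * I * e z.re) z.re := by
    have a : HasDerivAt (fun x : ℝ => (2 * Real.pi * x : ℂ) * I) (2 * Real.pi * I) z.re := by
      have := (((hasDerivAt_id z.re).ofReal_comp).const_mul (2 * Real.pi : ℂ)).mul_const I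
      simpa using this
    have := a.cexp
    unfold e
    convert this using 1
    ring
  have h3 : HasFDerivAt (fun z : ℂ => e z.re) (Complex.reCLM.smulRight (2 * Real.pi * I * e z.re)) z := by
    have := h2.hasFDerivAt.comp z Complex.reCLM.hasFDerivAt
    refine HasFDerivAt.congr_fderiv this ?_
    refine ContinuousLinearMap.ext fun h => ?_
    simp
  have h4 := h1.smul h3
  have : E = fun z : ℂ => (Real.sqrt z.im) • e z.re := by
    ext z; simp [E]
  rw [this]
  refine HasFDerivAt.congr_fderiv h4 ?_
  refine ContinuousLinearMap.ext fun h => ?_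
  simp [dE]
  ring

lemma det_dE {z : ℂ} (hz : 0 < z.im) : |(dE z).det| = Real.pi := by
  have h : (dE z).det = - Real.pi := by
    rw [ContinuousLinearMap.det, ← LinearMap.det_toMatrix Complex.basisOneI, Matrix.det_fin_two]
    have hr := (Real.sqrt_pos.mpr hz).ne'
    have hn := e_norm z.re
    have hn2 : (e z.re).re ^ 2 + (e z.re).im ^ 2 = 1 := by
      have := Complex.normSq_eq_norm_sq (e z.re)
      rw [hn, Complex.normSq_apply] at this
      linarith
    simp [LinearMap.toMatrix_apply, dE]
    field_simp
    linear_combination (-1 : ℝ) * hn2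
  rw [h, abs_neg, abs_of_pos Real.pi_pos]

lemma E_injOn : InjOn E (Q ∩ {z | 0 < z.im}) := by
  intro z hz w hw h
  obtain ⟨n, hn⟩ := E_eq hz.2 hw.2 h
  have h1 := hz.1
  have h2 := hw.1
  simp only [Q, Set.mem_ofPred_eq] at h1 h2
  have h3 : z.re = w.re + n := by rw [hn]; simp
  have : n = 0 := by
    have a : (n : ℝ) < 1 := by linarith
    have b : (-1 : ℝ) < n := by linarith
    have a' : n < 1 := by exact_mod_cast a
    have b' : -1 < n := by exact_mod_cast b
    omega
  rw [hn, this]; simp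

lemma vol_E {B : Set ℂ} (hB : MeasurableSet B) (hBs : B ⊆ Q ∩ {z | 0 < z.im}) :
    MeasureTheory.volume (E '' B) = ENNReal.ofReal Real.pi * MeasureTheory.volume B := by
  rw [← MeasureTheory.lintegral_abs_det_fderiv_eq_addHaar_image MeasureTheory.volume hB
    (fun z hz => (hasFDerivAt_E (hBs hz).2).hasFDerivWithinAt) (E_injOn.mono hBs)]
  rw [MeasureTheory.setLIntegral_congr_fun hB (g := fun _ => ENNReal.ofReal Real.pi)]
  · simp
  · intro z hz
    simp only [det_dE (hBs hz).2]

lemma measurable_Q : MeasurableSet Q := by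
  have h1 : MeasurableSet {z : ℂ | 0 ≤ z.re} :=
    measurableSet_le measurable_const Complex.measurable_re
  have h2 : MeasurableSet {z : ℂ | z.re < 1} :=
    measurableSet_lt Complex.measurable_re measurable_const
  exact h1.inter h2

lemma vol_phi {φ : ℂ → ℂ} {φ' : ℂ → ℂ →L[ℝ] ℂ} (hφ : ∀ z ∈ Disk, HasFDerivWithinAt φ (φ' z) Disk z)
    (hdet : ∀ z ∈ Disk, (φ' z).det = 1) (hi : InjOn φ Disk) {B : Set ℂ} (hB : MeasurableSet B)
    (hBD : B ⊆ Disk) : MeasureTheory.volume (φ '' B) = MeasureTheory.volume B := by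
  rw [← MeasureTheory.lintegral_abs_det_fderiv_eq_addHaar_image MeasureTheory.volume hB
    (fun z hz => (hφ z (hBD hz)).mono hBD) (hi.mono hBD)]
  rw [MeasureTheory.setLIntegral_congr_fun hB (g := fun _ => 1)]
  · simp
  · intro z hz
    simp only [hdet z (hBD hz)]
    simp

lemma area_lemma {φ : ℂ → ℂ} {φ' : ℂ → ℂ →L[ℝ] ℂ} {F : ℂ ≃ₜ ℂ}
    (hφ : ∀ z ∈ Disk, HasFDerivWithinAt φ (φ' z) Disk z)
    (hdet : ∀ z ∈ Disk, (φ' z).det = 1) (hi : InjOn φ Disk)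
    (per : ∀ z, F (z + 1) = F z + 1)
    (mid : ∀ z : ℂ, 0 < z.im → z.im < 1 → 0 < (F z).im ∧ (F z).im < 1)
    (rel : ∀ z : ℂ, 0 < z.im → z.im ≤ 1 → φ (E z) = E (F z))
    (S : Set ℂ) (hS : MeasurableSet S) (hper : ∀ z, z + 1 ∈ S ↔ z ∈ S)
    (him : ∀ z ∈ S, 0 < z.im ∧ z.im < 1) :
    MeasureTheory.volume (F '' S ∩ Q) = MeasureTheory.volume (S ∩ Q) := by
  have key : ∀ m : ℤ, ∀ z : ℂ, z + m ∈ S ↔ z ∈ S := by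
    intro m
    induction m using Int.induction_on with
    | zero => simp
    | succ k ih =>
      intro z
      push_cast at *
      rw [← add_assoc, hper, ih]
    | pred k ih =>
      intro z
      push_cast at *
      rw [← hper, show z + (-(k:ℂ) - 1) + 1 = z + -k by ring, ih]
  have Fn : ∀ m : ℤ, ∀ z : ℂ, F (z + m) = F z + m := by
    intro m
    induction m using Int.induction_on with
    | zero => simp
    | succ k ih =>
      intro z
      push_cast at *
      rw [← add_assoc, per, ih]; ring
    | pred k ih =>
      intro z
      have := per (z + ((-(k:ℤ) - 1 : ℤ) : ℂ))
      push_cast at *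
      rw [show z + (-(k:ℂ) - 1) + 1 = z + -k by ring, ih] at this
      linear_combination -this
  have toQ : ∀ z : ℂ, z + ((-⌊z.re⌋ : ℤ) : ℂ) ∈ Q := by
    intro z
    have h4 := Int.floor_le z.re
    have h5 := Int.lt_floor_add_one z.re
    simp only [Q, Set.mem_ofPred_eq]
    constructor
    · simp; linarith
    · simp; linarith
  have hset : E '' (F '' S ∩ Q) = φ '' (E '' (S ∩ Q)) := by
    ext p
    constructor
    · rintro ⟨_, ⟨⟨s, hs, rfl⟩, -⟩, rfl⟩
      refine ⟨E s, ⟨s + ((-⌊s.re⌋ : ℤ) : ℂ), ⟨(key _ _).mpr hs, toQ s⟩, E_add_int _ _⟩, ?_⟩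
      exact rel s (him s hs).1 (him s hs).2.le
    · rintro ⟨_, ⟨s, ⟨hs, -⟩, rfl⟩, rfl⟩
      refine ⟨F s + ((-⌊(F s).re⌋ : ℤ) : ℂ), ⟨⟨s + ((-⌊(F s).re⌋ : ℤ) : ℂ), (key _ _).mpr hs,
        Fn _ _⟩, toQ _⟩, ?_⟩
      rw [E_add_int, rel s (him s hs).1 (him s hs).2.le]
  have mFS : MeasurableSet (F '' S) := by
    rw [← F.symm_symm, Homeomorph.image_symm]
    exact F.symm.continuous.measurable hS
  have sub1 : F '' S ∩ Q ⊆ Q ∩ {z | 0 < z.im} := by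
    rintro _ ⟨⟨s, hs, rfl⟩, h⟩
    exact ⟨h, (mid s (him s hs).1 (him s hs).2).1⟩
  have sub2 : S ∩ Q ⊆ Q ∩ {z | 0 < z.im} := fun s hs => ⟨hs.2, (him s hs.1).1⟩
  have v1 := vol_E (mFS.inter measurable_Q) sub1
  have v2 := vol_E (hS.inter measurable_Q) sub2
  have Em : MeasurableSet (E '' (S ∩ Q)) := by
    refine (hS.inter measurable_Q).image_of_continuousOn_injOn ?_ (E_injOn.mono sub2)
    intro z hz
    exact (hasFDerivAt_E (sub2 hz).2).continuousAt.continuousWithinAt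
  have v3 := vol_phi hφ hdet hi Em (by
    rintro _ ⟨s, hs, rfl⟩
    exact E_mem (him s hs.1).2.le)
  rw [← hset, v1, v2] at v3
  refine (ENNReal.mul_right_inj ?_ ENNReal.ofReal_ne_top).mp v3
  simpa using Real.pi_pos

end PR

namespace PR
open StripMap (iter iter_apply)

lemma iter_low {F : ℂ ≃ₜ ℂ} {g : CircleDeg1Lift} (hg : ∀ x : ℝ, F x = g x) (n : ℕ) (x : ℝ) :
    iter F n x = ((g ^ n) x : ℝ) := by
  rw [iter_apply, CircleDeg1Lift.coe_pow]
  induction n with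
  | zero => simp
  | succ n ih => rw [Function.iterate_succ_apply', ih, hg, Function.iterate_succ_apply']

lemma iter_high {F : ℂ ≃ₜ ℂ} {f : CircleDeg1Lift} (hf : ∀ x : ℝ, F (x + I) = f x + I) (n : ℕ)
    (x : ℝ) : iter F n (x + I) = ((f ^ n) x : ℝ) + I := by
  rw [iter_apply, CircleDeg1Lift.coe_pow]
  induction n with
  | zero => simp
  | succ n ih => rw [Function.iterate_succ_apply', ih, hf, Function.iterate_succ_apply']

lemma rot_aux {F : ℂ ≃ₜ ℂ} (hF : StripMap F) {g f : CircleDeg1Lift}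
    (hg : ∀ x : ℝ, F x = g x) (hf : ∀ x : ℝ, F (x + I) = f x + I)
    (hno : ∀ q : ℕ, 1 ≤ q → ∀ p : ℤ, ∀ z : ℂ, 0 < z.im → z.im < 1 → F^[q] z ≠ z + p) :
    g.translationNumber = f.translationNumber := by
  by_contra hne
  have main : ∀ q : ℕ, 1 ≤ q → ∀ p : ℤ, ¬ (((q : ℝ) * g.translationNumber < p ∧
      p < (q : ℝ) * f.translationNumber) ∨ ((q : ℝ) * f.translationNumber < p ∧
      p < (q : ℝ) * g.translationNumber)) := by
    intro q hq p hor
    have hH : StripMap ((iter F q).trans (Homeomorph.addRight ((-p : ℤ) : ℂ))) :=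
      (hF.iter_strip q).trans (StripMap.addInt (-p))
    set H := (iter F q).trans (Homeomorph.addRight ((-p : ℤ) : ℂ)) with hHdef
    have Hap : ∀ z, H z = iter F q z - p := by
      intro z; simp [hHdef, sub_eq_add_neg]
    have Hlow : ∀ x : ℝ, H x = ((g ^ q) x - p : ℝ) := by
      intro x; rw [Hap, iter_low hg]; push_cast; rfl
    have Hhigh : ∀ x : ℝ, H (x + I) = ((f ^ q) x - p : ℝ) + I := by
      intro x; rw [Hap, iter_high hf]; push_cast; ring
    have nofix : ∀ z : ℂ, 0 < z.im → z.im < 1 → H z ≠ z := by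
      intro z h0 h1 h
      rw [Hap, iter_apply] at h
      exact hno q hq p z h0 h1 (by linear_combination h)
    have tg : (g ^ q).translationNumber = q * g.translationNumber :=
      CircleDeg1Lift.translationNumber_pow _ _
    have tf : (f ^ q).translationNumber = q * f.translationNumber :=
      CircleDeg1Lift.translationNumber_pow _ _
    rcases hor with ⟨h1, h2⟩ | ⟨h1, h2⟩
    · rw [← tg] at h1
      rw [← tf] at h2
      obtain ⟨z, h0, h1, hz⟩ := hH.fixed_point (by
        intro x
        have := (g ^ q).map_lt_of_translationNumber_lt_int h1 x
        rw [Hlow]; simp only [← Complex.ofReal_sub, Complex.ofReal_re]; linarith) (by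
        intro x
        have := (f ^ q).lt_map_of_int_lt_translationNumber h2 x
        rw [Hhigh, add_sub_add_right_eq_sub, ← Complex.ofReal_sub, Complex.ofReal_re]
        linarith)
      exact nofix z h0 h1 hz
    · rw [← tf] at h1
      rw [← tg] at h2
      have hS := hH.symm
      obtain ⟨z, h0, h1, hz⟩ := hS.fixed_point (by
        intro x
        have him : (H.symm x).im = 0 := by rw [hS.low_im _ (by simp)]; simp
        set y := (H.symm x).re with hy
        have e1 : H.symm x = y := by apply Complex.ext <;> simp [him, hy]
        have e2 : (x : ℂ) = H y := by rw [← e1]; simp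
        rw [Hlow] at e2
        have e3 : x = (g ^ q) y - p := by exact_mod_cast e2
        have := (g ^ q).lt_map_of_int_lt_translationNumber h2 y
        rw [e1, ← Complex.ofReal_sub, Complex.ofReal_re]
        linarith) (by
        intro x
        have him : (H.symm (x + I)).im = 1 := by rw [hS.high_im _ (by simp)]; simp
        set y := (H.symm (x + I)).re with hy
        have e1 : H.symm (x + I) = y + I := by apply Complex.ext <;> simp [him, hy]
        have e2 : (x + I : ℂ) = H (y + I) := by rw [← e1]; simp
        rw [Hhigh] at e2
        have e3 : x = (f ^ q) y - p := by exact_mod_cast (add_right_cancel e2)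
        have := (f ^ q).map_lt_of_translationNumber_lt_int h1 y
        rw [e1, add_sub_add_right_eq_sub, ← Complex.ofReal_sub, Complex.ofReal_re]
        linarith)
      refine nofix z h0 h1 ?_
      conv_lhs => rw [← hz]
      simp
  have rat : ∀ a b : ℝ, a < b → ∃ q : ℕ, 1 ≤ q ∧ ∃ p : ℤ, q * a < p ∧ p < q * b := by
    intro a b hab
    obtain ⟨r, h1, h2⟩ := exists_rat_btwn hab
    have hd : (0 : ℝ) < r.den := by exact_mod_cast r.den_pos
    have hr : (r : ℝ) = r.num / r.den := by exact_mod_cast (Rat.num_div_den r).symm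
    rw [hr] at h1 h2
    refine ⟨r.den, r.den_pos, r.num, ?_, ?_⟩
    · rw [lt_div_iff₀ hd] at h1; linarith
    · rw [div_lt_iff₀ hd] at h2; linarith
  rcases lt_or_gt_of_ne hne with h | h
  · obtain ⟨q, hq, p, h1, h2⟩ := rat _ _ h
    exact main q hq p (Or.inl ⟨h1, h2⟩)
  · obtain ⟨q, hq, p, h1, h2⟩ := rat _ _ h
    exact main q hq p (Or.inr ⟨h1, h2⟩)

/-- injective continuous degree one maps as `CircleDeg1Lift` -/
lemma exists_lift {f : ℝ → ℝ} (hc : Continuous f) (hi : Function.Injective f)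
    (h1 : ∀ x, f (x + 1) = f x + 1) : ∃ g : CircleDeg1Lift, ∀ x, g x = f x := by
  have hmono : Monotone f := by
    rcases hc.strictMono_of_inj hi with h | h
    · exact h.monotone
    · exfalso
      have a : f (0 + 1) < f 0 := h (by norm_num)
      rw [h1] at a; linarith
  exact ⟨⟨⟨f, hmono⟩, h1⟩, fun x => rfl⟩

lemma transl_eq {f : CircleDeg1Lift} {α : ℝ} (x : ℝ)
    (h : Tendsto (fun n : ℕ => (f^[n] x - x) / n) atTop (nhds α)) : f.translationNumber = α := by
  have := f.tendsto_translationNumber x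
  simp only [CircleDeg1Lift.coe_pow] at this
  exact tendsto_nhds_unique this h

/-- Main dynamical result: there is a lift of the projectivised derivative with translation number
`α`, and `α` is irrational in the relevant sense. -/
lemma main_dyn {φ : ℂ → ℂ} {φ' : ℂ → ℂ →L[ℝ] ℂ} {f : ℝ → ℝ} {α : ℝ}
    (hc : ContinuousOn φ Disk)
    (hm : MapsTo φ Disk Disk) (hi : InjOn φ Disk) (hs : SurjOn φ Disk Disk)
    (h0 : φ 0 = 0) (hφ : ∀ z ∈ Disk, HasFDerivWithinAt φ (φ' z) Disk z)
    (hdet : ∀ z ∈ Disk, (φ' z).det = 1) (hAi : ∀ v, φ' 0 v = 0 → v = 0)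
    (hper : ∀ z ∈ Disk, z ≠ 0 → ∀ n : ℕ, 1 ≤ n → φ^[n] z ≠ z)
    (fc : Continuous f) (f1 : ∀ x, f (x + 1) = f x + 1) (fp : ∀ x, φ (e x) = e (f x))
    (hα : ∀ x : ℝ, Tendsto (fun n : ℕ => (f^[n] x - x) / n) atTop (nhds α)) :
    ∃ g : CircleDeg1Lift, Continuous g ∧ (∀ x : ℝ, φ' 0 (e x) = ‖φ' 0 (e x)‖ * e (g x)) ∧
      g.translationNumber = α ∧ (∀ q : ℕ, 1 ≤ q → ∀ p : ℤ, q * α ≠ p) := by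
  have hA : HasFDerivAt φ (φ' 0) 0 := by
    refine (hφ 0 (by simp [Disk])).hasFDerivAt ?_
    exact closedBall_mem_nhds 0 one_pos
  obtain ⟨F, per, low, low_im, high, high_im, mid, Ff, rel, Alow⟩ :=
    construct hc hm hi hs h0 hA hAi fc f1 fp
  have hF : StripMap F := ⟨per, low, low_im, high, high_im, mid,
    area_lemma hφ hdet hi per mid rel⟩
  have finj : Function.Injective f := by
    intro x y h
    have : F (x + I) = F (y + I) := by rw [Ff, Ff, h]
    have := F.injective this
    exact_mod_cast add_right_cancel this
  have Fre : ∀ x : ℝ, F x = ((F x).re : ℝ) := by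
    intro x
    apply Complex.ext
    · simp
    · rw [low_im _ (by simp)]; simp
  obtain ⟨f', hf'⟩ := exists_lift fc finj f1
  have Fc := F.continuous
  have gc : Continuous fun x : ℝ => (F x).re := by fun_prop
  obtain ⟨g, hg⟩ := exists_lift gc (by
      intro x y h
      have h2 : F x = F y := by rw [Fre x, Fre y]; exact_mod_cast h
      exact_mod_cast F.injective h2) (by
      intro x; push_cast; rw [per]; simp)
  have hf'' : ⇑f' = f := funext hf'
  have tf : f'.translationNumber = α := transl_eq 0 (by rw [hf'']; exact hα 0)
  have conj : ∀ n : ℕ, ∀ z : ℂ, 0 < z.im → z.im ≤ 1 → φ^[n] (E z) = E (F^[n] z) ∧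
      0 < (F^[n] z).im ∧ (F^[n] z).im ≤ 1 := by
    intro n z hz hz1
    induction n with
    | zero => exact ⟨rfl, hz, hz1⟩
    | succ n ih =>
      obtain ⟨a, b, c⟩ := ih
      rw [Function.iterate_succ_apply', Function.iterate_succ_apply', a, rel _ b c]
      refine ⟨rfl, ?_⟩
      rcases lt_or_eq_of_le c with h | h
      · exact ⟨(mid _ b h).1, (mid _ b h).2.le⟩
      · rw [high_im _ h.ge, h]; norm_num
  have hno : ∀ q : ℕ, 1 ≤ q → ∀ p : ℤ, ∀ z : ℂ, 0 < z.im → z.im ≤ 1 → F^[q] z ≠ z + p := by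
    intro q hq p z hz hz1 h
    have := (conj q z hz hz1).1
    rw [h, E_add_int] at this
    exact hper _ (E_mem hz1) (E_ne hz) q hq this
  refine ⟨g, by rw [funext hg]; exact gc, ?_, ?_, ?_⟩
  · intro x; rw [hg]; exact Alow x
  · rw [← tf]
    exact rot_aux hF (fun x => by rw [hg]; exact Fre x) (fun x => by rw [hf']; exact Ff x)
      (fun q hq p z hz hz1 => hno q hq p z hz hz1.le)
  · intro q hq p h
    have h2 : (f' ^ q).translationNumber = p := by
      rw [CircleDeg1Lift.translationNumber_pow, tf]; exact h
    have hcq : Continuous (f' ^ q) := by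
      rw [CircleDeg1Lift.coe_pow, hf'']
      exact fc.iterate q
    obtain ⟨x, hx⟩ := ((f' ^ q).translationNumber_eq_int_iff hcq).mp h2
    have := iter_high (F := F) (f := f') (fun x => by rw [hf']; exact Ff x) q x
    rw [hx, iter_apply] at this
    refine hno q hq p (x + I) (by simp) (by simp) ?_
    rw [this]; push_cast; ring

end PR

namespace PR

lemma T_apply (T : ℂ →L[ℝ] ℂ) (v : ℂ) : T v = v.re * T 1 + v.im * T I := by
  conv_lhs => rw [← Complex.re_add_im v]
  have h1 : (v.re : ℂ) = v.re • (1 : ℂ) := by simp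
  have h2 : (v.im : ℂ) * I = v.im • I := by simp
  rw [h2, h1, map_add, map_smul, map_smul]
  simp

lemma T_det (T : ℂ →L[ℝ] ℂ) : T.det = (T 1).re * (T I).im - (T I).re * (T 1).im := by
  rw [ContinuousLinearMap.det, ← LinearMap.det_toMatrix Complex.basisOneI, Matrix.det_fin_two]
  simp [LinearMap.toMatrix_apply]

lemma T_CH (T : ℂ →L[ℝ] ℂ) (hd : T.det = 1) (v : ℂ) :
    T (T v) = (((T 1).re + (T I).im : ℝ) : ℂ) * T v - v := by
  rw [T_det] at hd
  rw [T_apply T (T v), T_apply T v]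
  apply Complex.ext
  · simp
    linear_combination (-v.re) * hd
  · simp
    linear_combination (-v.im) * hd

lemma T_inj (T : ℂ →L[ℝ] ℂ) (hd : T.det = 1) (v : ℂ) (h : T v = 0) : v = 0 := by
  have := T_CH T hd v
  rw [h] at this
  simpa using this.symm

lemma real_mul_map (T : ℂ →L[ℝ] ℂ) (r : ℝ) (v : ℂ) : T (r * v) = r * T v := by
  have := T.map_smul r v
  simpa using this

/-- hyperbolic/parabolic case is impossible -/
lemma trace_lt {T : ℂ →L[ℝ] ℂ} (hd : T.det = 1) {g : CircleDeg1Lift} {α : ℝ}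
    (hg : ∀ x : ℝ, T (e x) = ‖T (e x)‖ * e (g x)) (hα : g.translationNumber = α)
    (hirr : ∀ q : ℕ, 1 ≤ q → ∀ p : ℤ, q * α ≠ p) : ((T 1).re + (T I).im) ^ 2 < 4 := by
  by_contra! hcon
  set t := (T 1).re + (T I).im with ht
  -- eigenvalues
  obtain ⟨l, m, hlm, hlm1⟩ : ∃ l m : ℝ, l + m = t ∧ l * m = 1 := by
    have hs := Real.sq_sqrt (show 0 ≤ t ^ 2 - 4 by linarith)
    refine ⟨(t + Real.sqrt (t ^ 2 - 4)) / 2, (t - Real.sqrt (t ^ 2 - 4)) / 2, by ring, ?_⟩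
    linear_combination (-1/4 : ℝ) * hs
  have hev : ∃ (s : ℝ) (v : ℂ), s ≠ 0 ∧ v ≠ 0 ∧ T v = s * v := by
    by_cases hw : T 1 - m * 1 = 0
    · refine ⟨m, 1, right_ne_zero_of_mul (hlm1 ▸ one_ne_zero), one_ne_zero, sub_eq_zero.mp hw⟩
    · refine ⟨l, T 1 - m * 1, left_ne_zero_of_mul (hlm1 ▸ one_ne_zero), hw, ?_⟩
      rw [map_sub, real_mul_map, T_CH T hd, ← ht, ← hlm]
      have : (l : ℂ) * m = 1 := by exact_mod_cast hlm1
      push_cast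
      linear_combination this
  obtain ⟨s, v, hs, hv, hTv⟩ := hev
  obtain ⟨x, hx⟩ := exists_e v
  have hvn : (‖v‖ : ℂ) ≠ 0 := by simpa using hv
  have hTe : T (e x) = s * e x := by
    rw [hx, real_mul_map] at hTv
    apply mul_left_cancel₀ hvn
    rw [hTv]; ring
  have step : ∀ y, T (e y) = s * e y → e (g y) = (s / |s| : ℝ) * e y := by
    intro y hy
    have h1 := hg y
    have hn : ‖T (e y)‖ = |s| := by rw [hy]; simp [e_norm]
    rw [hn, hy] at h1
    have : ((|s| : ℝ) : ℂ) ≠ 0 := by exact_mod_cast (abs_pos.mpr hs).ne'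
    apply mul_left_cancel₀ this
    rw [← h1]; push_cast; field_simp
  have h1 := step x hTe
  have h2 : T (e (g x)) = s * e (g x) := by
    rw [h1, real_mul_map, hTe]; ring
  have h3 := step _ h2
  rw [h1] at h3
  have hss : (s / |s|) * (s / |s|) = 1 := by
    have := (abs_pos.mpr hs).ne'
    field_simp
    rw [sq_abs]
  have h4 : e (g (g x)) = e x := by
    rw [h3, ← mul_assoc]
    have : ((s / |s| : ℝ) : ℂ) * (s / |s| : ℝ) = 1 := by exact_mod_cast hss
    rw [this, one_mul]
  obtain ⟨n, hn⟩ := e_eq h4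
  have h5 : (g ^ 2).translationNumber = n := by
    apply CircleDeg1Lift.translationNumber_of_eq_add_int (x := x)
    rw [CircleDeg1Lift.coe_pow]
    exact hn
  rw [CircleDeg1Lift.translationNumber_pow, hα] at h5
  exact hirr 2 (by norm_num) n h5

lemma e_half : e (1 / 2) = -1 := by
  unfold e
  rw [show (2 * Real.pi * ((1 / 2 : ℝ) : ℂ) * I) = Real.pi * I by push_cast; ring, Complex.exp_pi_mul_I]

lemma cos_eq_of {α ω : ℝ} (h : α = ω ∨ α = -ω) :
    Real.cos (2 * Real.pi * α) = Real.cos (2 * Real.pi * ω) := by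
  rcases h with rfl | rfl
  · rfl
  · rw [show 2 * Real.pi * -ω = -(2 * Real.pi * ω) by ring, Real.cos_neg]

lemma transl_of_semi {k : ℝ → ℝ} {g : CircleDeg1Lift} {ω : ℝ} (kc : Continuous k)
    (ki : Function.Injective k) (k1 : ∀ x, k (x + 1) = k x + 1)
    (hk : ∀ x, k (g x) = k x + ω) : g.translationNumber = ω := by
  obtain ⟨K, hK⟩ := exists_lift kc ki k1
  have h := CircleDeg1Lift.translationNumber_eq_of_semiconj (f := K) (g₁ := g)
    (g₂ := (CircleDeg1Lift.translate (Multiplicative.ofAdd ω) : CircleDeg1Lift)) (by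
      intro x
      rw [CircleDeg1Lift.translate_apply, hK, hK, hk]; ring)
  rw [h, CircleDeg1Lift.translationNumber_translate]

lemma trace_eq {T : ℂ →L[ℝ] ℂ} (hd : T.det = 1) {g : CircleDeg1Lift} {α : ℝ}
    (gc : Continuous g)
    (hg : ∀ x : ℝ, T (e x) = ‖T (e x)‖ * e (g x)) (hα : g.translationNumber = α)
    (hirr : ∀ q : ℕ, 1 ≤ q → ∀ p : ℤ, q * α ≠ p) :
    (T 1).re + (T I).im = 2 * Real.cos (2 * Real.pi * α) := by
  have htr := trace_lt hd hg hα hirr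
  have hCH := T_CH T hd
  set t := (T 1).re + (T I).im with ht
  set θ := Real.arccos (t / 2) with hθ
  have hcos : Real.cos θ = t / 2 := by
    apply Real.cos_arccos <;> nlinarith
  have hsin : Real.sin θ ≠ 0 := by
    intro h
    have := Real.sin_sq_add_cos_sq θ
    rw [h, hcos] at this
    nlinarith
  set u : ℂ := ⟨Real.cos θ, Real.sin θ⟩ with hu
  set u' : ℂ := ⟨Real.cos θ, -Real.sin θ⟩ with hu'
  have huu : u * u' = 1 := by
    have := Real.sin_sq_add_cos_sq θ
    apply Complex.ext
    · simp [hu, hu']; linear_combination this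
    · simp [hu, hu']; ring
  have hut : (t : ℂ) = u + u' := by
    apply Complex.ext
    · simp [hu, hu', hcos]
    · simp [hu, hu']
  have hue : u = e (θ / (2 * Real.pi)) := by
    have hpi : (Real.pi : ℂ) ≠ 0 := by exact_mod_cast Real.pi_ne_zero
    unfold e
    rw [show (2 * Real.pi * ((θ / (2 * Real.pi) : ℝ) : ℂ) * I) = θ * I by push_cast; field_simp]
    rw [Complex.exp_mul_I, ← Complex.ofReal_cos, ← Complex.ofReal_sin]
    exact Complex.mk_eq_add_mul_I _ _
  set P : ℂ → ℂ := fun v => ((T v).re : ℂ) - u' * v.re with hP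
  have Pc : Continuous P := by
    have := T.continuous
    fun_prop
  have PT : ∀ v, P (T v) = u * P v := by
    intro v
    have h1 : (((T (T v)).re : ℝ) : ℂ) = (t : ℂ) * (T v).re - v.re := by
      rw [hCH v]; simp
    simp only [hP]
    rw [h1, hut]
    linear_combination (v.re : ℂ) * huu
  have Psmul : ∀ (r : ℝ) v, P (r * v) = r * P v := by
    intro r v
    simp only [hP, real_mul_map]
    simp; ring
  have Psub : ∀ v w, P (v - w) = P v - P w := by
    intro v w
    simp only [hP, map_sub]
    simp; ring
  have P0 : ∀ v, P v = 0 → v = 0 := by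
    intro v hv
    have him := congrArg Complex.im hv
    have hre := congrArg Complex.re hv
    simp [hP, hu'] at him hre
    have hv1 : v.re = 0 := him.resolve_left hsin
    rw [hv1] at hre
    rw [T_apply T v, hv1] at hre
    simp at hre
    rcases hre with h | h
    · exact Complex.ext hv1 h
    · exfalso
      rw [T_det, h] at hd
      nlinarith [sq_nonneg ((T 1).re - (T I).im)]
  have Pe0 : ∀ x, P (e x) ≠ 0 := fun x h => e_ne x (P0 _ h)
  have Pen : ∀ x, 0 < ‖P (e x)‖ := fun x => norm_pos_iff.mpr (Pe0 x)
  obtain ⟨k, kc, hk⟩ := exists_angle (T := ℝ) (fun V h1 h2 => exists_log h1 h2)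
    (V := fun x => P (e x)) (Pc.comp e_cont) Pe0
  have kinj : ∀ x y : ℝ, ∀ n : ℤ, k x = k y + n → ∃ m : ℤ, x = y + m := by
    intro x y n h
    have a := hk x
    have b := hk y
    have c : e (k x) = e (k y) := by rw [h, e_add, e_int, mul_one]
    rw [c] at a
    have d : P (‖P (e y)‖ * e x - ‖P (e x)‖ * e y) = 0 := by
      rw [Psub, Psmul, Psmul]
      linear_combination (‖P (e y)‖ : ℂ) * a - (‖P (e x)‖ : ℂ) * b
    have h6 := sub_eq_zero.mp (P0 _ d)
    refine angle_unique (mul_ne_zero ?_ (e_ne x)) (Pen y) (Pen x) rfl h6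
    exact_mod_cast (Pen y).ne'
  have half : ∀ x, ∃ n : ℤ, k (x + 1 / 2) - k x - 1 / 2 = n := by
    intro x
    have a := hk (x + 1 / 2)
    have b := hk x
    have h1 : P (e (x + 1 / 2)) = - P (e x) := by
      rw [e_add, e_half]
      have := Psmul (-1) (e x)
      push_cast at this
      rw [mul_comm, this]; ring
    rw [h1, norm_neg] at a
    have a' : P (e x) = ‖P (e x)‖ * e (k (x + 1 / 2) + 1 / 2) := by
      rw [e_add, e_half]; linear_combination -a
    obtain ⟨n, hn⟩ := angle_unique (Pe0 x) (Pen x) (Pen x) a' b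
    refine ⟨n - 1, ?_⟩
    push_cast; linarith
  obtain ⟨n, hn⟩ := half 0
  have half' : ∀ x, k (x + 1 / 2) = k x + 1 / 2 + n := by
    intro x
    have := int_const (g := fun x => k (x + 1 / 2) - k x - 1 / 2) (by fun_prop) half x 0
    rw [hn] at this
    linarith
  set d : ℤ := 1 + 2 * n with hdd
  have k1 : ∀ x, k (x + 1) = k x + d := by
    intro x
    have h1 := half' (x + 1 / 2)
    rw [show x + 1 / 2 + 1 / 2 = x + 1 by ring, half'] at h1
    rw [h1, hdd]; push_cast; ring
  have d0 : d ≠ 0 := by omega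
  have kn : ∀ m : ℤ, ∀ x, k (x + m) = k x + m * d := by
    intro m
    induction m using Int.induction_on with
    | zero => simp
    | succ j ih =>
      intro x
      push_cast at *
      rw [← add_assoc, k1, ih]; ring
    | pred j ih =>
      intro x
      have := k1 (x + ((-(j:ℤ) - 1 : ℤ) : ℝ))
      push_cast at *
      rw [show x + (-(j:ℝ) - 1) + 1 = x + -j by ring, ih] at this
      linarith
  have kinj' : Function.Injective k := by
    intro x y h
    obtain ⟨m, hm⟩ := kinj x y 0 (by simpa using h)
    rw [hm, kn] at h
    have h2 : (m : ℝ) * d = 0 := by linarith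
    have h3 : m * d = 0 := by exact_mod_cast h2
    have h4 : m = 0 := (mul_eq_zero.mp h3).resolve_right d0
    rw [hm, h4]; simp
  have noint : ∀ x ∈ Set.Ioo (0:ℝ) 1, ∀ m : ℤ, k x ≠ k 0 + m := by
    intro x hx m h
    obtain ⟨j, hj⟩ := kinj x 0 m h
    rw [zero_add] at hj
    have a : (0 : ℝ) < j := by rw [← hj]; exact hx.1
    have b : (j : ℝ) < 1 := by rw [← hj]; exact hx.2
    have a' : 0 < j := by exact_mod_cast a
    have b' : j < 1 := by exact_mod_cast b
    omega
  have k01 : k 1 = k 0 + d := by simpa using k1 0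
  have hd1 : d = 1 ∨ d = -1 := by
    rcases lt_trichotomy d 0 with h | h | h
    · right
      by_contra hne
      have h2 : d < -1 := by omega
      have h2' : (d : ℝ) < -1 := by exact_mod_cast h2
      obtain ⟨x, hx, hxk⟩ := intermediate_value_Ioo' zero_le_one kc.continuousOn
        (show k 0 + ((-1 : ℤ) : ℝ) ∈ Set.Ioo (k 1) (k 0) by
          rw [k01]; constructor <;> push_cast <;> linarith)
      exact noint x hx _ hxk
    · exact absurd h d0
    · left
      by_contra hne
      have h2 : 1 < d := by omega
      have h2' : (1 : ℝ) < d := by exact_mod_cast h2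
      obtain ⟨x, hx, hxk⟩ := intermediate_value_Ioo zero_le_one kc.continuousOn
        (show k 0 + ((1 : ℤ) : ℝ) ∈ Set.Ioo (k 0) (k 1) by
          rw [k01]; constructor <;> push_cast <;> linarith)
      exact noint x hx _ hxk
  have rec' : ∀ x, ∃ m : ℤ, k (g x) - k x - θ / (2 * Real.pi) = m := by
    intro x
    have h1 := PT (e x)
    have hr : 0 < ‖T (e x)‖ := norm_pos_iff.mpr fun h => e_ne x (T_inj T hd _ h)
    rw [hg x, Psmul, hk (g x), hk x, hue] at h1
    have h2 : u * P (e x) ≠ 0 := by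
      rw [hue]; exact mul_ne_zero (e_ne _) (Pe0 x)
    obtain ⟨m, hm⟩ := angle_unique (V := u * P (e x)) (r := ‖T (e x)‖ * ‖P (e (g x))‖)
      (s := ‖P (e x)‖) (a := k (g x)) (b := θ / (2 * Real.pi) + k x) h2
      (mul_pos hr (Pen _)) (Pen _) (by
        rw [hue, hk x, ← h1]; push_cast; ring) (by
        rw [hue, hk x, e_add]
        simp [e_norm]; ring)
    exact ⟨m, by linarith⟩
  obtain ⟨m, hm⟩ := rec' 0
  have recc : ∀ x, k (g x) = k x + (θ / (2 * Real.pi) + m) := by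
    intro x
    have := int_const (g := fun x => k (g x) - k x - θ / (2 * Real.pi)) (by fun_prop) rec' x 0
    rw [hm] at this
    linarith
  have hfin : α = θ / (2 * Real.pi) + m ∨ α = -(θ / (2 * Real.pi) + m) := by
    rcases hd1 with h | h
    · left
      rw [← hα]
      exact transl_of_semi kc kinj' (fun x => by rw [k1, h]; simp) recc
    · right
      rw [← hα]
      refine transl_of_semi (k := fun x => - k x) kc.neg (fun x y hxy => kinj' (neg_inj.mp hxy)) ?_ ?_
      · intro x; rw [k1, h]; push_cast; ring
      · intro x; rw [recc]; ring
  rw [cos_eq_of hfin]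
  have : 2 * Real.pi * (θ / (2 * Real.pi) + m) = θ + m * (2 * Real.pi) := by
    have := Real.pi_ne_zero
    field_simp
  rw [this, Real.cos_add_int_mul_two_pi, hcos]
  ring

end PR
/-- **The eigenvalues of the linearization of an irrational pseudo-rotation at its
fixed point are `e^{±2πiα}`, where `α` is the translation number of (any lift of)
the boundary restriction.** -/
theorem eigenvalues_of_pseudorotation (φ : SmoothDiskDiffeo)
    (harea : ∀ z ∈ Disk, (fderivWithin ℝ φ.toFun Disk z).det = 1)
    (hfix : φ.toFun 0 = 0)
    (hper : ∀ z ∈ Disk, z ≠ 0 → ∀ n : ℕ, 1 ≤ n → φ.toFun^[n] z ≠ z)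
    (f : ℝ → ℝ) (α : ℝ)
    (hf_cont : Continuous f)
    (hf_lift : ∀ x : ℝ, f (x + 1) = f x + 1)
    (hf_proj : ∀ x : ℝ,
      φ.toFun (Complex.exp ((2 * Real.pi * x) * Complex.I)) =
        Complex.exp ((2 * Real.pi * f x) * Complex.I))
    (hα : ∀ x : ℝ, Tendsto (fun n : ℕ => (f^[n] x - x) / n) atTop (nhds α)) :
    {μ : ℂ | ((derivMatrix φ).map (algebraMap ℝ ℂ)).charpoly.IsRoot μ} =
      {Complex.exp ((2 * Real.pi * α) * Complex.I),
       Complex.exp (-((2 * Real.pi * α)) * Complex.I)} := by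
  have h0D : (0 : ℂ) ∈ Disk := by simp [Disk]
  have hd := harea 0 h0D
  obtain ⟨g, gc, hg, hτ, hirr⟩ := PR.main_dyn (φ := φ.toFun)
    (φ' := fun z => fderivWithin ℝ φ.toFun Disk z) (f := f) (α := α)
    φ.smooth.continuousOn φ.mapsTo
    (fun z hz w hw h => by rw [← φ.left_inv z hz, ← φ.left_inv w hw, h])
    (fun z hz => ⟨φ.invFun z, φ.mapsTo_inv hz, φ.right_inv z hz⟩)
    hfix
    (fun z hz => ((φ.smooth.differentiableOn (by simp)) z hz).hasFDerivWithinAt)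
    harea (PR.T_inj _ hd) hper hf_cont hf_lift hf_proj hα
  have htr := PR.trace_eq hd gc hg hτ hirr
  set T := fderivWithin ℝ φ.toFun Disk 0 with hT
  have hdet2 := PR.T_det T
  rw [hd] at hdet2
  have hM : ((derivMatrix φ).map (algebraMap ℝ ℂ)).trace = ((2 * Real.cos (2 * Real.pi * α) : ℝ) : ℂ) := by
    rw [← htr, Matrix.trace_fin_two]
    simp [derivMatrix, LinearMap.toMatrix_apply, hT]
  have hD : ((derivMatrix φ).map (algebraMap ℝ ℂ)).det = 1 := by
    rw [Matrix.det_fin_two]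
    have : ((1 : ℝ) : ℂ) = (((T 1).re * (T I).im - (T I).re * (T 1).im : ℝ) : ℂ) := by
      exact_mod_cast hdet2
    push_cast at this
    simp only [derivMatrix, LinearMap.toMatrix_apply, Matrix.map_apply, ← hT]
    simp
    exact this.symm
  have hsum : ((2 * Real.cos (2 * Real.pi * α) : ℝ) : ℂ) =
      Complex.exp ((2 * Real.pi * α) * I) + Complex.exp (-(2 * Real.pi * α) * I) := by
    push_cast
    rw [Complex.cos]; ring
  have hprod : Complex.exp ((2 * Real.pi * α) * I) * Complex.exp (-(2 * Real.pi * α) * I) = 1 := by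
    rw [← Complex.exp_add]; simp
  ext μ
  simp only [Set.mem_ofPred_eq, Set.mem_insert_iff, Set.mem_singleton_iff]
  rw [Matrix.charpoly_fin_two, hM, hD, hsum]
  set a := Complex.exp ((2 * Real.pi * α) * I)
  set b := Complex.exp (-(2 * Real.pi * α) * I)
  rw [Polynomial.IsRoot.def]
  simp only [eval_add, eval_sub, eval_pow, eval_X, eval_mul, eval_C]
  rw [show μ ^ 2 - (a + b) * μ + 1 = (μ - a) * (μ - b) by linear_combination -hprod,
    mul_eq_zero, sub_eq_zero, sub_eq_zero]
end
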